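/- arXiv:2102.11496 — 5 statements merged into one kernel-verified Lean document; each statement's English description precedes it below -/
import Mathlib

section
/- For every 0 < δ ≤ 1 there exists a constant C = C(δ) > 0 such that the following holds: for every 0 < ε ≤ 1, every n, every admissible tuple (a,b,c), and every A ⊆ F_q^n, if A' ⊆ A satisfies |A'| ≥ δ|A| and every x ∈ A' has at most |A|^ε pairs (y,z) ∈ A^2 with ax+by+cz = 0, then there exists a subset I ⊆ A' that is a cap set for (a,b,c) with |I| ≥ C·|A'|^{1−ε/3}. -/
section CapHelpers
open scoped Classical in
/-- Deletion argument for a random family of sets. -/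
lemma cs_L0 {V Ω : Type*} [Fintype Ω] [Nonempty Ω] (A : Finset V) (T : Finset (V × V × V))
    (S : Ω → V → Prop) (a b : ℝ)
    (h1 : ∀ x ∈ A, a * (Fintype.card Ω : ℝ) ≤ ((Finset.univ.filter fun ω => S ω x).card : ℝ))
    (h2 : ∀ t ∈ T, ((Finset.univ.filter fun ω => S ω t.1 ∧ S ω t.2.1 ∧ S ω t.2.2).card : ℝ)
      ≤ b * (Fintype.card Ω : ℝ)) :
    ∃ I : Finset V, I ⊆ A ∧ (∀ t ∈ T, ¬ (t.1 ∈ I ∧ t.2.1 ∈ I ∧ t.2.2 ∈ I)) ∧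
      a * (A.card : ℝ) - b * (T.card : ℝ) ≤ (I.card : ℝ) := by
  have key : ∃ ω : Ω, a * (A.card : ℝ) - b * (T.card : ℝ) ≤
      ((A.filter fun x => S ω x).card : ℝ) -
        ((T.filter fun t => S ω t.1 ∧ S ω t.2.1 ∧ S ω t.2.2).card : ℝ) := by
    by_contra hcon
    push Not at hcon
    have hs := Finset.sum_lt_sum_of_nonempty (s := (Finset.univ : Finset Ω))
      Finset.univ_nonempty (fun ω _ => hcon ω)
    rw [Finset.sum_sub_distrib, Finset.sum_const, nsmul_eq_mul, Finset.card_univ] at hs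
    have e1 : ∑ ω : Ω, ((A.filter fun x => S ω x).card : ℝ) =
        ∑ x ∈ A, ((Finset.univ.filter fun ω => S ω x).card : ℝ) := by
      simp only [Finset.card_filter, Nat.cast_sum]
      rw [Finset.sum_comm]
    have e2 : ∑ ω : Ω, ((T.filter fun t => S ω t.1 ∧ S ω t.2.1 ∧ S ω t.2.2).card : ℝ) =
        ∑ t ∈ T, ((Finset.univ.filter fun ω => S ω t.1 ∧ S ω t.2.1 ∧ S ω t.2.2).card : ℝ) := by
      simp only [Finset.card_filter, Nat.cast_sum]
      rw [Finset.sum_comm]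
    have i1 := Finset.sum_le_sum h1
    have i2 := Finset.sum_le_sum h2
    rw [Finset.sum_const, nsmul_eq_mul] at i1 i2
    rw [e1, e2] at hs
    nlinarith
  obtain ⟨ω, hω⟩ := key
  set B := A.filter fun x => S ω x with hB
  set D := T.filter fun t => S ω t.1 ∧ S ω t.2.1 ∧ S ω t.2.2 with hD
  refine ⟨B \ D.image Prod.fst, ?_, ?_, ?_⟩
  · exact Finset.sdiff_subset.trans (Finset.filter_subset _ _)
  · rintro t ht ⟨h1, h2, h3⟩
    simp only [Finset.mem_sdiff, hB, Finset.mem_filter] at h1 h2 h3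
    apply h1.2
    refine Finset.mem_image.2 ⟨t, ?_, rfl⟩
    simp only [hD, Finset.mem_filter]
    exact ⟨ht, h1.1.2, h2.1.2, h3.1.2⟩
  · have h3 := Finset.le_card_sdiff (D.image Prod.fst) B
    have h4 : (D.image Prod.fst).card ≤ D.card := Finset.card_image_le
    have h5 : B.card ≤ (B \ D.image Prod.fst).card + D.card := by omega
    have h6 : (B.card : ℝ) ≤ ((B \ D.image Prod.fst).card : ℝ) + D.card := by exact_mod_cast h5
    linarith

open scoped Classical in
lemma cs_card_pow {Ω : Type*} [Fintype Ω] (j : ℕ) (q : Ω → Prop)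
    [DecidablePred q] [DecidablePred fun ω : Fin j → Ω => ∀ i, q (ω i)] :
    (Finset.univ.filter fun ω : Fin j → Ω => ∀ i, q (ω i)).card =
      (Finset.univ.filter q).card ^ j := by
  have : (Finset.univ.filter fun ω : Fin j → Ω => ∀ i, q (ω i)) =
      Fintype.piFinset (fun _ : Fin j => Finset.univ.filter q) := by
    ext ω; simp
  rw [this, Fintype.card_piFinset]; simp

open scoped Classical in
lemma cs_L0pow {V Ω : Type*} [Fintype Ω] [Nonempty Ω] (A : Finset V) (T : Finset (V × V × V))
    (S : Ω → V → Prop) (a b : ℝ) (ha : 0 ≤ a) (j : ℕ)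
    (h1 : ∀ x ∈ A, a * (Fintype.card Ω : ℝ) ≤ ((Finset.univ.filter fun ω => S ω x).card : ℝ))
    (h2 : ∀ t ∈ T, ((Finset.univ.filter fun ω => S ω t.1 ∧ S ω t.2.1 ∧ S ω t.2.2).card : ℝ)
      ≤ b * (Fintype.card Ω : ℝ)) :
    ∃ I : Finset V, I ⊆ A ∧ (∀ t ∈ T, ¬ (t.1 ∈ I ∧ t.2.1 ∈ I ∧ t.2.2 ∈ I)) ∧
      a ^ j * (A.card : ℝ) - b ^ j * (T.card : ℝ) ≤ (I.card : ℝ) := by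
  apply cs_L0 (Ω := Fin j → Ω) A T (fun ω x => ∀ i, S (ω i) x)
  · intro x hx
    have e : (Finset.univ.filter fun ω : Fin j → Ω => ∀ i, S (ω i) x).card =
      (Finset.univ.filter fun ω => S ω x).card ^ j := by
      rw [← cs_card_pow j (fun ω => S ω x)]
    have e' := congrArg (Nat.cast (R := ℝ)) e
    refine le_trans ?_ (le_of_eq (Eq.trans e'.symm ?_))
    swap
    · congr!
    simp only [Fintype.card_pi, Finset.prod_const, Finset.card_univ, Fintype.card_fin,
      Nat.cast_pow]
    rw [← mul_pow]
    exact pow_le_pow_left₀ (by positivity) (h1 x hx) _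
  · intro t ht
    have := cs_card_pow j (fun ω => S ω t.1 ∧ S ω t.2.1 ∧ S ω t.2.2)
    simp only [← forall_and]
    rw [this]
    simp only [Fintype.card_pi, Finset.prod_const, Finset.card_univ, Fintype.card_fin,
      Nat.cast_pow]
    rw [← mul_pow]
    exact pow_le_pow_left₀ (by positivity) (h2 t ht) _

open scoped Classical in
/-- Random family of sets for the equation `x + lam y = (1 + lam) z`. -/
def csGadget (F : Type) [Field F] (lam : F) (c : ℝ) : Prop :=
  ∀ n : ℕ, ∃ (Ω : Type) (_ : Fintype Ω) (_ : Nonempty Ω) (S : Ω → (Fin n → F) → Prop) (μ ρ : ℝ),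
    c ≤ ρ ∧ ρ ≤ 1 / 2 ∧ 0 ≤ μ ∧ ρ ≤ μ ^ 3 ∧
    (∀ x, μ * (Fintype.card Ω : ℝ) ≤ ((Finset.univ.filter fun ω => S ω x).card : ℝ)) ∧
    (∀ x y z, x + lam • y = (1 + lam) • z → y ≠ z →
      ((Finset.univ.filter fun ω => S ω x ∧ S ω y ∧ S ω z).card : ℝ)
        ≤ (μ * ρ) * (Fintype.card Ω : ℝ))

/-- The main reduction: gadgets give large cap subsets. -/
lemma cs_final (c : ℝ) (hc : 0 < c) (F : Type) [Field F] [Fintype F] (δ : ℝ) (hδ : 0 < δ)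
    (hδ1 : δ ≤ 1) (ε : ℝ) (hε : 0 < ε) (hε1 : ε ≤ 1) (n : ℕ) (a b cc : F) (ha : a ≠ 0)
    (hb : b ≠ 0) (hcc : cc ≠ 0) (habc : a + b + cc = 0)
    (hG : csGadget F (b / a) c)
    (A A' : Set (Fin n → F)) (hAA : A' ⊆ A)
    (hd : δ * (A.ncard : ℝ) ≤ (A'.ncard : ℝ))
    (hdeg : ∀ x ∈ A',
            (({p : (Fin n → F) × (Fin n → F) | p.1 ∈ A ∧ p.2 ∈ A ∧
                a • x + b • p.1 + cc • p.2 = 0}).ncard : ℝ) ≤ (A.ncard : ℝ) ^ ε) :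
    ∃ I : Set (Fin n → F), I ⊆ A' ∧
            (∀ x ∈ I, ∀ y ∈ I, ∀ z ∈ I,
              a • x + b • y + cc • z = 0 → x = y ∧ y = z) ∧
            (1 / 2 * (c * δ / 2) ^ (1 / 3 : ℝ)) * (A'.ncard : ℝ) ^ (1 - ε / 3) ≤ (I.ncard : ℝ) := by
  classical
  rcases A'.eq_empty_or_nonempty with he | hne
  · refine ⟨∅, by simp, by simp, ?_⟩
    subst he
    have : (1 - ε / 3) ≠ 0 := by linarith
    simp [Real.zero_rpow this]
  obtain ⟨Ω, _, _, S, μ, ρ, hcρ, hρ2, hμ0, hρμ, hS1, hS2⟩ := hG n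
  have hρ0 : 0 < ρ := hc.trans_le hcρ
  set N : ℝ := (A.ncard : ℝ) with hN
  set M : ℝ := (A'.ncard : ℝ) with hM
  have hM1 : 1 ≤ M := by
    rw [hM]; exact_mod_cast (Set.ncard_pos (Set.toFinite _)).2 hne
  have hMN : M ≤ N := by
    rw [hM, hN]; exact_mod_cast Set.ncard_le_ncard hAA (Set.toFinite _)
  have hd1 : 1 ≤ N ^ ε := Real.one_le_rpow (hM1.trans hMN) hε.le
  set d := N ^ ε with hdd
  -- the nontrivial triples
  set T : Finset ((Fin n → F) × (Fin n → F) × (Fin n → F)) :=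
    Finset.univ.filter (fun t => t.1 ∈ A' ∧ t.2.1 ∈ A' ∧ t.2.2 ∈ A' ∧
      a • t.1 + b • t.2.1 + cc • t.2.2 = 0 ∧ t.2.1 ≠ t.2.2) with hT
  have hTcard : (T.card : ℝ) ≤ M * d := by
    have h1 : T.card ≤ ∑ x ∈ A'.toFinset,
        ({p : (Fin n → F) × (Fin n → F) | p.1 ∈ A ∧ p.2 ∈ A ∧
                a • x + b • p.1 + cc • p.2 = 0}).ncard := by
      rw [Finset.card_eq_sum_card_fiberwise (f := Prod.fst) (t := A'.toFinset)]
      · apply Finset.sum_le_sum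
        intro x hx
        rw [Set.ncard_eq_toFinset_card']
        apply Finset.card_le_card_of_injOn (fun t => t.2)
        · intro t ht
          simp only [hT, Finset.coe_filter, Finset.mem_filter, Finset.mem_univ, true_and,
            Set.mem_ofPred_eq] at ht
          obtain ⟨⟨h1, h2, h3, h4, h5⟩, h6⟩ := ht
          subst h6
          simp only [Finset.mem_coe, Set.mem_toFinset, Set.mem_ofPred_eq]
          exact ⟨hAA h2, hAA h3, h4⟩
        · intro t ht t' ht' h
          simp only [Finset.coe_filter, Set.mem_ofPred_eq] at ht ht'
          exact Prod.ext (ht.2.trans ht'.2.symm) h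
      · intro t ht
        simp only [hT, Finset.coe_filter, Finset.mem_univ, true_and, Set.mem_ofPred_eq] at ht
        simpa using ht.1
    calc (T.card : ℝ) ≤ ((∑ x ∈ A'.toFinset,
        ({p : (Fin n → F) × (Fin n → F) | p.1 ∈ A ∧ p.2 ∈ A ∧
                a • x + b • p.1 + cc • p.2 = 0}).ncard : ℕ) : ℝ) := by exact_mod_cast h1
      _ ≤ ∑ x ∈ A'.toFinset, d := by
          rw [Nat.cast_sum]
          exact Finset.sum_le_sum fun x hx => hdeg x (by simpa using hx)
      _ = M * d := by
          rw [Finset.sum_const, nsmul_eq_mul, hM, Set.ncard_eq_toFinset_card']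
  have hρ1 : ρ < 1 := by linarith
  obtain ⟨j, hj1, hj2⟩ : ∃ j : ℕ, ρ ^ j ≤ 1 / (2 * d) ∧ ρ / (2 * d) ≤ ρ ^ j := by
    have hx : (0:ℝ) < 1 / (2 * d) := by positivity
    have hx1 : 1 / (2 * d) ≤ 1 := by
      rw [div_le_one (by positivity)]; linarith
    obtain ⟨k, hk1, hk2⟩ := exists_nat_pow_near_of_lt_one hx hx1 hρ0 hρ1
    refine ⟨k + 1, hk1.le, ?_⟩
    rw [pow_succ]
    have : ρ / (2 * d) = 1 / (2 * d) * ρ := by ring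
    rw [this]
    exact mul_le_mul_of_nonneg_right hk2 hρ0.le
  obtain ⟨I, hIA, hIT, hIc⟩ := cs_L0pow A'.toFinset T S μ (μ * ρ) hμ0 j
    (fun x _ => hS1 x) (by
      intro t ht
      simp only [hT, Finset.mem_filter, Finset.mem_univ, true_and] at ht
      apply hS2 _ _ _ _ ht.2.2.2.2
      have h := ht.2.2.2.1
      have hc' : cc = -(a + b) := by linear_combination habc
      rw [hc'] at h
      have h2 : a⁻¹ • (a • t.1 + b • t.2.1 + -(a + b) • t.2.2) = 0 := by rw [h, smul_zero]
      funext i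
      have h3 := congrFun h2 i
      simp only [Pi.smul_apply, Pi.add_apply, smul_eq_mul, Pi.zero_apply] at h3 ⊢
      field_simp at h3 ⊢
      linear_combination h3)
  refine ⟨(I : Set (Fin n → F)), ?_, ?_, ?_⟩
  · intro x hx
    have := hIA hx
    simpa using this
  · intro x hx y hy z hz h
    by_cases hyz : y = z
    · refine ⟨?_, hyz⟩
      subst hyz
      have hc' : cc = -(a + b) := by linear_combination habc
      rw [hc'] at h
      funext i
      have h3 := congrFun h i
      simp only [Pi.smul_apply, Pi.add_apply, smul_eq_mul, Pi.zero_apply] at h3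
      apply mul_left_cancel₀ ha
      linear_combination h3
    · exfalso
      have hA' : ∀ u ∈ I, u ∈ A' := fun u hu => by simpa using hIA hu
      apply hIT (x, y, z) _ ⟨hx, hy, hz⟩
      simp only [hT, Finset.mem_filter, Finset.mem_univ, true_and]
      exact ⟨hA' x hx, hA' y hy, hA' z hz, h, hyz⟩
  · rw [Set.ncard_coe_finset]
    refine le_trans ?_ hIc
    have hcardA : ((A'.toFinset.card : ℕ) : ℝ) = M := by
      rw [hM, Set.ncard_eq_toFinset_card']
    rw [hcardA]
    have hμj : 0 ≤ μ ^ j := by positivity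
    have hdρ : d * ρ ^ j ≤ 1 / 2 := by
      calc d * ρ ^ j ≤ d * (1 / (2 * d)) := by gcongr
        _ = 1 / 2 := by field_simp
    have step1 : 1 / 2 * (μ ^ j * M) ≤ μ ^ j * M - (μ * ρ) ^ j * T.card := by
      have : (μ * ρ) ^ j * T.card ≤ (μ * ρ) ^ j * (M * d) := by gcongr
      have h2 : (μ * ρ) ^ j * (M * d) = (μ ^ j * M) * (d * ρ ^ j) := by rw [mul_pow]; ring
      have h3 : (μ ^ j * M) * (d * ρ ^ j) ≤ (μ ^ j * M) * (1 / 2) := by gcongr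
      linarith
    refine le_trans ?_ step1
    have hMp : 0 < M := by linarith
    have hdle : d ≤ M ^ ε * δ⁻¹ := by
      have h1 : N ≤ M / δ := by rw [le_div_iff₀ hδ]; linarith
      calc d ≤ (M / δ) ^ ε := Real.rpow_le_rpow (by linarith) h1 hε.le
        _ = M ^ ε * (δ⁻¹) ^ ε := by rw [div_eq_mul_inv, Real.mul_rpow hMp.le (by positivity)]
        _ ≤ M ^ ε * (δ⁻¹) ^ (1 : ℝ) := by
            gcongr
            exact (one_le_inv₀ hδ).2 hδ1
        _ = _ := by rw [Real.rpow_one]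
    have hcube : c * δ / 2 * M ^ (-ε) ≤ (μ ^ j) ^ 3 := by
      calc c * δ / 2 * M ^ (-ε) = c / (2 * (M ^ ε * δ⁻¹)) := by
            rw [Real.rpow_neg hMp.le]; field_simp
        _ ≤ ρ / (2 * d) := by gcongr
        _ ≤ ρ ^ j := hj2
        _ ≤ (μ ^ 3) ^ j := by gcongr
        _ = _ := by rw [← pow_mul, ← pow_mul, mul_comm]
    have hroot : (c * δ / 2) ^ (1 / 3 : ℝ) * M ^ (-ε / 3) ≤ μ ^ j := by
      have h1 : ((c * δ / 2) * M ^ (-ε)) ^ (1 / 3 : ℝ) ≤ ((μ ^ j) ^ 3) ^ (1 / 3 : ℝ) := by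
        apply Real.rpow_le_rpow (by positivity) hcube (by norm_num)
      rw [Real.mul_rpow (by positivity) (by positivity), ← Real.rpow_mul hMp.le,
        ← Real.rpow_natCast (μ ^ j) 3, ← Real.rpow_mul hμj] at h1
      norm_num at h1
      convert h1 using 2
      congr 1
      ring
    have hsplit : M ^ (1 - ε / 3) = M * M ^ (-ε / 3) := by
      rw [show (1 - ε / 3) = 1 + (-ε / 3) by ring, Real.rpow_add hMp, Real.rpow_one]
    rw [hsplit]
    calc 1 / 2 * (c * δ / 2) ^ (1 / 3 : ℝ) * (M * M ^ (-ε / 3))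
        = 1 / 2 * (((c * δ / 2) ^ (1 / 3 : ℝ) * M ^ (-ε / 3)) * M) := by ring
      _ ≤ _ := by gcongr
end CapHelpers

section CapHash

/-- A system of disjoint cells in `ZMod p` labelled by `ZMod M`. -/
structure csCells (p M H b : ℕ) (K g : ℝ) (cell : ZMod M → Finset (ZMod p)) : Prop where
  card : ∀ c, (cell c).card = b
  forms : ∀ (ι : Type) [Fintype ι] (α : ι → ℤ) (u : ι → ZMod p) (c : ι → ZMod M),
    ∑ r, |α r| ≤ (H : ℤ) → (∀ r, u r ∈ cell (c r)) → ∑ r, (α r : ZMod p) * u r = 0 →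
    ∑ r, (α r : ZMod M) * c r = 0
  diff : ∀ [NeZero p] (c : ZMod M), ∀ u ∈ cell c, ∀ u' ∈ cell c,
    g * (M : ℝ) ^ 2 ≤ ‖∑ j : Fin M, ZMod.stdAddChar ((j : ℕ) * (u - u') : ZMod p)‖ ^ 2
  size : (p : ℝ) ^ 3 ≤ K * g * (M * b : ℝ) ^ 3

/-- No small integer relation between powers of `lam`. -/
def csNR {F : Type} [Field F] (lam : F) (k M : ℕ) : Prop :=
  ∀ a : Fin k → ℤ, (∀ i, |a i| < (M : ℤ)) → ∑ i, (a i : F) * lam ^ (i : ℕ) = 0 → a = 0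

/-- The digit sets separate solutions. -/
def csSep {F : Type} [Field F] (lam : F) (k m M H : ℕ)
    (C : Finset (Fin m → Fin k → ZMod M)) : Prop :=
  ∀ x ∈ C, ∀ y ∈ C, ∀ z ∈ C,
    (∀ α β : Fin k → ℤ, ∑ i, (|α i| + |β i| + |α i + β i|) ≤ (H : ℤ) →
      ∑ i, (β i : F) * lam ^ (i : ℕ) = lam * ∑ i, (α i : F) * lam ^ (i : ℕ) →
      ∀ j, ∑ i, ((α i : ZMod M) * x j i + (β i : ZMod M) * y j i
        - ((α i : ZMod M) + (β i : ZMod M)) * z j i) = 0) → x = y ∧ y = z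

lemma cs_addChar_sum {A R ι : Type*} [AddCommMonoid A] [CommMonoid R] (ψ : AddChar A R)
    (s : Finset ι) (f : ι → A) : ψ (∑ i ∈ s, f i) = ∏ i ∈ s, ψ (f i) := by
  classical
  induction s using Finset.induction_on with
  | empty => simp
  | insert a s ha ih =>
    rw [Finset.sum_insert ha, Finset.prod_insert ha, AddChar.map_add_eq_mul, ih]

lemma cs_arith1 {A D U G P : ℝ} (h : A * G ≤ D) (hG : 0 < G) (hP : 0 < P) (hU : 0 ≤ U) :
    A * U ≤ U / P * G⁻¹ * (D * P) := by
  have e : U / P * G⁻¹ * (D * P) = U * (D / G) := by field_simp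
  rw [e, mul_comm]
  exact mul_le_mul_of_nonneg_left ((le_div_iff₀ hG).2 h) hU

lemma cs_orth {p : ℕ} [Fact p.Prime] {V : Type} [AddCommGroup V] [Module (ZMod p) V]
    [Fintype (Module.Dual (ZMod p) V)] (v : V) (hv : v ≠ 0) :
    ∑ χ : Module.Dual (ZMod p) V, ZMod.stdAddChar (N := p) (χ v) = 0 := by
  obtain ⟨f, hf⟩ : ∃ f : Module.Dual (ZMod p) V, f v ≠ 0 := by
    by_contra hcon
    push Not at hcon
    exact hv ((Module.forall_dual_apply_eq_zero_iff (ZMod p) v).1 hcon)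
  let ev : Module.Dual (ZMod p) V →+ ZMod p :=
    { toFun := fun χ => χ v, map_zero' := rfl, map_add' := fun _ _ => rfl }
  have h := AddChar.sum_eq_zero_iff_ne_zero (ψ := (ZMod.stdAddChar (N := p)).compAddMonoidHom ev)
  refine h.2 fun h0 => hf ?_
  have h1 := DFunLike.congr_fun h0 f
  have h2 : ZMod.stdAddChar (N := p) (f v) = ZMod.stdAddChar (N := p) 0 := by
    rw [AddChar.map_zero_eq_one]; exact h1
  exact ZMod.injective_stdAddChar h2

lemma cs_parseval {p : ℕ} [Fact p.Prime] {V : Type} [AddCommGroup V] [Module (ZMod p) V]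
    [Fintype (Module.Dual (ZMod p) V)] {ι : Type} [Fintype ι] (u : ι → V)
    (hu : Function.Injective u) :
    ∑ χ : Module.Dual (ZMod p) V, ‖∑ j, ZMod.stdAddChar (N := p) (χ (u j))‖ ^ 2 =
      (Fintype.card (Module.Dual (ZMod p) V) : ℝ) * Fintype.card ι := by
  classical
  have h1 : ∀ χ : Module.Dual (ZMod p) V,
      ((‖∑ j, ZMod.stdAddChar (N := p) (χ (u j))‖ ^ 2 : ℝ) : ℂ) =
      ∑ j, ∑ j', ZMod.stdAddChar (N := p) (χ (u j - u j')) := by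
    intro χ
    rw [← Complex.normSq_eq_norm_sq, ← Complex.mul_conj, map_sum, Finset.sum_mul_sum]
    refine Finset.sum_congr rfl fun j _ => Finset.sum_congr rfl fun j' _ => ?_
    rw [← AddChar.map_neg_eq_conj, ← AddChar.map_add_eq_mul, map_sub, sub_eq_add_neg]
  have h2 : ((∑ χ : Module.Dual (ZMod p) V, ‖∑ j, ZMod.stdAddChar (N := p) (χ (u j))‖ ^ 2 : ℝ) : ℂ)
      = ((Fintype.card (Module.Dual (ZMod p) V) : ℝ) * Fintype.card ι : ℝ) := by
    rw [Complex.ofReal_sum]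
    simp only [h1]
    rw [Finset.sum_comm]
    have : ∀ j : ι, ∑ χ : Module.Dual (ZMod p) V, ∑ j', ZMod.stdAddChar (N := p) (χ (u j - u j'))
        = (Fintype.card (Module.Dual (ZMod p) V) : ℂ) := by
      intro j
      rw [Finset.sum_comm, Finset.sum_eq_single j]
      · simp
      · intro j' _ hj
        exact cs_orth _ (sub_ne_zero.2 fun h => hj (hu h).symm)
      · simp
    simp only [this]
    simp [mul_comm]
  exact_mod_cast h2


/-- Probability that all `χ (lam ^ i w)` are in the difference set. -/
lemma cs_hashprob {p : ℕ} [Fact p.Prime] {F : Type} [Field F] [Algebra (ZMod p) F] {n : ℕ}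
    [Fintype (Module.Dual (ZMod p) (Fin n → F))] (lam : F) (k M : ℕ) (hNR : csNR lam k M)
    (g : ℝ) (hg : 0 < g) (w : Fin n → F) (hw : w ≠ 0)
    (P : Module.Dual (ZMod p) (Fin n → F) → Prop) [DecidablePred P]
    (hP : ∀ χ, P χ → ∀ i : Fin k, g * (M : ℝ) ^ 2 ≤
      ‖∑ j : Fin M, ZMod.stdAddChar ((j : ℕ) * χ (lam ^ (i : ℕ) • w) : ZMod p)‖ ^ 2) :
    ((Finset.univ.filter P).card : ℝ) * (g * M ^ 2) ^ k ≤
      (Fintype.card (Module.Dual (ZMod p) (Fin n → F)) : ℝ) * M ^ k := by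
  classical
  let u : (Fin k → Fin M) → (Fin n → F) := fun j => ∑ i, ((j i : ℕ) : F) • lam ^ (i : ℕ) • w
  have hu : Function.Injective u := by
    intro j j' h
    have h1 : (∑ i, (((j i : ℕ) : F) - ((j' i : ℕ) : F)) * lam ^ (i : ℕ)) • w = 0 := by
      rw [Finset.sum_smul]
      simp only [u] at h
      rw [← sub_eq_zero, ← Finset.sum_sub_distrib] at h
      rw [← h]
      refine Finset.sum_congr rfl fun i _ => ?_
      rw [mul_smul, sub_smul]
    have h2 := (smul_eq_zero.1 h1).resolve_right hw
    have h3 := hNR (fun i => ((j i : ℕ) : ℤ) - ((j' i : ℕ) : ℤ)) (by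
      intro i
      have := (j i).2; have := (j' i).2
      rw [abs_lt]; constructor <;> omega) (by push_cast; exact h2)
    funext i
    have h4 := congrFun h3 i
    simp only [Pi.zero_apply] at h4
    apply Fin.ext; omega
  have hpar := cs_parseval (p := p) u hu
  rw [Fintype.card_fun, Fintype.card_fin, Fintype.card_fin] at hpar
  push_cast at hpar
  rw [← hpar]
  have key : ∀ χ ∈ Finset.univ.filter P, (g * (M:ℝ) ^ 2) ^ k ≤
      ‖∑ j, ZMod.stdAddChar (N := p) (χ (u j))‖ ^ 2 := by
    intro χ hχ
    have hχ' := hP χ (Finset.mem_filter.1 hχ).2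
    have e1 : ∑ j, ZMod.stdAddChar (N := p) (χ (u j)) =
        ∏ i : Fin k, ∑ j : Fin M, ZMod.stdAddChar ((j : ℕ) * χ (lam ^ (i : ℕ) • w) : ZMod p) := by
      rw [Finset.prod_univ_sum]
      simp only [Fintype.piFinset_univ]
      refine Finset.sum_congr rfl fun j _ => ?_
      rw [← cs_addChar_sum]
      congr 1
      simp only [u, map_sum]
      refine Finset.sum_congr rfl fun i _ => ?_
      rw [Nat.cast_smul_eq_nsmul, map_nsmul, nsmul_eq_mul]
    rw [e1, norm_prod, ← Finset.prod_pow]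
    have e2 : (g * (M:ℝ) ^ 2) ^ k = ∏ i : Fin k, (g * (M:ℝ) ^ 2) := by simp
    rw [e2]
    exact Finset.prod_le_prod (fun _ _ => by positivity) fun i _ => hχ' i
  have h5 := Finset.card_nsmul_le_sum (Finset.univ.filter P) _ _ key
  rw [nsmul_eq_mul] at h5
  refine h5.trans ?_
  exact Finset.sum_le_sum_of_subset_of_nonneg (Finset.subset_univ _) fun _ _ _ => sq_nonneg _

open scoped Classical in
/-- Lemma G: hash families from digit sets. -/
lemma cs_lemmaG {p : ℕ} [Fact p.Prime] {F : Type} [Field F] [Fintype F] [CharP F p] (lam : F)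
    (k m M H b : ℕ) [NeZero M] (hk : 0 < k) (hm : 0 < m) (hH : 2 ≤ H) (K g : ℝ)
    (hg : 0 < g) (hg1 : g ≤ 1) (hgM : 2 ≤ g * M) (hK : 0 < K)
    (cell : ZMod M → Finset (ZMod p)) (hcell : csCells p M H b K g cell)
    (hNR : csNR lam k M) (C : Finset (Fin m → Fin k → ZMod M)) (hC : csSep lam k m M H C)
    (hsize : K ^ (k * m) * (M : ℝ) ^ (2 * (k * m)) ≤ (C.card : ℝ) ^ 3) :
    csGadget F lam (((M : ℝ) ^ (k * m))⁻¹) := by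
  intro n
  let _ : Algebra (ZMod p) F := ZMod.algebra F p
  have : Finite (Module.Dual (ZMod p) (Fin n → F)) := Finite.of_injective _ DFunLike.coe_injective
  let _ : Fintype (Module.Dual (ZMod p) (Fin n → F)) := Fintype.ofFinite _
  let D := Module.Dual (ZMod p) (Fin n → F)
  have hp : 0 < p := (Fact.out : p.Prime).pos
  have hM : (0:ℝ) < M := by exact_mod_cast Nat.pos_of_ne_zero (NeZero.ne M)
  let U : Finset (Fin m → Fin k → ZMod p) :=
    Finset.univ.filter fun t => ∃ c ∈ C, ∀ j i, t j i ∈ cell (c j i)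
  have hdisj : ∀ c c' : ZMod M, ∀ u, u ∈ cell c → u ∈ cell c' → c = c' := by
    intro c c' u h h'
    have := hcell.forms (Fin 2) ![1, -1] ![u, u] ![c, c'] (by simpa using hH)
      (by intro r; fin_cases r <;> simpa) (by simp)
    simp only [Fin.sum_univ_two] at this
    simp at this
    linear_combination this
  have hU : U.card = C.card * b ^ (k * m) := by
    have e : U = C.biUnion fun c => Fintype.piFinset fun j => Fintype.piFinset fun i => cell (c j i) := by
      ext t
      simp [U]
    rw [e, Finset.card_biUnion]
    · simp [Fintype.card_piFinset, hcell.card, pow_mul]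
    · intro c _ c' _ hne
      rw [Function.onFun, Finset.disjoint_left]
      intro t ht ht'
      simp only [Fintype.mem_piFinset] at ht ht'
      exact hne (funext fun j => funext fun i => hdisj _ _ _ (ht j i) (ht' j i))
  have htrans : ∀ t₀ : Fin m → Fin k → ZMod p,
      (Finset.univ.filter fun s => t₀ + s ∈ U).card = U.card := by
    intro t₀
    refine Finset.card_bij (fun s _ => t₀ + s) ?_ ?_ ?_
    · intro s hs; exact (Finset.mem_filter.1 hs).2
    · intro s _ s' _ h; exact add_left_cancel h
    · intro t ht; exact ⟨t - t₀, by simpa using ht, by abel⟩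
  let τ : (Fin m → D) → (Fin n → F) → (Fin m → Fin k → ZMod p) :=
    fun χ v j i => χ j (lam ^ (i : ℕ) • v)
  have hcardΩ : Fintype.card ((Fin m → D) × (Fin m → Fin k → ZMod p)) =
      Fintype.card D ^ m * p ^ (k * m) := by
    simp [pow_mul]
  have hDpos : 0 < Fintype.card D := Fintype.card_pos
  refine ⟨(Fin m → D) × (Fin m → Fin k → ZMod p), inferInstance, inferInstance,
    fun ω v => τ ω.1 v + ω.2 ∈ U, (U.card : ℝ) / p ^ (k * m), ((g * M) ^ (k * m))⁻¹, ?_, ?_, ?_, ?_,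
    ?_, ?_⟩
  · gcongr
    nlinarith
  · have : (2:ℝ) ≤ (g * M) ^ (k * m) := by
      calc (2:ℝ) ≤ g * M := hgM
        _ ≤ _ := le_self_pow₀ (by linarith) (by positivity)
    rw [one_div]
    exact inv_anti₀ (by norm_num) this
  · positivity
  · rw [hU]
    push_cast
    have hb3 : 1 ≤ (K * g * M ^ 3) * ((b:ℝ) ^ 3 / p ^ 3) := by
      have := hcell.size
      rw [mul_div_assoc', le_div_iff₀ (by positivity)]
      linarith [mul_pow (M:ℝ) b 3]
    have hb3' := one_le_pow₀ hb3 (n := k * m)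
    calc ((g * (M:ℝ)) ^ (k * m))⁻¹
        ≤ ((g * (M:ℝ)) ^ (k * m))⁻¹ * ((K * g * M ^ 3) * ((b:ℝ) ^ 3 / p ^ 3)) ^ (k * m) :=
          le_mul_of_one_le_right (by positivity) hb3'
      _ = (K ^ (k * m) * (M : ℝ) ^ (2 * (k * m))) * ((b:ℝ) ^ 3 / p ^ 3) ^ (k * m) := by
          rw [pow_mul (M:ℝ) 2, ← mul_pow, ← mul_pow, ← inv_pow, ← mul_pow]
          congr 1
          field_simp
      _ ≤ (C.card : ℝ) ^ 3 * ((b:ℝ) ^ 3 / p ^ 3) ^ (k * m) := by gcongr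
      _ = _ := by
          rw [div_pow, div_pow, mul_pow]
          ring
  · intro x
    apply le_of_eq
    have : (Finset.univ.filter fun ω : (Fin m → D) × (Fin m → Fin k → ZMod p) =>
        τ ω.1 x + ω.2 ∈ U).card = Fintype.card D ^ m * U.card := by
      rw [Finset.card_filter, Fintype.sum_prod_type]
      simp only [← Finset.card_filter, htrans]
      simp [D]
    have this' := congrArg (Nat.cast (R := ℝ)) this
    refine Eq.trans ?_ (this'.symm.trans ?_)
    swap
    · congr!
    rw [hcardΩ]
    push_cast
    field_simp
  · intro x y z hxyz hne
    let w := y - z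
    have hw : w ≠ 0 := sub_ne_zero.2 hne
    let P : D → Prop := fun χ => ∀ i : Fin k, g * (M : ℝ) ^ 2 ≤
      ‖∑ j : Fin M, ZMod.stdAddChar ((j : ℕ) * χ (lam ^ (i : ℕ) • w) : ZMod p)‖ ^ 2
    have hPc := cs_hashprob (p := p) lam k M hNR g hg w hw P (fun χ h => h)
    have hsub : ∀ ω : (Fin m → D) × (Fin m → Fin k → ZMod p),
        (τ ω.1 x + ω.2 ∈ U ∧ τ ω.1 y + ω.2 ∈ U ∧ τ ω.1 z + ω.2 ∈ U) →
        (∀ j, P (ω.1 j)) ∧ τ ω.1 y + ω.2 ∈ U := by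
      rintro ⟨χ, s⟩ ⟨hx, hy, hz⟩
      refine ⟨?_, hy⟩
      simp only [U, Finset.mem_filter, Finset.mem_univ, true_and] at hx hy hz
      obtain ⟨cx, hcx, hx⟩ := hx
      obtain ⟨cy, hcy, hy⟩ := hy
      obtain ⟨cz, hcz, hz⟩ := hz
      have heq := hC cx hcx cy hcy cz hcz (by
        intro α β hαβ hrel j
        have := hcell.forms (Fin k ⊕ Fin k ⊕ Fin k)
          (Sum.elim α (Sum.elim β (fun i => -(α i + β i))))
          (Sum.elim (fun i => (τ χ x + s) j i) (Sum.elim (fun i => (τ χ y + s) j i)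
            (fun i => (τ χ z + s) j i)))
          (Sum.elim (fun i => cx j i) (Sum.elim (fun i => cy j i) (fun i => cz j i)))
          (by
            simp only [Fintype.sum_sum_type, Sum.elim_inl, Sum.elim_inr, abs_neg]
            rw [← Finset.sum_add_distrib, ← Finset.sum_add_distrib]
            refine le_trans (le_of_eq ?_) hαβ
            exact Finset.sum_congr rfl fun i _ => by ring)
          (by
            rintro (i | i | i)
            · exact hx j i
            · exact hy j i
            · exact hz j i)
          (by
            simp only [Fintype.sum_sum_type, Sum.elim_inl, Sum.elim_inr]
            rw [← Finset.sum_add_distrib, ← Finset.sum_add_distrib]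
            have hzero : (∑ i : Fin k, ((α i : F) * lam ^ (i : ℕ)) • x
                + ∑ i : Fin k, ((β i : F) * lam ^ (i : ℕ)) • y
                - ∑ i : Fin k, ((α i : F) * lam ^ (i : ℕ) + (β i : F) * lam ^ (i : ℕ)) • z) = 0 := by
              rw [← Finset.sum_smul, ← Finset.sum_smul, ← Finset.sum_smul, Finset.sum_add_distrib,
                hrel]
              have : (∑ i, (α i : F) * lam ^ (i : ℕ)) • (x + lam • y - (1 + lam) • z) = 0 := by
                rw [hxyz, sub_self, smul_zero]
              rw [← this]
              module
            have h2 := congrArg (χ j) hzero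
            rw [map_sub, map_add, map_sum, map_sum, map_sum, map_zero,
              ← Finset.sum_add_distrib, ← Finset.sum_sub_distrib] at h2
            rw [← h2]
            refine Finset.sum_congr rfl fun i _ => ?_
            have hz : ∀ (a : ℤ) (v : Fin n → F), χ j (((a : F) * lam ^ (i : ℕ)) • v) =
                (a : ZMod p) * χ j (lam ^ (i : ℕ) • v) := by
              intro a v
              rw [mul_smul, Int.cast_smul_eq_zsmul, map_zsmul, zsmul_eq_mul]
            rw [add_smul, map_add, hz, hz, hz, hz]
            simp only [Pi.add_apply, τ]
            push_cast
            ring)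
        simp only [Fintype.sum_sum_type, Sum.elim_inl, Sum.elim_inr] at this
        rw [← Finset.sum_add_distrib, ← Finset.sum_add_distrib] at this
        rw [← this]
        refine Finset.sum_congr rfl fun i _ => ?_
        push_cast
        ring)
      obtain ⟨rfl, rfl⟩ := heq
      intro j i
      have h := hcell.diff (cx j i) _ (hy j i) _ (hz j i)
      have e : (τ χ y + s) j i - (τ χ z + s) j i = χ j (lam ^ (i : ℕ) • w) := by
        simp only [w, Pi.add_apply, τ, smul_sub, map_sub]
        ring
      rw [e] at h
      exact h
    have hcount : (Finset.univ.filter fun ω : (Fin m → D) × (Fin m → Fin k → ZMod p) =>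
        (∀ j, P (ω.1 j)) ∧ τ ω.1 y + ω.2 ∈ U).card = (Finset.univ.filter P).card ^ m * U.card := by
      have e : (Finset.univ.filter fun ω : (Fin m → D) × (Fin m → Fin k → ZMod p) =>
        (∀ j, P (ω.1 j)) ∧ τ ω.1 y + ω.2 ∈ U).card = ∑ χ ∈ Finset.univ.filter
          (fun χ : Fin m → D => ∀ j, P (χ j)), (Finset.univ.filter fun s => τ χ y + s ∈ U).card := by
        rw [Finset.card_filter, Fintype.sum_prod_type, Finset.sum_filter]
        refine Finset.sum_congr rfl fun χ _ => ?_
        by_cases h : ∀ j, P (χ j)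
        · simp only [h, implies_true, true_and, if_true]
          rw [Finset.card_filter]
        · simp [h]
      rw [e]
      simp only [htrans, Finset.sum_const, smul_eq_mul]
      rw [cs_card_pow m P]
    have hle : ((Finset.univ.filter fun ω : (Fin m → D) × (Fin m → Fin k → ZMod p) =>
        τ ω.1 x + ω.2 ∈ U ∧ τ ω.1 y + ω.2 ∈ U ∧ τ ω.1 z + ω.2 ∈ U).card : ℝ) ≤
        ((Finset.univ.filter P).card : ℝ) ^ m * U.card := by
      have := Finset.card_le_card (Finset.monotone_filter_right Finset.univ
        (fun ω _ h => hsub ω h))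
      rw [hcount] at this
      exact_mod_cast this
    refine le_trans (le_of_eq ?_) (hle.trans ?_)
    · congr!
    rw [hcardΩ]
    push_cast
    have hP2 : ((Finset.univ.filter P).card : ℝ) * (g * M) ^ k ≤ Fintype.card D := by
      have e : (g * (M:ℝ) ^ 2) ^ k = (g * M) ^ k * M ^ k := by rw [← mul_pow]; ring_nf
      rw [e, ← mul_assoc] at hPc
      exact le_of_mul_le_mul_right hPc (by positivity)
    have hP3 := pow_le_pow_left₀ (by positivity) hP2 m
    rw [mul_pow, ← pow_mul] at hP3
    have hpp : (0:ℝ) < p ^ (k * m) := by positivity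
    have hgp : (0:ℝ) < (g * M) ^ (k * m) := by positivity
    exact cs_arith1 hP3 hgp hpp (Nat.cast_nonneg _)

end CapHash

section CapCells

lemma cs_cells_exact (p H : ℕ) [Fact p.Prime] :
    csCells p p H 1 1 1 (fun c => {c}) where
  card := by simp
  forms := by
    intro ι _ α u c _ hu h
    have : u = c := funext fun r => by simpa using hu r
    rw [← this]; exact h
  diff := by
    intro _ c u hu u' hu'
    simp only [Finset.mem_singleton] at hu hu'
    subst hu hu'
    simp
  size := by simp

lemma cs_cells_arc (p M H : ℕ) [hp : Fact p.Prime] (hM : 1 ≤ M)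
    (hpM : M * (H + 7) * (H + 2) ≤ p) :
    csCells p M H (p / (M * (H + 7))) (4 * (2 * (H + 7)) ^ 3) (1 / 4)
      (fun c => (Finset.range (p / (M * (H + 7)))).image
        fun i => ((c.val * p / M + i : ℕ) : ZMod p)) := by
  have hMpos : 0 < M := hM
  have hp0 : 0 < p := hp.out.pos
  have : NeZero M := ⟨hMpos.ne'⟩
  set B := H + 7 with hB
  set b := p / (M * B) with hb
  have hb1 : M * B * b ≤ p := Nat.mul_div_le p (M * B)
  have hMB : 0 < M * B := by positivity
  have hb0 : 1 ≤ b := by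
    rw [hb, Nat.one_le_div_iff hMB]; nlinarith
  have hb2 : p < M * B * (b + 1) := Nat.lt_mul_div_succ p hMB
  have hbp : b ≤ p := by nlinarith
  refine ⟨?_, ?_, ?_, ?_⟩
  · intro c
    rw [Finset.card_image_of_injOn, Finset.card_range]
    intro i hi i' hi' h
    simp only [Finset.coe_range, Set.mem_Iio] at hi hi'
    simp only [Nat.cast_add, add_right_inj] at h
    rw [ZMod.natCast_eq_natCast_iff', Nat.mod_eq_of_lt (by omega), Nat.mod_eq_of_lt (by omega)] at h
    exact h
  · intro ι _ α u c hα hu h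
    choose i hi hiu using fun r => Finset.mem_image.1 (hu r)
    simp only [Finset.mem_range] at hi
    have h1 : ((∑ r, α r * ((c r).val * p / M + i r : ℕ) : ℤ) : ZMod p) = 0 := by
      rw [← h, Int.cast_sum]
      refine Finset.sum_congr rfl fun r _ => ?_
      rw [← hiu r, Int.cast_mul, Int.cast_natCast]
    rw [ZMod.intCast_zmod_eq_zero_iff_dvd] at h1
    obtain ⟨t, ht⟩ := h1
    -- remainders
    have hdm : ∀ r, (M : ℤ) * ((c r).val * p / M : ℕ) = (c r).val * p - ((c r).val * p % M : ℕ) := by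
      intro r
      have := Nat.div_add_mod ((c r).val * p) M
      have h' : ((M * ((c r).val * p / M) + (c r).val * p % M : ℕ) : ℤ) = ((c r).val * p : ℕ) := by
        rw [this]
      push_cast at h' ⊢
      linarith
    have key : (p : ℤ) * (∑ r, α r * (c r).val - M * t) =
        ∑ r, α r * (((c r).val * p % M : ℕ) - M * i r : ℤ) := by
      have : (M : ℤ) * (p * t) = ∑ r, α r * ((c r).val * p - ((c r).val * p % M : ℕ) + M * i r : ℤ) := by
        rw [← ht, Finset.mul_sum]
        refine Finset.sum_congr rfl fun r _ => ?_
        rw [← hdm r]; push_cast; ring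
      rw [mul_sub, show (p:ℤ) * (M * t) = M * (p * t) by ring, this, Finset.mul_sum,
        ← Finset.sum_sub_distrib]
      refine Finset.sum_congr rfl fun r _ => ?_
      ring
    have hbound : |∑ r, α r * (((c r).val * p % M : ℕ) - M * i r : ℤ)| < p := by
      calc |∑ r, α r * (((c r).val * p % M : ℕ) - M * i r : ℤ)|
          ≤ ∑ r, |α r * (((c r).val * p % M : ℕ) - M * i r : ℤ)| := Finset.abs_sum_le_sum_abs _ _
        _ ≤ ∑ r, |α r| * (M + M * b : ℤ) := by
            refine Finset.sum_le_sum fun r _ => ?_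
            rw [abs_mul]
            refine mul_le_mul_of_nonneg_left ?_ (abs_nonneg _)
            have h1 : (((c r).val * p % M : ℕ) : ℤ) < M := by exact_mod_cast Nat.mod_lt _ hMpos
            have h2 : (i r : ℤ) ≤ b := by exact_mod_cast (hi r).le
            have h3 : (0:ℤ) ≤ (((c r).val * p % M : ℕ) : ℤ) := Int.natCast_nonneg _
            have h4 : (M : ℤ) * i r ≤ M * b := by gcongr
            have h5 : (0 : ℤ) ≤ M * i r := by positivity
            rw [abs_le]; constructor <;> linarith
        _ = (∑ r, |α r|) * (M + M * b : ℤ) := by rw [Finset.sum_mul]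
        _ ≤ H * (M + M * b : ℤ) := by gcongr
        _ < p := by
            have h6 : H * (M + M * b) < p := by
              have hlt : B * (H * (M + M * b)) < B * p := by
                have e1 : B * (H * (M + M * b)) = H * (M * B) + H * (M * B * b) := by ring
                have e2 : H * (M * B * b) ≤ H * p := Nat.mul_le_mul_left _ hb1
                have e3 : H * (M * B) < 7 * p := by nlinarith
                have e4 : B * p = H * p + 7 * p := by rw [hB]; ring
                omega
              exact lt_of_mul_lt_mul_left hlt (Nat.zero_le _)
            exact_mod_cast h6
    rw [← key, abs_mul] at hbound
    have hz : ∑ r, α r * (c r).val - M * t = 0 := by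
      by_contra hne
      have := Int.one_le_abs hne
      have hpp : |(p:ℤ)| = p := abs_of_nonneg (by positivity)
      rw [hpp] at hbound
      nlinarith
    have hz' : ((∑ r, α r * ((c r).val : ℤ) - M * t : ℤ) : ZMod M) = 0 := by rw [hz]; simp
    push_cast at hz'
    simpa using hz'
  · intro _ c u hu u' hu'
    obtain ⟨i, hi, rfl⟩ := Finset.mem_image.1 hu
    obtain ⟨i', hi', rfl⟩ := Finset.mem_image.1 hu'
    simp only [Finset.mem_range] at hi hi'
    have hre : ∀ j : Fin M, (1 / 2 : ℝ) ≤ (ZMod.stdAddChar (N := p) ((j : ℕ) *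
        ((c.val * p / M + i : ℕ) - (c.val * p / M + i' : ℕ) : ZMod p) : ZMod p)).re := by
      intro j
      have e : ((j : ℕ) * ((c.val * p / M + i : ℕ) - (c.val * p / M + i' : ℕ) : ZMod p) : ZMod p)
          = (((j : ℕ) * ((i : ℤ) - i') : ℤ) : ZMod p) := by push_cast; ring
      rw [e, ZMod.stdAddChar_coe]
      have e2 : 2 * (Real.pi : ℂ) * Complex.I * (((j : ℕ) * ((i : ℤ) - i') : ℤ) : ℂ) / (p : ℂ) =
          ((2 * Real.pi * ((j : ℕ) * ((i : ℤ) - i') : ℤ) / p : ℝ) : ℂ) * Complex.I := by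
        push_cast; ring
      rw [e2, Complex.exp_ofReal_mul_I_re]
      refine le_trans ?_ (Real.one_sub_sq_div_two_le_cos)
      have h1 : |(((j : ℕ) * ((i : ℤ) - i') : ℤ) : ℝ)| * 7 ≤ p := by
        have hz : |((j : ℕ) * ((i : ℤ) - i') : ℤ)| * 7 ≤ p := by
          rw [abs_mul]
          have h2 : |((i : ℤ) - i')| ≤ b := by rw [abs_le]; constructor <;> omega
          have h3 : |((j : ℕ) : ℤ)| ≤ M := by
            rw [abs_of_nonneg (by positivity)]; exact_mod_cast j.2.le
          have h4 : |((j : ℕ) : ℤ)| * |((i : ℤ) - i')| ≤ M * b :=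
            mul_le_mul h3 h2 (abs_nonneg _) (by positivity)
          have h5 : M * b * 7 ≤ p := by
            calc M * b * 7 ≤ M * b * B := by gcongr; omega
              _ = M * B * b := by ring
              _ ≤ p := hb1
          have h5' : (M * b * 7 : ℤ) ≤ p := by exact_mod_cast h5
          linarith
        exact_mod_cast hz
      set t : ℝ := (((j : ℕ) * ((i : ℤ) - i') : ℤ) : ℝ)
      have hpR : (0:ℝ) < p := by exact_mod_cast hp0
      have h6 : |2 * Real.pi * t / p| ≤ 1 := by
        rw [abs_div, abs_mul, abs_mul, abs_of_pos hpR, abs_of_pos Real.pi_pos, abs_two,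
          div_le_one hpR]
        have := Real.pi_lt_d2
        nlinarith [abs_nonneg t]
      have h7 : (2 * Real.pi * t / p) ^ 2 ≤ 1 := by
        rw [← sq_abs]; nlinarith [abs_nonneg (2 * Real.pi * t / p)]
      linarith
    set f : Fin M → ℂ := fun j => (ZMod.stdAddChar (N := p) ((j : ℕ) *
        ((c.val * p / M + i : ℕ) - (c.val * p / M + i' : ℕ) : ZMod p) : ZMod p))
    have h1 : (M : ℝ) / 2 ≤ ‖∑ j, f j‖ := by
      refine le_trans ?_ (Complex.re_le_norm _)
      rw [Complex.re_sum]
      have := Finset.card_nsmul_le_sum Finset.univ (fun j => (f j).re) (1/2) (fun j _ => hre j)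
      simp only [Finset.card_univ, Fintype.card_fin, nsmul_eq_mul] at this
      linarith
    calc 1 / 4 * (M : ℝ) ^ 2 = ((M : ℝ) / 2) ^ 2 := by ring
      _ ≤ _ := pow_le_pow_left₀ (by positivity) h1 2
  · have h1 : p ≤ (2 * B) * (M * b) := by nlinarith
    have h2 : (p : ℝ) ≤ (2 * B) * (M * b) := by exact_mod_cast h1
    have hBR : (B : ℝ) = H + 7 := by rw [hB]; push_cast; ring
    calc (p : ℝ) ^ 3 ≤ ((2 * B) * (M * b)) ^ 3 := pow_le_pow_left₀ (by positivity) h2 3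
      _ = _ := by rw [hBR]; ring

end CapCells

section CapField

/-- Cap sets for the equation `x + τ y = (1 + τ) z` in a module. -/
def csCap {R N : Type*} [CommRing R] [AddCommGroup N] [Module R N] (τ : R) (C : Finset N) : Prop :=
  ∀ x ∈ C, ∀ y ∈ C, ∀ z ∈ C, x + τ • y = (1 + τ) • z → x = y ∧ y = z

lemma cs_aniso (k : Type) [Field k] [Fintype k] :
    ∃ a b : k, ∀ u v : k, u ^ 2 - a * u * v + b * v ^ 2 = 0 → u = 0 ∧ v = 0 := by
  have hns : ¬ Function.Surjective (fun rs : k × k => (rs.1 + rs.2, rs.1 * rs.2)) := by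
    intro hs
    have hi := Finite.injective_iff_surjective.2 hs
    have : ((0 : k), (1 : k)) = (1, 0) := hi (by simp)
    simp at this
  unfold Function.Surjective at hns
  push Not at hns
  obtain ⟨⟨a, b⟩, h⟩ := hns
  refine ⟨a, b, fun u v huv => ?_⟩
  by_cases hv : v = 0
  · subst hv
    simp at huv
    exact ⟨huv, rfl⟩
  · exfalso
    apply h (u / v, a - u / v)
    ext
    · simp
    · simp only
      field_simp
      linear_combination -huv

open scoped Classical in
lemma cs_paraboloid (k : Type) [Field k] [Fintype k] (t : k) (ht : t ≠ 0) (ht1 : 1 + t ≠ 0) :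
    ∃ C : Finset (k × k × k), csCap t C ∧ C.card = Fintype.card k ^ 2 ∧ (0, 0, 1) ∉ C := by
  obtain ⟨a, b, h⟩ := cs_aniso k
  refine ⟨Finset.univ.image (fun p : k × k => (p.1, p.2, p.1 ^ 2 - a * p.1 * p.2 + b * p.2 ^ 2)),
    ?_, ?_, ?_⟩
  · intro x hx y hy z hz hxyz
    simp only [Finset.mem_image, Finset.mem_univ, true_and, Prod.exists] at hx hy hz
    obtain ⟨x1, x2, rfl⟩ := hx
    obtain ⟨y1, y2, rfl⟩ := hy
    obtain ⟨z1, z2, rfl⟩ := hz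
    simp only [Prod.smul_mk, Prod.mk_add_mk, smul_eq_mul, Prod.mk.injEq] at hxyz
    obtain ⟨h1, h2, h3⟩ := hxyz
    have e1 : x1 = (1 + t) * z1 - t * y1 := by linear_combination h1
    have e2 : x2 = (1 + t) * z2 - t * y2 := by linear_combination h2
    have h4 : t * (1 + t) * ((y1 - z1) ^ 2 - a * (y1 - z1) * (y2 - z2) + b * (y2 - z2) ^ 2) = 0 := by
      rw [e1, e2] at h3
      linear_combination h3
    have h5 := (mul_eq_zero.1 h4).resolve_left (mul_ne_zero ht ht1)
    obtain ⟨h6, h7⟩ := h _ _ h5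
    have f1 : y1 = z1 := by linear_combination h6
    have f2 : y2 = z2 := by linear_combination h7
    subst f1 f2
    have f3 : x1 = y1 := by rw [e1]; ring
    have f4 : x2 = y2 := by rw [e2]; ring
    subst f3 f4
    exact ⟨rfl, rfl⟩
  · rw [Finset.card_image_of_injective]
    · simp [sq]
    · rintro ⟨p1, p2⟩ ⟨q1, q2⟩ hpq
      simp only [Prod.mk.injEq] at hpq ⊢
      exact ⟨hpq.1, hpq.2.1⟩
  · simp only [Finset.mem_image, Finset.mem_univ, true_and, Prod.exists, Prod.mk.injEq, not_exists]
    rintro u v ⟨rfl, rfl, h3⟩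
    simp at h3

/-- Sums over fibres of a surjective homomorphism. -/
lemma cs_fiber_sum {A B : Type*} [AddGroup A] [AddGroup B] [Fintype A] [Fintype B] (f : A →+ B)
    (hf : Function.Surjective f) (g : B → ℕ) :
    (∑ a, g (f a)) * Fintype.card B = Fintype.card A * ∑ b, g b := by
  classical
  have h1 : ∀ b, (Finset.univ.filter fun a => f a = b).card =
      (Finset.univ.filter fun a => f a = 0).card := by
    intro b
    obtain ⟨a₀, rfl⟩ := hf b
    refine Finset.card_bij (fun a _ => a - a₀) ?_ ?_ ?_
    · intro a ha; simpa [sub_eq_zero] using ha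
    · intro a _ a' _ h; exact sub_left_injective h
    · intro a ha; exact ⟨a + a₀, by simpa using ha, by simp⟩
  set c := (Finset.univ.filter fun a => f a = 0).card
  have h2 : ∑ a, g (f a) = c * ∑ b, g b := by
    rw [← Finset.sum_fiberwise (s := Finset.univ) (g := f) (f := fun a => g (f a)), Finset.mul_sum]
    refine Finset.sum_congr rfl fun b _ => ?_
    rw [Finset.sum_congr rfl (g := fun _ => g b)]
    · rw [Finset.sum_const, h1, smul_eq_mul]
    · intro a ha; rw [(Finset.mem_filter.1 ha).2]
  have h3 : Fintype.card A = c * Fintype.card B := by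
    rw [← Finset.card_univ (α := A), Finset.card_eq_sum_card_fiberwise (f := f) (t := Finset.univ) (by simp)]
    simp only [h1, Finset.sum_const, Finset.card_univ, smul_eq_mul]
    ring
  rw [h2, h3]; ring

open scoped Classical in
/-- The block construction in `(k^3)^r`. -/
lemma cs_blocks (k : Type) [Field k] [Fintype k] (t : k) (ht : t ≠ 0) (ht1 : 1 + t ≠ 0) (r : ℕ) :
    ∃ U : Finset (Fin r → k × k × k), U.card = r * Fintype.card k ^ (2 * (r - 1)) ∧
      (Finset.univ.filter fun P : (Fin r → k × k × k) × (Fin r → k × k × k) =>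
        P.1 - t • P.2 ∈ U ∧ P.1 + P.2 ∈ U ∧ P.1 ∈ U).card ≤
      r ^ 3 * Fintype.card k ^ (2 * (r - 1) + 9) := by
  obtain ⟨C, hC, hCc, hC0⟩ := cs_paraboloid k t ht ht1
  set q := Fintype.card k with hq
  let Ui : Fin r → Finset (Fin r → k × k × k) := fun i =>
    Fintype.piFinset (Function.update (fun _ => C) i {((0, 0, 1) : k × k × k)})
  have hUi : ∀ i, (Ui i).card = q ^ (2 * (r - 1)) := by
    intro i
    simp only [Ui, Fintype.card_piFinset]
    rw [← Finset.mul_prod_erase _ _ (Finset.mem_univ i)]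
    rw [Function.update_self, Finset.card_singleton, one_mul]
    rw [Finset.prod_congr rfl (g := fun _ => q ^ 2)]
    · rw [Finset.prod_const, Finset.card_erase_of_mem (Finset.mem_univ i), Finset.card_univ,
        Fintype.card_fin, ← pow_mul]
    · intro l hl
      rw [Function.update_of_ne (Finset.ne_of_mem_erase hl), hCc]
  have hmem : ∀ i u, u ∈ Ui i → u i = (0, 0, 1) ∧ ∀ l, l ≠ i → u l ∈ C := by
    intro i u hu
    simp only [Ui, Fintype.mem_piFinset] at hu
    refine ⟨?_, fun l hl => ?_⟩
    · have := hu i; simpa using this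
    · have := hu l; rwa [Function.update_of_ne hl] at this
  refine ⟨Finset.univ.biUnion Ui, ?_, ?_⟩
  · rw [Finset.card_biUnion]
    · simp [hUi]
    · intro i _ j _ hij
      rw [Function.onFun, Finset.disjoint_left]
      intro u hu hu'
      apply hC0
      rw [← (hmem i u hu).1]
      exact (hmem j u hu').2 i hij
  · have hsub : (Finset.univ.filter fun P : (Fin r → k × k × k) × (Fin r → k × k × k) =>
        P.1 - t • P.2 ∈ Finset.univ.biUnion Ui ∧ P.1 + P.2 ∈ Finset.univ.biUnion Ui ∧
          P.1 ∈ Finset.univ.biUnion Ui) ⊆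
        (Finset.univ : Finset (Fin r × Fin r × Fin r)).biUnion fun ijl =>
          Finset.univ.filter fun P : (Fin r → k × k × k) × (Fin r → k × k × k) =>
            P.1 - t • P.2 ∈ Ui ijl.1 ∧ P.1 + P.2 ∈ Ui ijl.2.1 ∧ P.1 ∈ Ui ijl.2.2 := by
      intro P hP
      simp only [Finset.mem_filter, Finset.mem_biUnion, Finset.mem_univ, true_and] at hP ⊢
      obtain ⟨⟨i, hi⟩, ⟨j, hj⟩, ⟨l, hl⟩⟩ := hP
      exact ⟨(i, j, l), hi, hj, hl⟩
    refine (Finset.card_le_card hsub).trans (Finset.card_biUnion_le.trans ?_)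
    have hone : ∀ ijl : Fin r × Fin r × Fin r,
        (Finset.univ.filter fun P : (Fin r → k × k × k) × (Fin r → k × k × k) =>
            P.1 - t • P.2 ∈ Ui ijl.1 ∧ P.1 + P.2 ∈ Ui ijl.2.1 ∧ P.1 ∈ Ui ijl.2.2).card ≤
        q ^ (2 * (r - 1) + 9) := by
      rintro ⟨i, j, l⟩
      have hcard : (Ui l ×ˢ (Finset.univ : Finset ((k × k × k) × (k × k × k) × (k × k × k)))).card =
          q ^ (2 * (r - 1) + 9) := by
        rw [Finset.card_product, hUi, Finset.card_univ]
        simp only [Fintype.card_prod, ← hq]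
        ring
      rw [← hcard]
      apply Finset.card_le_card_of_injOn (fun P => (P.1, P.2 i, P.2 j, P.2 l))
      · intro P hP
        simp only [Finset.coe_filter, Finset.mem_univ, true_and, Set.mem_ofPred_eq] at hP
        simp only [Finset.coe_product, Set.mem_prod, Finset.mem_coe, Finset.mem_univ, and_true]
        exact hP.2.2
      · intro P hP P' hP' h
        simp only [Finset.coe_filter, Finset.mem_univ, true_and, Set.mem_ofPred_eq] at hP hP'
        simp only [Prod.mk.injEq] at h
        have hz : ∀ P : (Fin r → k × k × k) × (Fin r → k × k × k),
            (P.1 - t • P.2 ∈ Ui i ∧ P.1 + P.2 ∈ Ui j ∧ P.1 ∈ Ui l) →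
            ∀ s, s ≠ i → s ≠ j → s ≠ l → P.2 s = 0 := by
          intro P hP s h1 h2 h3
          have := hC _ ((hmem _ _ hP.1).2 s h1) _ ((hmem _ _ hP.2.1).2 s h2) _
            ((hmem _ _ hP.2.2).2 s h3) (by
              simp only [Pi.sub_apply, Pi.add_apply, Pi.smul_apply]
              module)
          have h4 := this.2
          simpa using h4
        refine Prod.ext h.1 (funext fun s => ?_)
        by_cases h1 : s = i
        · rw [h1]; exact h.2.1
        by_cases h2 : s = j
        · rw [h2]; exact h.2.2.1
        by_cases h3 : s = l
        · rw [h3]; exact h.2.2.2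
        rw [hz P hP s h1 h2 h3, hz P' hP' s h1 h2 h3]
    refine (Finset.sum_le_sum fun ijl _ => hone ijl).trans (le_of_eq ?_)
    simp only [Finset.sum_const, Finset.card_univ, Fintype.card_prod, Fintype.card_fin, smul_eq_mul]
    ring

open scoped Classical in
lemma cs_fieldcap1 (k : Type) [Field k] [Fintype k] (t : k) (ht : t ≠ 0) (ht1 : 1 + t ≠ 0) :
    ∃ C : Finset (Fin (3 * Fintype.card k ^ 20 - 50) → k), csCap t C ∧
      Fintype.card k ^ (2 * (3 * Fintype.card k ^ 20 - 50) + 1) ≤ C.card ^ 3 := by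
  set q := Fintype.card k with hq
  have hq2 : 2 ≤ q := Fintype.one_lt_card
  obtain ⟨e, he⟩ : ∃ e, q ^ 20 = 50 + e := by
    have : 50 ≤ q ^ 20 := le_trans (by norm_num) (Nat.pow_le_pow_left hq2 20)
    exact ⟨q ^ 20 - 50, by omega⟩
  have hn : 3 * q ^ 20 - 50 = 100 + 3 * e := by omega
  rw [hn]
  set n := 100 + 3 * e with hnn
  obtain ⟨U, hU, hT⟩ := cs_blocks k t ht ht1 (q ^ 20)
  rw [← hq] at hU hT
  let W := Fin (q ^ 20) → k × k × k
  let V := Fin n → k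
  have hfin : Finite (V →ₗ[k] W) := Finite.of_injective _ DFunLike.coe_injective
  let _ : Fintype (V →ₗ[k] W) := Fintype.ofFinite _
  have hcardW : Fintype.card W = q ^ (150 + 3 * e) := by
    simp only [W, Fintype.card_fun, Fintype.card_prod, ← hq, Fintype.card_fin]
    rw [show q * (q * q) = q ^ 3 by ring, ← pow_mul, he]
    congr 1; ring
  have hU' : U.card = q ^ (118 + 2 * e) := by
    rw [hU, ← pow_add]; congr 1; omega
  set TT := (Finset.univ.filter fun P : W × W =>
        P.1 - t • P.2 ∈ U ∧ P.1 + P.2 ∈ U ∧ P.1 ∈ U).card with hTT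
  have hT' : TT ≤ q ^ (167 + 2 * e) := by
    refine hT.trans (le_of_eq ?_)
    rw [← pow_mul, ← pow_add]; congr 1; omega
  set L := Fintype.card (V →ₗ[k] W) with hL
  have hLpos : 0 < L := Fintype.card_pos
  have hqR : (0:ℝ) < q := by exact_mod_cast (by omega : 0 < q)
  -- apply the deletion argument
  obtain ⟨I, -, hI, hIc⟩ := cs_L0 (Ω := (V →ₗ[k] W) × W) (Finset.univ : Finset V)
    (Finset.univ.filter fun T : V × V × V => T.1 + t • T.2.1 = (1 + t) • T.2.2 ∧ T.2.1 ≠ T.2.2)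
    (fun ω v => ω.1 v + ω.2 ∈ U) ((q:ℝ) ^ (118 + 2 * e) / q ^ (150 + 3 * e))
    ((q:ℝ) ^ (167 + 2 * e) / (q ^ (150 + 3 * e) * q ^ (150 + 3 * e)))
    (by
      intro x _
      have h1 : (Finset.univ.filter fun ω : (V →ₗ[k] W) × W => ω.1 x + ω.2 ∈ U).card =
          L * U.card := by
        rw [Finset.card_filter, Fintype.sum_prod_type]
        have : ∀ φ : V →ₗ[k] W, (∑ s : W, if φ x + s ∈ U then 1 else 0) = U.card := by
          intro φ
          rw [← Finset.card_filter]
          refine Finset.card_bij (fun s _ => φ x + s) ?_ ?_ ?_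
          · intro s hs; exact (Finset.mem_filter.1 hs).2
          · intro s _ s' _ h; exact add_left_cancel h
          · intro u hu; exact ⟨u - φ x, by simpa using hu, by abel⟩
        simp only [this]
        simp [hL]
      have h1' := congrArg (Nat.cast (R := ℝ)) h1
      refine le_trans (le_of_eq ?_) (le_of_eq (h1'.symm.trans ?_))
      swap
      · congr!
      rw [Fintype.card_prod, hcardW, hU', ← hL]
      push_cast
      field_simp)
    (by
      intro T hT
      simp only [Finset.mem_filter, Finset.mem_univ, true_and] at hT
      obtain ⟨hT1, hT2⟩ := hT
      set w := T.2.1 - T.2.2 with hw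
      have hw0 : w ≠ 0 := sub_ne_zero.2 hT2
      let ev : (V →ₗ[k] W) →+ W :=
        { toFun := fun φ => φ w, map_zero' := rfl, map_add' := fun _ _ => rfl }
      have hsurj : Function.Surjective ev := by
        intro b
        obtain ⟨f, hf⟩ : ∃ f : Module.Dual k V, f w ≠ 0 := by
          by_contra hcon
          push Not at hcon
          exact hw0 ((Module.forall_dual_apply_eq_zero_iff k w).1 hcon)
        refine ⟨f.smulRight ((f w)⁻¹ • b), ?_⟩
        change f w • ((f w)⁻¹ • b) = b
        rw [smul_smul, mul_inv_cancel₀ hf, one_smul]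
      have hsum := cs_fiber_sum ev hsurj (fun D => (Finset.univ.filter fun P : W =>
        P - t • D ∈ U ∧ P + D ∈ U ∧ P ∈ U).card)
      have hTsum : ∑ D : W, (Finset.univ.filter fun P : W =>
        P - t • D ∈ U ∧ P + D ∈ U ∧ P ∈ U).card = TT := by
        rw [hTT, Finset.card_filter, Fintype.sum_prod_type_right]
        simp only [Finset.card_filter]
      rw [hTsum, hcardW] at hsum
      have h2 : (Finset.univ.filter fun ω : (V →ₗ[k] W) × W => ω.1 T.1 + ω.2 ∈ U ∧
          ω.1 T.2.1 + ω.2 ∈ U ∧ ω.1 T.2.2 + ω.2 ∈ U).card =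
          ∑ φ : V →ₗ[k] W, (Finset.univ.filter fun P : W =>
            P - t • ev φ ∈ U ∧ P + ev φ ∈ U ∧ P ∈ U).card := by
        rw [Finset.card_filter, Fintype.sum_prod_type]
        refine Finset.sum_congr rfl fun φ _ => ?_
        rw [← Finset.card_filter]
        refine Finset.card_bij (fun s _ => φ T.2.2 + s) ?_ ?_ ?_
        · intro s hs
          simp only [Finset.mem_filter, Finset.mem_univ, true_and] at hs ⊢
          have hx : T.1 = T.2.2 - t • w := by
            rw [hw, smul_sub, ← sub_eq_zero]
            rw [← sub_eq_zero] at hT1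
            rw [← hT1]; module
          have e1 : φ T.2.2 + s - t • ev φ = φ T.1 + s := by
            rw [hx, map_sub, map_smul]; change _ - t • φ w = _; abel
          have e2 : φ T.2.2 + s + ev φ = φ T.2.1 + s := by
            change _ + φ w = _
            rw [hw, map_sub]; abel
          rw [e1, e2]
          exact hs
        · intro s _ s' _ h; exact add_left_cancel h
        · intro P hP
          refine ⟨P - φ T.2.2, ?_, by abel⟩
          simp only [Finset.mem_filter, Finset.mem_univ, true_and] at hP ⊢
          have hx : T.1 = T.2.2 - t • w := by
            rw [hw, smul_sub, ← sub_eq_zero]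
            rw [← sub_eq_zero] at hT1
            rw [← hT1]; module
          have e1 : φ T.1 + (P - φ T.2.2) = P - t • ev φ := by
            rw [hx, map_sub, map_smul]; change _ = _ - t • φ w; abel
          have e2 : φ T.2.1 + (P - φ T.2.2) = P + ev φ := by
            change _ = _ + φ w
            rw [hw, map_sub]; abel
          rw [e1, e2, add_sub_cancel]
          exact hP
      have h2' := congrArg (Nat.cast (R := ℝ)) h2
      refine le_trans (le_of_eq ?_) (h2'.le.trans ?_)
      · congr!
      rw [← h2] at hsum ⊢
      rw [Fintype.card_prod, hcardW]
      push_cast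
      set X := (Finset.univ.filter fun ω : (V →ₗ[k] W) × W => ω.1 T.1 + ω.2 ∈ U ∧
          ω.1 T.2.1 + ω.2 ∈ U ∧ ω.1 T.2.2 + ω.2 ∈ U).card
      have h3 : (X : ℝ) * q ^ (150 + 3 * e) ≤ L * q ^ (167 + 2 * e) := by
        have : X * q ^ (150 + 3 * e) ≤ L * q ^ (167 + 2 * e) := by
          rw [hsum]; gcongr
        exact_mod_cast this
      have hQ : (0:ℝ) < q ^ (150 + 3 * e) := by positivity
      calc (X : ℝ) = (X * q ^ (150 + 3 * e)) / q ^ (150 + 3 * e) := by field_simp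
        _ ≤ (L * q ^ (167 + 2 * e)) / q ^ (150 + 3 * e) := by gcongr
        _ = _ := by rw [← hL]; field_simp)
  refine ⟨I, ?_, ?_⟩
  · intro x hx y hy z hz h
    by_cases hyz : y = z
    · subst hyz
      refine ⟨?_, rfl⟩
      rw [add_smul, one_smul] at h
      exact add_right_cancel h
    · exact absurd ⟨hx, hy, hz⟩ (hI (x, y, z) (by simp [h, hyz]))
  · have hTc : (Finset.univ.filter fun T : V × V × V => T.1 + t • T.2.1 = (1 + t) • T.2.2 ∧
        T.2.1 ≠ T.2.2).card ≤ q ^ (2 * n) := by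
      have : Fintype.card (V × V) = q ^ (2 * n) := by
        simp [V, ← hq]; ring
      rw [← this, ← Finset.card_univ]
      apply Finset.card_le_card_of_injOn (fun T => T.2) (by simp)
      intro T hT T' hT' h
      simp only [Finset.coe_filter, Finset.mem_univ, true_and, Set.mem_ofPred_eq] at hT hT' h
      refine Prod.ext ?_ h
      have h1 := hT.1; have h2 := hT'.1
      rw [← h] at h2
      exact add_right_cancel (h1.trans h2.symm)
    have hVc : (Finset.univ : Finset V).card = q ^ n := by simp [V, ← hq]
    have h1 : (q:ℝ) ^ (67 + 2 * e) ≤ I.card := by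
      refine le_trans ?_ hIc
      rw [hVc]
      have hTc' : ((Finset.univ.filter fun T : V × V × V => T.1 + t • T.2.1 = (1 + t) • T.2.2 ∧
        T.2.1 ≠ T.2.2).card : ℝ) ≤ (q:ℝ) ^ (2 * n) := by exact_mod_cast hTc
      have e1 : (q:ℝ) ^ (118 + 2 * e) / q ^ (150 + 3 * e) * ((q ^ n : ℕ) : ℝ) =
          q * q ^ (67 + 2 * e) := by
        push_cast
        rw [div_mul_eq_mul_div, div_eq_iff (by positivity), hnn, ← pow_succ', ← pow_add, ← pow_add]
        congr 1; ring
      have e2 : (q:ℝ) ^ (167 + 2 * e) / (q ^ (150 + 3 * e) * q ^ (150 + 3 * e)) * (q:ℝ) ^ (2 * n) =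
          q ^ (67 + 2 * e) := by
        rw [div_mul_eq_mul_div, div_eq_iff (by positivity), hnn, ← pow_add, ← pow_add, ← pow_add]
        congr 1; ring
      have h3 := mul_le_mul_of_nonneg_left hTc'
        (show 0 ≤ (q:ℝ) ^ (167 + 2 * e) / (q ^ (150 + 3 * e) * q ^ (150 + 3 * e)) by positivity)
      rw [e2] at h3
      rw [e1]
      have hq2R : (2:ℝ) ≤ q := by exact_mod_cast hq2
      have hpos : (0:ℝ) < q ^ (67 + 2 * e) := by positivity
      nlinarith
    have hone : q ^ (67 + 2 * e) ≤ I.card := by exact_mod_cast h1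
    calc q ^ (2 * n + 1) = (q ^ (67 + 2 * e)) ^ 3 := by
          rw [← pow_mul, hnn]; congr 1; ring
      _ ≤ _ := Nat.pow_le_pow_left hone 3

/-- Large caps over finite fields, with dimension depending only on the cardinality. -/
lemma cs_fieldcap (q : ℕ) : ∃ m : ℕ, 0 < m ∧ ∀ (k : Type) [Field k] [Fintype k] (t : k),
    Fintype.card k = q → t ≠ 0 → 1 + t ≠ 0 →
    ∃ C : Finset (Fin m → k), csCap t C ∧ q ^ (2 * m + 1) ≤ C.card ^ 3 := by
  by_cases hq : 2 ≤ q
  · refine ⟨3 * q ^ 20 - 50, ?_, ?_⟩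
    · have : 50 ≤ q ^ 20 := le_trans (by norm_num) (Nat.pow_le_pow_left hq 20)
      omega
    · intro k _ _ t hk ht ht1
      subst hk
      exact cs_fieldcap1 k t ht ht1
  · refine ⟨1, one_pos, fun k _ _ t hk => ?_⟩
    exact absurd (hk ▸ Fintype.one_lt_card) hq

end CapField

section CapModule

lemma cs_cap_map {R N N' : Type} [CommRing R] [AddCommGroup N] [Module R N] [AddCommGroup N']
    [Module R N'] (τ : R) (e : N ≃ₗ[R] N') (C : Finset N) (hC : csCap τ C) :
    csCap τ (C.map e.toEquiv.toEmbedding) := by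
  intro x0 hx0 y0 hy0 z0 hz0 h
  obtain ⟨x, hx, rfl⟩ := Finset.mem_map.1 hx0
  obtain ⟨y, hy, rfl⟩ := Finset.mem_map.1 hy0
  obtain ⟨z, hz, rfl⟩ := Finset.mem_map.1 hz0
  have := hC x hx y hy z hz (by
    apply e.injective
    simpa using h)
  rw [this.1, this.2]
  exact ⟨rfl, rfl⟩

lemma cs_cap_pow {R N : Type} [CommRing R] [AddCommGroup N] [Module R N] (τ : R) (m c : ℕ)
    (hc : 0 < c) (Q : ℕ) (hQ : 0 < Q)
    (C : Finset (Fin m → N)) (hC : csCap τ C) (hs : Q ^ (2 * m + 1) ≤ C.card ^ 3) :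
    ∃ C' : Finset (Fin (c * m) → N), csCap τ C' ∧ Q ^ (2 * (c * m) + 1) ≤ C'.card ^ 3 := by
  classical
  let D : Finset (Fin c → Fin m → N) := Fintype.piFinset fun _ => C
  have hD : csCap τ D := by
    intro x hx y hy z hz h
    simp only [D, Fintype.mem_piFinset] at hx hy hz
    have := fun i => hC _ (hx i) _ (hy i) _ (hz i) (congrFun h i)
    exact ⟨funext fun i => (this i).1, funext fun i => (this i).2⟩
  have hDc : D.card = C.card ^ c := by simp [D]
  let e : (Fin c → Fin m → N) ≃ₗ[R] (Fin (c * m) → N) :=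
    (LinearEquiv.curry R N (Fin c) (Fin m)).symm.trans
      (LinearEquiv.funCongrLeft R N finProdFinEquiv.symm)
  refine ⟨D.map e.toEquiv.toEmbedding, cs_cap_map τ e D hD, ?_⟩
  rw [Finset.card_map, hDc]
  calc Q ^ (2 * (c * m) + 1) ≤ Q ^ ((2 * m + 1) * c) := Nat.pow_le_pow_right hQ (by nlinarith)
    _ = (Q ^ (2 * m + 1)) ^ c := by rw [pow_mul]
    _ ≤ (C.card ^ 3) ^ c := Nat.pow_le_pow_left hs c
    _ = _ := by rw [← pow_mul, ← pow_mul, mul_comm]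

lemma cs_cap_ext {R N : Type} [CommRing R] [AddCommGroup N] [Module R N] (τ : R) (m : ℕ)
    (N' : Submodule R N) (C' : Finset (Fin m → N')) (C'' : Finset (Fin m → N ⧸ N'))
    (h' : csCap τ C') (h'' : csCap τ C'') :
    ∃ C : Finset (Fin m → N), csCap τ C ∧ C.card = C'.card * C''.card := by
  classical
  let f : (Fin m → N') × (Fin m → N ⧸ N') → (Fin m → N) := fun p i =>
    (p.1 i : N) + (p.2 i).out
  have hout : ∀ v : N ⧸ N', Submodule.Quotient.mk (p := N') v.out = v := fun v => Quotient.out_eq' v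
  have hmk : ∀ p i, Submodule.Quotient.mk (p := N') (f p i) = p.2 i := by
    intro p i
    simp only [f, Submodule.Quotient.mk_add, hout]
    rw [(Submodule.Quotient.mk_eq_zero N').2 (p.1 i).2, zero_add]
  have hfinj : Function.Injective f := by
    intro p p' h
    have h2 : p.2 = p'.2 := funext fun i => by rw [← hmk p i, ← hmk p' i, h]
    refine Prod.ext (funext fun i => Subtype.ext ?_) h2
    have := congrFun h i
    simp only [f, h2] at this
    exact add_right_cancel this
  refine ⟨(C' ×ˢ C'').image f, ?_, ?_⟩
  · intro x0 hx0 y0 hy0 z0 hz0 h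
    obtain ⟨x, hx, rfl⟩ := Finset.mem_image.1 hx0
    obtain ⟨y, hy, rfl⟩ := Finset.mem_image.1 hy0
    obtain ⟨z, hz, rfl⟩ := Finset.mem_image.1 hz0
    rw [Finset.mem_product] at hx hy hz
    have h2 := h'' _ hx.2 _ hy.2 _ hz.2 (by
      funext i
      have := congrArg (Submodule.Quotient.mk (p := N')) (congrFun h i)
      simp only [Pi.add_apply, Pi.smul_apply, Submodule.Quotient.mk_add,
        Submodule.Quotient.mk_smul, hmk] at this
      simpa using this)
    have h1 := h' _ hx.1 _ hy.1 _ hz.1 (by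
      funext i
      have := congrFun h i
      simp only [Pi.add_apply, Pi.smul_apply, f, h2.1, h2.2] at this
      apply Subtype.ext
      simp only [Pi.add_apply, Pi.smul_apply, Submodule.coe_add, Submodule.coe_smul]
      rw [← sub_eq_zero] at this ⊢
      rw [← this]
      module)
    exact ⟨congrArg f (Prod.ext h1.1 h2.1), congrArg f (Prod.ext h1.2 h2.2)⟩
  · rw [Finset.card_image_of_injective _ hfinj, Finset.card_product]

lemma cs_modcap (B : ℕ) : ∃ m : ℕ, 0 < m ∧ ∀ (R : Type) [CommRing R] (τ : R) (T : Set R),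
    (∀ P : Ideal R, P.IsMaximal → T ⊆ P → τ ∉ P ∧ 1 + τ ∉ P ∧ Nat.card (R ⧸ P) ≤ B) →
    ∀ (N : Type) [AddCommGroup N] [Module R N] [Finite N],
      (∀ r ∈ T, ∃ a : ℕ, ∀ v : N, r ^ a • v = 0) →
      ∃ C : Finset (Fin m → N), csCap τ C ∧ Nat.card N ^ (2 * m + 1) ≤ C.card ^ 3 := by
  classical
  choose mq hmq0 hmq using cs_fieldcap
  refine ⟨∏ q ∈ Finset.range (B + 1), mq q, Finset.prod_pos fun q _ => hmq0 q, ?_⟩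
  set m := ∏ q ∈ Finset.range (B + 1), mq q with hm
  have hmpos : 0 < m := Finset.prod_pos fun q _ => hmq0 q
  intro R _ τ T hT N _ _ _ hnil
  obtain ⟨s, hs⟩ : ∃ s, Nat.card N = s := ⟨_, rfl⟩
  induction s using Nat.strong_induction_on generalizing N with
  | _ s ih =>
  by_cases hsub : Subsingleton N
  · refine ⟨{0}, ?_, ?_⟩
    · intro x hx y hy z hz _
      exact ⟨Subsingleton.elim _ _, Subsingleton.elim _ _⟩
    · have : Nat.card N = 1 := Nat.card_of_subsingleton 0
      simp
  have hnt : Nontrivial N := not_subsingleton_iff_nontrivial.1 hsub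
  have hart : IsArtinian R N := isArtinian_of_finite
  obtain ⟨N', hN'⟩ := IsAtomic.exists_atom (Submodule R N)
  have hsimple : IsSimpleModule R N' := isSimpleModule_iff_isAtom.2 hN'
  obtain ⟨P, hP, ⟨e⟩⟩ := isSimpleModule_iff_quot_maximal.1 hsimple
  have hTP : T ⊆ P := by
    intro r hr
    obtain ⟨a, ha⟩ := hnil r hr
    have h1 : r ^ a • (e.symm (Ideal.Quotient.mk P 1)) = 0 := Subtype.ext (ha _)
    rw [← map_smul, LinearEquiv.map_eq_zero_iff] at h1
    have h2 : Ideal.Quotient.mk P (r ^ a) = 0 := by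
      rw [← h1, ← mul_one (r ^ a), map_mul]; simp [Algebra.smul_def]
    rw [Ideal.Quotient.eq_zero_iff_mem] at h2
    exact hP.isPrime.mem_of_pow_mem _ h2
  obtain ⟨hτ, hτ1, hcard⟩ := hT P hP hTP
  have hfinq : Finite (R ⧸ P) := Finite.of_equiv _ e.toEquiv
  let _ : Field (R ⧸ P) := Ideal.Quotient.field P
  let _ : Fintype (R ⧸ P) := Fintype.ofFinite _
  set q := Nat.card (R ⧸ P) with hq
  have hqpos : 0 < q := Nat.card_pos
  obtain ⟨C0, hC0, hC0c⟩ := hmq q (R ⧸ P) (Ideal.Quotient.mk P τ) (by rw [hq, Nat.card_eq_fintype_card])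
    (by rwa [Ne, Ideal.Quotient.eq_zero_iff_mem])
    (by rw [← map_one (Ideal.Quotient.mk P), ← map_add]; rwa [Ne, Ideal.Quotient.eq_zero_iff_mem])
  have hC0' : csCap (R := R) τ C0 := by
    intro x hx y hy z hz h
    refine hC0 x hx y hy z hz ?_
    funext i
    have := congrFun h i
    simp only [Pi.add_apply, Pi.smul_apply, Algebra.smul_def, smul_eq_mul] at this ⊢
    simpa using this
  obtain ⟨c, hc⟩ : mq q ∣ m := Finset.dvd_prod_of_mem _ (Finset.mem_range.2 (by omega))
  have hcpos : 0 < c := by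
    rcases Nat.eq_zero_or_pos c with h | h
    · rw [h, mul_zero] at hc; omega
    · exact h
  obtain ⟨C1, hC1, hC1c⟩ : ∃ C' : Finset (Fin m → R ⧸ P), csCap (R := R) τ C' ∧
      q ^ (2 * m + 1) ≤ C'.card ^ 3 := by
    rw [hc, mul_comm]
    exact cs_cap_pow τ (mq q) c hcpos q hqpos C0 hC0' hC0c
  let e' : (Fin m → R ⧸ P) ≃ₗ[R] (Fin m → N') := LinearEquiv.piCongrRight fun _ => e.symm
  have hC2 := cs_cap_map τ e' C1 hC1
  have hcardN' : Nat.card N' = q := Nat.card_congr e.toEquiv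
  have hq1 : 1 < q := by rw [hq]; exact Finite.one_lt_card
  have hcardN : Nat.card N = Nat.card N' * Nat.card (N ⧸ N') :=
    Submodule.card_eq_card_quotient_mul_card N'
  have hfinQ : Finite (N ⧸ N') := Finite.of_surjective _ (Submodule.Quotient.mk_surjective N')
  have hquotpos : 0 < Nat.card (N ⧸ N') := Nat.card_pos
  obtain ⟨C3, hC3, hC3c⟩ := ih (Nat.card (N ⧸ N')) (by rw [← hs, hcardN, hcardN']; nlinarith)
    (N ⧸ N') (by
      intro r hr
      obtain ⟨a, ha⟩ := hnil r hr
      refine ⟨a, fun v => ?_⟩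
      obtain ⟨v, rfl⟩ := Submodule.Quotient.mk_surjective N' v
      rw [← Submodule.Quotient.mk_smul, ha, Submodule.Quotient.mk_zero]) rfl
  obtain ⟨C, hC, hCc⟩ := cs_cap_ext τ m N' _ C3 hC2 hC3
  refine ⟨C, hC, ?_⟩
  rw [hCc, Finset.card_map, hcardN, hcardN', mul_pow, mul_pow]
  exact Nat.mul_le_mul hC1c hC3c
end CapModule

section CapCompanion
open Polynomial

lemma cs_cond (l : ℕ) (hl : l.Prime) (f : ℤ[X]) (h1 : ¬ (l : ℤ) ∣ f.leadingCoeff)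
    (h2 : ¬ (l : ℤ) ∣ f.eval 0) (h3 : ¬ (l : ℤ) ∣ f.eval (-1)) (P : Ideal ℤ[X])
    (hP : P.IsMaximal) (hT : ({C (l : ℤ), f} : Set ℤ[X]) ⊆ P) :
    (X : ℤ[X]) ∉ P ∧ (1 + X : ℤ[X]) ∉ P ∧ Nat.card (ℤ[X] ⧸ P) ≤ l ^ f.natDegree := by
  have hlP : C (l : ℤ) ∈ P := hT (by simp)
  have hfP : f ∈ P := hT (by simp)
  have hcop : ∀ a : ℤ, ¬ (l : ℤ) ∣ a → ∃ u v : ℤ, u * l + v * a = 1 := by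
    intro a ha
    exact ((Nat.prime_iff_prime_int.1 hl).irreducible.coprime_iff_not_dvd.2 ha)
  have hno : ∀ a : ℤ, ¬ (l : ℤ) ∣ a → C a ∉ P := by
    intro a ha haP
    obtain ⟨u, v, huv⟩ := hcop a ha
    apply hP.ne_top
    rw [Ideal.eq_top_iff_one]
    have : (1 : ℤ[X]) = C u * C (l : ℤ) + C v * C a := by
      rw [← C_mul, ← C_mul, ← C_add, huv, C_1]
    rw [this]
    exact P.add_mem (P.mul_mem_left _ hlP) (P.mul_mem_left _ haP)
  have hev : ∀ a : ℤ, X - C a ∈ P → C (f.eval a) ∈ P := by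
    intro a ha
    obtain ⟨g, hg⟩ := X_sub_C_dvd_sub_C_eval (a := a) (p := f)
    have : C (f.eval a) = f - (X - C a) * g := by rw [← hg]; ring
    rw [this]
    exact P.sub_mem hfP (P.mul_mem_right _ ha)
  refine ⟨fun h => hno _ h2 (hev 0 (by simpa using h)), fun h => hno _ h3 (hev (-1) (by
    have e : (X - C (-1) : ℤ[X]) = 1 + X := by simp [add_comm]
    rwa [e])), ?_⟩
  obtain ⟨u, v, huv⟩ := hcop _ h1
  have hf0 : f ≠ 0 := by rintro rfl; simp at h1
  set e := f.natDegree with he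
  set h : ℤ[X] := X ^ e + C v * f.eraseLead with hh
  have hCle : (C v * f.eraseLead).degree ≤ f.eraseLead.degree := by
    rw [← smul_eq_C_mul]; exact degree_smul_le _ _
  have hmon : h.Monic := by
    apply monic_X_pow_add
    refine lt_of_le_of_lt hCle ?_
    refine lt_of_lt_of_eq (degree_eraseLead_lt hf0) ?_
    rw [degree_eq_natDegree hf0]
  have hdeg : h.natDegree = e := by
    apply natDegree_eq_of_degree_eq_some
    rw [hh, degree_add_eq_left_of_degree_lt, degree_X_pow]
    rw [degree_X_pow]
    refine lt_of_le_of_lt hCle ?_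
    refine lt_of_lt_of_eq (degree_eraseLead_lt hf0) ?_
    rw [degree_eq_natDegree hf0]
  have hhP : h ∈ P := by
    have e1 : h = C v * f + (C u * X ^ e) * C (l : ℤ) := by
      have e2 : f = f.eraseLead + C f.leadingCoeff * X ^ e := by
        rw [C_mul_X_pow_eq_monomial, eraseLead_add_monomial_natDegree_leadingCoeff]
      have e3 : (1 : ℤ[X]) = C u * C (l : ℤ) + C v * C f.leadingCoeff := by
        rw [← C_mul, ← C_mul, ← C_add, huv, C_1]
      calc h = X ^ e * (C u * C (l : ℤ) + C v * C f.leadingCoeff) + C v * f.eraseLead := by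
            rw [← e3, mul_one]
        _ = C v * (f.eraseLead + C f.leadingCoeff * X ^ e) + (C u * X ^ e) * C (l : ℤ) := by ring
        _ = _ := by rw [← e2]
    rw [e1]
    exact P.add_mem (P.mul_mem_left _ hfP) (P.mul_mem_left _ hlP)
  let φ : (Fin e → Fin l) → ℤ[X] ⧸ P := fun r =>
    Ideal.Quotient.mk P (∑ i, C ((r i : ℕ) : ℤ) * X ^ (i : ℕ))
  have hφ : Function.Surjective φ := by
    intro g
    obtain ⟨g, rfl⟩ := Ideal.Quotient.mk_surjective g
    have hlpos : (0:ℤ) < l := by exact_mod_cast hl.pos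
    set d := g %ₘ h with hd
    have hgd : Ideal.Quotient.mk P g = Ideal.Quotient.mk P d := by
      rw [Ideal.Quotient.eq]
      have := modByMonic_add_div g h
      have e1 : g - d = h * (g /ₘ h) := by rw [← hd] at this; linear_combination -this
      rw [e1]
      exact P.mul_mem_right _ hhP
    have hdd : d.degree < e := by
      have := degree_modByMonic_lt g hmon
      rwa [degree_eq_natDegree hmon.ne_zero, hdeg] at this
    refine ⟨fun i => ⟨(d.coeff i % l).toNat, by
      have := Int.emod_lt_of_pos (d.coeff i) hlpos
      have := Int.emod_nonneg (d.coeff i) hlpos.ne'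
      omega⟩, ?_⟩
    rw [hgd]
    have hds : d = ∑ i : Fin e, C (d.coeff i) * X ^ (i : ℕ) := by
      rw [Fin.sum_univ_eq_sum_range (fun i => C (d.coeff i) * X ^ i) e]
      by_cases he0 : d = 0
      · simp [he0]
      · exact as_sum_range_C_mul_X_pow' _ ((natDegree_lt_iff_degree_lt he0).2 hdd)
    simp only [φ]
    conv_rhs => rw [hds]
    rw [map_sum, map_sum]
    refine Finset.sum_congr rfl fun i _ => ?_
    rw [Ideal.Quotient.eq, ← sub_mul]
    refine P.mul_mem_right _ ?_
    rw [Int.toNat_of_nonneg (Int.emod_nonneg _ hlpos.ne'), ← C_sub]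
    have e1 : d.coeff i % l - d.coeff i = l * (-(d.coeff i / l)) := by
      have := Int.emod_add_mul_ediv (d.coeff i) l
      linarith
    rw [e1, C_mul]
    exact P.mul_mem_right _ hlP
  have := Nat.card_le_card_of_surjective φ hφ
  simpa using this


/-- The companion endomorphism. -/
noncomputable def csComp (M k : ℕ) (f : ℤ[X]) (a' : ZMod M) :
    (Fin k → ZMod M) →ₗ[ℤ] (Fin k → ZMod M) where
  toFun y i := if h : (i : ℕ) + 1 < k then y ⟨i + 1, h⟩
    else - a' * ∑ l : Fin k, (f.coeff l : ZMod M) * y l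
  map_add' y y' := by
    funext i
    simp only [Pi.add_apply]
    split_ifs with h
    · rfl
    · rw [← mul_add, ← Finset.sum_add_distrib]
      simp only [mul_add]
  map_smul' r y := by
    funext i
    simp only [Pi.smul_apply, RingHom.id_apply, zsmul_eq_mul]
    split_ifs with h
    · rfl
    · rw [Finset.mul_sum, Finset.mul_sum, Finset.mul_sum]
      refine Finset.sum_congr rfl fun l _ => ?_
      ring

lemma csComp_lt (M k : ℕ) (f : ℤ[X]) (a' : ZMod M) (y : Fin k → ZMod M) (i : ℕ) (h : i + 1 < k) :
    csComp M k f a' y ⟨i, by omega⟩ = y ⟨i + 1, h⟩ := by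
  simp [csComp, h]

lemma csComp_last (M k : ℕ) (hk : 0 < k) (f : ℤ[X]) (a' : ZMod M) (y : Fin k → ZMod M) :
    csComp M k f a' y ⟨k - 1, by omega⟩ = - a' * ∑ l : Fin k, (f.coeff l : ZMod M) * y l := by
  have : ¬ (k - 1 + 1 < k) := by omega
  simp [csComp, this]

lemma csComp_pow (M k : ℕ) (f : ℤ[X]) (a' : ZMod M) (i : ℕ) : ∀ (y : Fin k → ZMod M) (j : ℕ)
    (h : i + j < k), ((csComp M k f a') ^ i) y ⟨j, by omega⟩ = y ⟨i + j, h⟩ := by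
  induction i with
  | zero => intro y j h; simp
  | succ i ih =>
    intro y j h
    rw [pow_succ, Module.End.mul_apply, ih _ _ (by omega), csComp_lt _ _ _ _ _ _ (by omega)]
    congr 2; omega

lemma csComp_aeval (M k : ℕ) (hk : 0 < k) (f : ℤ[X]) (hf : f.natDegree = k) (a' : ZMod M)
    (ha : (f.leadingCoeff : ZMod M) * a' = 1) : aeval (csComp M k f a') f = 0 := by
  set τ := csComp M k f a' with hτ
  have h0 : ∀ y, (aeval τ f) y ⟨0, hk⟩ = 0 := by
    intro y
    have e1 : (aeval τ f) y = ∑ i ∈ Finset.range (k + 1), f.coeff i • ((τ ^ i) y) := by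
      rw [aeval_eq_sum_range, hf, LinearMap.sum_apply]
      rfl
    rw [e1, Finset.sum_range_succ, Pi.add_apply, Finset.sum_apply]
    have e2 : ∑ i ∈ Finset.range k, (f.coeff i • (τ ^ i) y) ⟨0, hk⟩ =
        ∑ l : Fin k, (f.coeff l : ZMod M) * y l := by
      rw [Finset.sum_range]
      refine Finset.sum_congr rfl fun l _ => ?_
      rw [Pi.smul_apply, zsmul_eq_mul, csComp_pow M k f a' l y 0 (by omega)]
      rfl
    have e3 : (τ ^ k) y ⟨0, hk⟩ = - a' * ∑ l : Fin k, (f.coeff l : ZMod M) * y l := by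
      obtain ⟨k', rfl⟩ : ∃ k', k = k' + 1 := ⟨k - 1, by omega⟩
      rw [pow_succ, Module.End.mul_apply, csComp_pow _ _ f a' k' _ 0 (by omega)]
      exact csComp_last M (k' + 1) hk f a' y
    have e4 : f.coeff k = f.leadingCoeff := by rw [leadingCoeff, hf]
    rw [e2, Pi.smul_apply, e3, e4, zsmul_eq_mul]
    linear_combination -(∑ l : Fin k, (f.coeff l : ZMod M) * y l) * ha
  refine LinearMap.ext fun y => ?_
  funext i
  have h1 := csComp_pow M k f a' i ((aeval τ f) y) 0 (by omega)
  have h2 : (τ ^ (i : ℕ)) ((aeval τ f) y) = (aeval τ f) ((τ ^ (i : ℕ)) y) := by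
    rw [← Module.End.mul_apply, ← Module.End.mul_apply]
    congr 1
    have e : τ ^ (i : ℕ) = aeval τ (X ^ (i : ℕ) : ℤ[X]) := by simp
    rw [e, ← map_mul, ← map_mul, mul_comm]
  rw [← hτ, h2, h0] at h1
  simpa using h1.symm

lemma cs_compcap (l e : ℕ) (hl : l.Prime) : ∃ m : ℕ, 0 < m ∧ ∀ (f2 : ℤ[X]), f2.natDegree = e →
    ¬ (l : ℤ) ∣ f2.leadingCoeff → ¬ (l : ℤ) ∣ f2.eval 0 → ¬ (l : ℤ) ∣ f2.eval (-1) →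
    ∀ (s j k : ℕ) (hk : 0 < k), s * e = k →
    ∃ Cc : Finset (Fin m → Fin k → ZMod (l ^ j)),
      (l ^ j) ^ (k * (2 * m + 1)) ≤ Cc.card ^ 3 ∧
      ∀ x ∈ Cc, ∀ y ∈ Cc, ∀ z ∈ Cc,
        (∀ r, ∀ (i : ℕ) (h : i + 1 < k),
          x r ⟨i, by omega⟩ + y r ⟨i + 1, h⟩ = z r ⟨i, by omega⟩ + z r ⟨i + 1, h⟩) →
        (∀ r, ((f2 ^ s).leadingCoeff : ZMod (l ^ j)) * x r ⟨k - 1, by omega⟩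
            - ∑ i : Fin k, ((f2 ^ s).coeff i : ZMod (l ^ j)) * y r i =
          ((f2 ^ s).leadingCoeff : ZMod (l ^ j)) * z r ⟨k - 1, by omega⟩
            - ∑ i : Fin k, ((f2 ^ s).coeff i : ZMod (l ^ j)) * z r i) → x = y ∧ y = z := by
  obtain ⟨m, hm, hcap⟩ := cs_modcap (l ^ e)
  refine ⟨m, hm, ?_⟩
  intro f2 he h1 h2 h3 s j k hk hsk
  have hne : NeZero (l ^ j) := ⟨(pow_pos hl.pos j).ne'⟩
  set M := l ^ j with hM
  set f := f2 ^ s with hf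
  have hfk : f.natDegree = k := by rw [hf, natDegree_pow, he, hsk]
  obtain ⟨a', ha'⟩ : ∃ a' : ZMod M, (f.leadingCoeff : ZMod M) * a' = 1 := by
    have hu : IsUnit ((f.leadingCoeff : ℤ) : ZMod M) := by
      rw [ZMod.coe_int_isUnit_iff_isCoprime, hf, leadingCoeff_pow, hM]
      push_cast
      exact ((Nat.prime_iff_prime_int.1 hl).irreducible.coprime_iff_not_dvd.2 h1).pow
    obtain ⟨u, hu⟩ := hu
    exact ⟨(u⁻¹ : (ZMod M)ˣ), by rw [← hu]; simp⟩
  set τ := csComp M k f a' with hτ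
  let inst : Module ℤ[X] (Fin k → ZMod M) := Module.compHom _ (aeval (R := ℤ) τ).toRingHom
  have hsm : ∀ (g : ℤ[X]) (v : Fin k → ZMod M), g • v = (aeval τ g) v := fun g v => rfl
  obtain ⟨Cc, hC, hCc⟩ := hcap ℤ[X] X {C (l : ℤ), f2} (by
    intro P hP hT
    rw [← he]
    exact cs_cond l hl f2 h1 h2 h3 P hP hT) (Fin k → ZMod M) (by
    intro r hr
    rcases hr with rfl | rfl
    · refine ⟨j, fun v => ?_⟩
      rw [hsm, ← C_pow, aeval_C]
      funext i
      have : ((l : ℤ) ^ j : ℤ) = (M : ℕ) := by rw [hM]; push_cast; rfl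
      rw [this]
      simp [Algebra.algebraMap_eq_smul_one]
    · refine ⟨s, fun v => ?_⟩
      rw [hsm, ← hf, csComp_aeval M k hk f hfk a' ha']
      rfl)
  refine ⟨Cc, ?_, ?_⟩
  · refine le_trans (le_of_eq ?_) hCc
    rw [Nat.card_eq_fintype_card, Fintype.card_fun, ZMod.card, Fintype.card_fin, pow_mul]
  · intro x hx y hy z hz hr1 hr2
    apply hC x hx y hy z hz
    funext r
    have hX : ∀ v : Fin k → ZMod M, (X : ℤ[X]) • v = τ v := fun v => by rw [hsm, aeval_X]
    simp only [Pi.add_apply, Pi.smul_apply, add_smul, one_smul]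
    rw [hX, hX]
    funext i
    simp only [Pi.add_apply]
    by_cases hi : (i : ℕ) + 1 < k
    · have := hr1 r i hi
      rw [show i = ⟨(i : ℕ), by omega⟩ from rfl, csComp_lt M k f a' _ _ hi, csComp_lt M k f a' _ _ hi]
      exact this
    · have hi' : i = ⟨k - 1, by omega⟩ := Fin.ext (by simp; omega)
      rw [hi', csComp_last M k hk, csComp_last M k hk]
      have := hr2 r
      have h5 := congrArg (fun t => a' * t) this
      simp only at h5
      linear_combination h5 + (z r ⟨k - 1, by omega⟩ - x r ⟨k - 1, by omega⟩) * ha'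

end CapCompanion

section CapAssembly
open Polynomial

lemma cs_rows {F : Type} [Field F] (lam : F) (k m M H : ℕ) (hH : 4 ≤ H)
    (x y z : Fin m → Fin k → ZMod M)
    (h : ∀ α β : Fin k → ℤ, ∑ i, (|α i| + |β i| + |α i + β i|) ≤ (H : ℤ) →
      ∑ i, (β i : F) * lam ^ (i : ℕ) = lam * ∑ i, (α i : F) * lam ^ (i : ℕ) →
      ∀ j, ∑ i, ((α i : ZMod M) * x j i + (β i : ZMod M) * y j i
        - ((α i : ZMod M) + (β i : ZMod M)) * z j i) = 0) :
    ∀ r, ∀ (i : ℕ) (h : i + 1 < k),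
      x r ⟨i, by omega⟩ + y r ⟨i + 1, h⟩ = z r ⟨i, by omega⟩ + z r ⟨i + 1, h⟩ := by
  intro r i hi
  have h1 := h (Pi.single ⟨i, by omega⟩ 1) (Pi.single ⟨i + 1, hi⟩ 1) ?_ ?_ r
  · simp only [add_mul, Finset.sum_sub_distrib, Finset.sum_add_distrib, Pi.single_apply,
      Int.cast_ite, Int.cast_one, Int.cast_zero, ite_mul, one_mul, zero_mul,
      Finset.sum_ite_eq', Finset.mem_univ, if_true] at h1
    linear_combination h1
  · have e : ∀ i' : Fin k, ∑ i, |(Pi.single i' 1 : Fin k → ℤ) i| = 1 := by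
      intro i'
      simp only [Pi.single_apply, apply_ite abs, abs_one, abs_zero,
        Finset.sum_ite_eq', Finset.mem_univ, if_true]
    calc _ ≤ ∑ i', (2 * |(Pi.single ⟨i, by omega⟩ 1 : Fin k → ℤ) i'|
          + 2 * |(Pi.single ⟨i + 1, hi⟩ 1 : Fin k → ℤ) i'|) := by
          refine Finset.sum_le_sum fun i' _ => ?_
          have := abs_add_le ((Pi.single ⟨i, by omega⟩ 1 : Fin k → ℤ) i')
            ((Pi.single ⟨i + 1, hi⟩ 1 : Fin k → ℤ) i')
          linarith
      _ = 4 := by rw [Finset.sum_add_distrib, ← Finset.mul_sum, ← Finset.mul_sum, e, e]; rfl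
      _ ≤ (H : ℤ) := by exact_mod_cast hH
  · simp only [Pi.single_apply,
      Int.cast_ite, Int.cast_one, Int.cast_zero, ite_mul, one_mul, zero_mul,
      Finset.sum_ite_eq', Finset.mem_univ, if_true]
    ring

lemma cs_lastrow {F : Type} [Field F] (lam : F) (k m M H : ℕ) (hk : 0 < k) (f : ℤ[X])
    (hf : f.natDegree = k) (hr : aeval lam f = 0)
    (hH : 2 * |f.leadingCoeff| + 2 * ∑ i : Fin k, |f.coeff i| ≤ (H : ℤ))
    (x y z : Fin m → Fin k → ZMod M)
    (h : ∀ α β : Fin k → ℤ, ∑ i, (|α i| + |β i| + |α i + β i|) ≤ (H : ℤ) →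
      ∑ i, (β i : F) * lam ^ (i : ℕ) = lam * ∑ i, (α i : F) * lam ^ (i : ℕ) →
      ∀ j, ∑ i, ((α i : ZMod M) * x j i + (β i : ZMod M) * y j i
        - ((α i : ZMod M) + (β i : ZMod M)) * z j i) = 0) :
    ∀ r, (f.leadingCoeff : ZMod M) * x r ⟨k - 1, by omega⟩
            - ∑ i : Fin k, (f.coeff i : ZMod M) * y r i =
          (f.leadingCoeff : ZMod M) * z r ⟨k - 1, by omega⟩
            - ∑ i : Fin k, (f.coeff i : ZMod M) * z r i := by
  intro r
  have h1 := h (Pi.single ⟨k - 1, by omega⟩ f.leadingCoeff) (fun i => - f.coeff i) ?_ ?_ r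
  · simp only [add_mul, Finset.sum_sub_distrib, Finset.sum_add_distrib, Pi.single_apply,
      Int.cast_ite, Int.cast_neg, Int.cast_zero, ite_mul, neg_mul, zero_mul,
      Finset.sum_ite_eq', Finset.mem_univ, if_true, Finset.sum_neg_distrib] at h1
    linear_combination h1
  · have e : ∀ i' : Fin k, ∑ i, |(Pi.single i' f.leadingCoeff : Fin k → ℤ) i|
        = |f.leadingCoeff| := by
      intro i'
      simp only [Pi.single_apply, apply_ite abs, abs_zero,
        Finset.sum_ite_eq', Finset.mem_univ, if_true]
    calc _ ≤ ∑ i' : Fin k, (2 * |(Pi.single ⟨k - 1, by omega⟩ f.leadingCoeff : Fin k → ℤ) i'|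
          + 2 * |f.coeff i'|) := by
          refine Finset.sum_le_sum fun i' _ => ?_
          have := abs_add_le ((Pi.single ⟨k - 1, by omega⟩ f.leadingCoeff : Fin k → ℤ) i')
            (- f.coeff i')
          rw [abs_neg] at *
          linarith
      _ = _ := by rw [Finset.sum_add_distrib, ← Finset.mul_sum, ← Finset.mul_sum, e]
      _ ≤ (H : ℤ) := hH
  · simp only [Pi.single_apply,
      Int.cast_ite, Int.cast_neg, Int.cast_zero, ite_mul, neg_mul, zero_mul,
      Finset.sum_ite_eq', Finset.mem_univ, if_true, Finset.sum_neg_distrib]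
    rw [aeval_eq_sum_range, hf, Finset.sum_range_succ, Finset.sum_range] at hr
    simp only [zsmul_eq_mul] at hr
    have e4 : f.coeff k = f.leadingCoeff := by rw [leadingCoeff, hf]
    have e5 : lam * (lam ^ (k - 1)) = lam ^ k := by
      rw [← pow_succ']; congr 1; omega
    rw [e4] at hr
    linear_combination -hr - (f.leadingCoeff : F) * e5

/-- Row caps for the companion system. -/
def csRowCap (k m M : ℕ) (hk : 0 < k) (f : ℤ[X]) (C : Finset (Fin m → Fin k → ZMod M)) : Prop :=
  ∀ x ∈ C, ∀ y ∈ C, ∀ z ∈ C,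
        (∀ r, ∀ (i : ℕ) (h : i + 1 < k),
          x r ⟨i, by omega⟩ + y r ⟨i + 1, h⟩ = z r ⟨i, by omega⟩ + z r ⟨i + 1, h⟩) →
        (∀ r, (f.leadingCoeff : ZMod M) * x r ⟨k - 1, by omega⟩
            - ∑ i : Fin k, (f.coeff i : ZMod M) * y r i =
          (f.leadingCoeff : ZMod M) * z r ⟨k - 1, by omega⟩
            - ∑ i : Fin k, (f.coeff i : ZMod M) * z r i) → x = y ∧ y = z

lemma cs_sepB {F : Type} [Field F] (lam : F) (k m M H : ℕ) (hk : 0 < k) (f : ℤ[X])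
    (hf : f.natDegree = k) (hr : aeval lam f = 0) (hH4 : 4 ≤ H)
    (hH : 2 * |f.leadingCoeff| + 2 * ∑ i : Fin k, |f.coeff i| ≤ (H : ℤ))
    (C : Finset (Fin m → Fin k → ZMod M)) (hC : csRowCap k m M hk f C) :
    csSep lam k m M H C := fun x hx y hy z hz h =>
  hC x hx y hy z hz (cs_rows lam k m M H hH4 x y z h) (cs_lastrow lam k m M H hk f hf hr hH x y z h)

lemma cs_sepA (k m M : ℕ) [NeZero M] (hk : 0 < k) (f : ℤ[X])
    (C₀ : Finset (Fin m → Fin k → ZMod M)) (hC₀ : csRowCap k m M hk f C₀) :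
    ∃ C : Finset (Fin m → Fin k → ZMod M), C₀.card ≤ C.card * M ^ (2 * m) ∧
      ∀ {F : Type} [Field F] (lam : F) (H : ℕ), 4 ≤ H → csSep lam k m M H C := by
  classical
  let φ : (Fin m → Fin k → ZMod M) → (Fin m → ZMod M × ZMod M) := fun x r =>
    (x r ⟨k - 1, by omega⟩, ∑ i : Fin k, (f.coeff i : ZMod M) * x r i)
  obtain ⟨t, -, ht⟩ : ∃ t ∈ (Finset.univ : Finset (Fin m → ZMod M × ZMod M)),
      C₀.card ≤ (C₀.filter fun x => φ x = t).card * M ^ (2 * m) := by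
    by_contra hcon
    push Not at hcon
    have h1 := Finset.card_eq_sum_card_fiberwise (f := φ) (s := C₀)
      (t := Finset.univ) (fun _ _ => by simp)
    have h2 := Finset.sum_lt_sum_of_nonempty (s := (Finset.univ : Finset (Fin m → ZMod M × ZMod M)))
      ⟨0, by simp⟩ hcon
    rw [← Finset.sum_mul, ← h1, Finset.sum_const, Finset.card_univ, Fintype.card_fun,
      Fintype.card_prod, ZMod.card, Fintype.card_fin, smul_eq_mul, ← pow_two, ← pow_mul,
      mul_comm] at h2
    exact lt_irrefl _ h2
  refine ⟨C₀.filter fun x => φ x = t, ht, ?_⟩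
  intro F _ lam H hH x hx y hy z hz h
  rw [Finset.mem_filter] at hx hy hz
  refine hC₀ x hx.1 y hy.1 z hz.1 (cs_rows lam k m M H hH x y z h) fun r => ?_
  have h1 : x r ⟨k - 1, by omega⟩ = z r ⟨k - 1, by omega⟩ :=
    congrArg Prod.fst (congrFun (hx.2.trans hz.2.symm) r)
  have h2 : ∑ i : Fin k, (f.coeff i : ZMod M) * y r i = ∑ i : Fin k, (f.coeff i : ZMod M) * z r i :=
    congrArg Prod.snd (congrFun (hy.2.trans hz.2.symm) r)
  rw [h1, h2]

/-- Existence of row caps of the right size, free version. -/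
lemma cs_freecap (l : ℕ) (hl : l.Prime) : ∃ m : ℕ, 0 < m ∧ ∀ j : ℕ,
    ∃ C : Finset (Fin m → Fin (12 * m) → ZMod (l ^ j)),
      (l ^ j) ^ (2 * ((12 * m) * m) + 6 * m) ≤ C.card ^ 3 ∧
      ∀ {F : Type} [Field F] (lam : F) (H : ℕ), 4 ≤ H → csSep lam (12 * m) m (l ^ j) H C := by
  obtain ⟨m, hm, h⟩ := cs_compcap l 2 hl
  refine ⟨m, hm, fun j => ?_⟩
  have hne : NeZero (l ^ j) := ⟨(pow_pos hl.pos j).ne'⟩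
  have hd : (X ^ 2 + X + 1 : ℤ[X]).natDegree = 2 := by compute_degree!
  have hl1 : ¬ (l : ℤ) ∣ 1 := by
    intro h
    have := Int.natAbs_dvd_natAbs.2 h
    simp at this
    exact hl.one_lt.ne' this
  have hlc : (X ^ 2 + X + 1 : ℤ[X]).leadingCoeff = 1 := by
    rw [leadingCoeff, hd]; simp [coeff_X, coeff_one]
  obtain ⟨C₀, hc, hcap⟩ := h (X ^ 2 + X + 1) hd (by rw [hlc]; exact hl1)
    (by simpa using hl1) (by simpa using hl1) (6 * m) j (12 * m) (by omega) (by ring)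
  obtain ⟨C, h1, h2⟩ := cs_sepA (12 * m) m (l ^ j) (by omega) _ C₀ hcap
  refine ⟨C, ?_, h2⟩
  have h3 : C₀.card ^ 3 ≤ C.card ^ 3 * (l ^ j) ^ (6 * m) := by
    calc C₀.card ^ 3 ≤ (C.card * (l ^ j) ^ (2 * m)) ^ 3 := Nat.pow_le_pow_left h1 3
      _ = _ := by rw [mul_pow, ← pow_mul]; congr 2; ring
  have h4 := hc.trans h3
  have h5 : (l ^ j) ^ (12 * m * (2 * m + 1)) =
      (l ^ j) ^ (2 * ((12 * m) * m) + 6 * m) * (l ^ j) ^ (6 * m) := by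
    rw [← pow_add]; congr 1; ring
  rw [h5] at h4
  exact Nat.le_of_mul_le_mul_right h4 (pow_pos (pow_pos hl.pos j) _)

end CapAssembly

section CapClasses
open Polynomial

/-- A class of pairs (field, ratio) with uniform gadgets. -/
def csGood (Q : ∀ (F : Type) [Field F], F → Prop) : Prop :=
  ∃ c : ℝ, 0 < c ∧ ∀ (F : Type) [Field F] [Fintype F] (lam : F), lam ≠ 0 → 1 + lam ≠ 0 →
    Q F lam → csGadget F lam c

lemma csGadget_mono {F : Type} [Field F] {lam : F} {c c' : ℝ} (h : csGadget F lam c)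
    (hc : c' ≤ c) : csGadget F lam c' := by
  intro n
  obtain ⟨Ω, i1, i2, S, μ, ρ, h1, h2⟩ := h n
  exact ⟨Ω, i1, i2, S, μ, ρ, hc.trans h1, h2⟩

lemma csGood_mono {Q Q' : ∀ (F : Type) [Field F], F → Prop} (h : csGood Q)
    (hQ : ∀ (F : Type) [Field F] [Fintype F] (lam : F), lam ≠ 0 → 1 + lam ≠ 0 →
      Q' F lam → Q F lam) : csGood Q' := by
  obtain ⟨c, hc, h⟩ := h
  exact ⟨c, hc, fun F _ _ lam h1 h2 h3 => h F lam h1 h2 (hQ F lam h1 h2 h3)⟩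

lemma csGood_or {Q Q' : ∀ (F : Type) [Field F], F → Prop} (h : csGood Q) (h' : csGood Q') :
    csGood (fun F _ lam => Q F lam ∨ Q' F lam) := by
  obtain ⟨c, hc, h⟩ := h
  obtain ⟨c', hc', h'⟩ := h'
  refine ⟨min c c', lt_min hc hc', fun F _ _ lam h1 h2 h3 => ?_⟩
  rcases h3 with h3 | h3
  · exact csGadget_mono (h F lam h1 h2 h3) (min_le_left _ _)
  · exact csGadget_mono (h' F lam h1 h2 h3) (min_le_right _ _)

lemma csGood_biUnion {ι : Type} (s : Finset ι) (Q : ι → ∀ (F : Type) [Field F], F → Prop)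
    (h : ∀ i ∈ s, csGood (Q i)) : csGood (fun F _ lam => ∃ i ∈ s, Q i F lam) := by
  classical
  induction s using Finset.induction_on with
  | empty => exact ⟨1, one_pos, fun F _ _ lam h1 h2 h3 => by simp at h3⟩
  | insert i s hi ih =>
    refine csGood_mono (csGood_or (h i (by simp)) (ih fun j hj => h j (by simp [hj]))) ?_
    intro F _ _ lam _ _ h3
    obtain ⟨j, hj, h4⟩ := h3
    rw [Finset.mem_insert] at hj
    rcases hj with rfl | hj
    · exact Or.inl h4
    · exact Or.inr ⟨j, hj, h4⟩

lemma cs_NR_minpoly {p : ℕ} [Fact p.Prime] {F : Type} [Field F] [Fintype F] [Algebra (ZMod p) F]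
    (lam : F) (k : ℕ) (hk : k ≤ (minpoly (ZMod p) lam).natDegree) : csNR lam k p := by
  intro a ha h0
  set q : (ZMod p)[X] := ∑ i : Fin k, C ((a i : ℤ) : ZMod p) * X ^ (i : ℕ) with hq
  have hdeg : q.degree < k := by
    refine (Polynomial.degree_sum_fin_lt (fun i : Fin k => ((a i : ℤ) : ZMod p)))
  have hev : aeval lam q = 0 := by
    rw [hq, map_sum, ← h0]
    refine Finset.sum_congr rfl fun i _ => ?_
    simp
  have hq0 : q = 0 := by
    by_contra hne
    have h1 := minpoly.degree_le_of_ne_zero (ZMod p) lam hne hev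
    have h2 : ((minpoly (ZMod p) lam).natDegree : WithBot ℕ) ≤ (minpoly (ZMod p) lam).degree := by
      rw [degree_eq_natDegree (minpoly.ne_zero (Algebra.IsIntegral.isIntegral lam))]
    have h3 : ((k : ℕ) : WithBot ℕ) ≤ ((minpoly (ZMod p) lam).natDegree : WithBot ℕ) := by
      exact_mod_cast hk
    exact absurd (lt_of_le_of_lt (h3.trans (h2.trans h1)) hdeg) (lt_irrefl _)
  funext i
  have h1 : q.coeff i = ((a i : ℤ) : ZMod p) := by
    rw [hq, finsetSum_coeff]
    simp only [coeff_C_mul, coeff_X_pow]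
    rw [Finset.sum_eq_single i]
    · simp
    · intro j _ hj
      rw [if_neg (fun h => hj (Fin.ext h.symm)), mul_zero]
    · simp
  rw [hq0, coeff_zero] at h1
  have h2 := (ZMod.intCast_zmod_eq_zero_iff_dvd (a i) p).1 h1.symm
  exact Int.eq_zero_of_abs_lt_dvd h2 (ha i)

lemma cs_size_exact {m k p : ℕ} (hp : 0 < p) (n : ℕ) (c : ℕ) (hn : 2 * (k * m) ≤ n)
    (h : p ^ n ≤ c ^ 3) : (1 : ℝ) ^ (k * m) * (p : ℝ) ^ (2 * (k * m)) ≤ (c : ℝ) ^ 3 := by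
  rw [one_pow, one_mul]
  have : p ^ (2 * (k * m)) ≤ c ^ 3 := (Nat.pow_le_pow_right hp hn).trans h
  exact_mod_cast this

lemma csGood_char (p : ℕ) (hp : p.Prime) : csGood (fun F _ _ => (p : F) = 0) := by
  have hpf : Fact p.Prime := ⟨hp⟩
  have hp0 : NeZero p := ⟨hp.pos.ne'⟩
  have hp2 : (2 : ℝ) ≤ 1 * (p : ℝ) := by rw [one_mul]; exact_mod_cast hp.two_le
  obtain ⟨m, hm, hfree⟩ := cs_freecap p hp
  choose m' hm' hcc using fun e => cs_compcap p e hp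
  have main : csGood (fun F _ lam =>
      ((∃ i : Algebra (ZMod p) F, 12 * m ≤ (minpoly (ZMod p) lam).natDegree) ∨
      ∃ e ∈ Finset.range (12 * m), ∃ i : Algebra (ZMod p) F,
        (minpoly (ZMod p) lam).natDegree = e)) := by
    refine csGood_or ?_ (csGood_biUnion _ _ fun e _ => ?_)
    · refine ⟨((p : ℝ) ^ ((12 * m) * m))⁻¹, by have := hp.pos; positivity, ?_⟩
      rintro F _ _ lam h1 h2 ⟨i, hi⟩
      have hch : CharP F p := charP_of_injective_algebraMap (algebraMap (ZMod p) F).injective p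
      have hx := hfree 1
      rw [pow_one] at hx
      obtain ⟨C, hC, hsep⟩ := hx
      exact cs_lemmaG (p := p) lam (12 * m) m p 4 1 (by omega) hm (by norm_num) 1 1 one_pos le_rfl
        hp2 one_pos _ (cs_cells_exact p 4) (cs_NR_minpoly lam _ hi) C (hsep lam 4 le_rfl)
        (cs_size_exact hp.pos _ _ (by omega) hC)
    · refine ⟨((p : ℝ) ^ (e * m' e))⁻¹, by have := hp.pos; positivity, ?_⟩
      rintro F _ _ lam h1 h2 ⟨i, hi⟩
      have hch : CharP F p := charP_of_injective_algebraMap (algebraMap (ZMod p) F).injective p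
      have hInteg : IsIntegral (ZMod p) lam := Algebra.IsIntegral.isIntegral lam
      have he : 0 < e := by rw [← hi]; exact minpoly.natDegree_pos hInteg
      have hlift : minpoly (ZMod p) lam ∈ lifts (Int.castRingHom (ZMod p)) := by
        rw [lifts_iff_coeff_lifts]
        intro n
        exact ⟨_, ZMod.intCast_zmod_cast _⟩
      obtain ⟨f, hf1, hf2, hf3⟩ := lifts_and_natDegree_eq_and_monic hlift (minpoly.monic hInteg)
      have hroot : ∀ r : ℤ, lam ≠ (r : F) → ¬ (p : ℤ) ∣ f.eval r := by
        intro r hr hd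
        apply hr
        have h3 : (minpoly (ZMod p) lam).IsRoot (r : ZMod p) := by
          rw [IsRoot.def, ← hf1, eval_intCast_map]
          exact (ZMod.intCast_zmod_eq_zero_iff_dvd _ p).2 hd
        rw [← minpoly.root hInteg h3]
        simp
      have hev : aeval lam f = 0 := by
        have h3 := minpoly.aeval (ZMod p) lam
        rw [← hf1, aeval_def, eval₂_map] at h3
        rw [aeval_def, ← h3]
        congr 1
        exact RingHom.ext_int _ _
      have hx := hcc e f (hf2.trans hi) (by
        rw [hf3.leadingCoeff]
        intro h
        have := Int.natAbs_dvd_natAbs.2 h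
        simp at this
        exact hp.one_lt.ne' this) (by simpa using hroot 0 (by simpa using h1))
        (hroot (-1) (by
          intro h; apply h2; rw [h]; simp)) 1 1 e he (one_mul e)
      rw [pow_one p, pow_one f] at hx
      obtain ⟨C, hC, hcap⟩ := hx
      set H : ℕ := 4 + (2 * |f.leadingCoeff| + 2 * ∑ i : Fin e, |f.coeff i|).toNat with hH
      exact cs_lemmaG (p := p) lam e (m' e) p H 1 he (hm' e) (by omega) 1 1 one_pos le_rfl
        hp2 one_pos _ (cs_cells_exact p H) (cs_NR_minpoly lam _ hi.ge) C
        (cs_sepB lam e (m' e) p H he f (hf2.trans hi) hev (by omega) (by omega) C hcap)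
        (cs_size_exact hp.pos _ _ (by nlinarith) hC)
  refine csGood_mono main ?_
  intro F _ _ lam _ _ h0
  have hch : CharP F p := by
    obtain ⟨q, hq⟩ := CharP.exists F
    have hqp : q.Prime := CharP.char_is_prime F q
    have := (CharP.cast_eq_zero_iff F q p).1 h0
    rw [(Nat.prime_dvd_prime_iff_eq hqp hp).1 this] at hq
    exact hq
  let i : Algebra (ZMod p) F := ZMod.algebra F p
  by_cases h : 12 * m ≤ (minpoly (ZMod p) lam).natDegree
  · exact Or.inl ⟨i, h⟩
  · exact Or.inr ⟨_, Finset.mem_range.2 (not_le.1 h), i, rfl⟩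

lemma csGood_lt (N : ℕ) : csGood (fun F _ _ => ∃ p < N, p.Prime ∧ (p : F) = 0) := by
  refine csGood_mono (csGood_biUnion ((Finset.range N).filter Nat.Prime)
    (fun p F _ _ => (p : F) = 0) fun p hp => csGood_char p (by simpa using (Finset.mem_filter.1 hp).2)) ?_
  rintro F _ _ lam _ _ ⟨p, h1, h2, h3⟩
  exact ⟨p, by simp [h1, h2], h3⟩

lemma csGood_int (n : ℤ) (hn : n ≠ 0) : csGood (fun F _ _ => (n : F) = 0) := by
  refine csGood_mono (csGood_lt (n.natAbs + 1)) ?_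
  intro F _ _ lam _ _ h
  obtain ⟨q, hq⟩ := CharP.exists F
  have hqp : q.Prime := CharP.char_is_prime F q
  have h1 := (CharP.intCast_eq_zero_iff F q n).1 h
  have h2 := Nat.le_of_dvd (Int.natAbs_pos.2 hn) (Int.natAbs_dvd_natAbs.2 h1)
  simp at h2
  exact ⟨q, by omega, hqp, CharP.cast_eq_zero F q⟩

lemma csGood_badNR (k M : ℕ)
    (h : ∀ G : ℤ[X], G ≠ 0 → G.natDegree < k → csGood (fun F _ lam => aeval lam G = 0)) :
    csGood (fun F _ lam => ¬ csNR lam k M) := by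
  classical
  rcases Nat.eq_zero_or_pos k with rfl | hk
  · exact ⟨1, one_pos, fun F _ _ lam _ _ h3 => absurd (fun a _ _ => _root_.funext fun i : Fin 0 => i.elim0) h3⟩
  let g : (Fin k → ℤ) → ℤ[X] := fun a => ∑ i : Fin k, C (a i) * X ^ (i : ℕ)
  have hco : ∀ a, ∀ i : Fin k, (g a).coeff i = a i := by
    intro a i
    simp only [g, finsetSum_coeff, coeff_C_mul, coeff_X_pow]
    rw [Finset.sum_eq_single i]
    · simp
    · intro j _ hj
      rw [if_neg (fun h => hj (Fin.ext h.symm)), mul_zero]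
    · simp
  refine csGood_mono (csGood_biUnion
    ((Fintype.piFinset (fun _ : Fin k => Finset.Ioo (-(M : ℤ)) M)).filter fun a => a ≠ 0)
    (fun a F _ lam => aeval lam (g a) = 0) fun a ha => ?_) ?_
  · have hg0 : g a ≠ 0 := by
      intro h0
      apply (Finset.mem_filter.1 ha).2
      funext i
      rw [← hco a i, h0]; simp
    refine h _ hg0 ?_
    rw [natDegree_lt_iff_degree_lt hg0]
    exact Polynomial.degree_sum_fin_lt _
  · intro F _ _ lam _ _ hn
    unfold csNR at hn
    push Not at hn
    obtain ⟨a, h1, h2, h3⟩ := hn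
    refine ⟨a, ?_, ?_⟩
    · simp only [Finset.mem_filter, Fintype.mem_piFinset, Finset.mem_Ioo]
      exact ⟨fun i => abs_lt.1 (h1 i), h3⟩
    · simp only [g, map_sum, ← h2]
      refine Finset.sum_congr rfl fun i _ => ?_
      simp

/-- Gadgets from arcs, outside of the exceptional classes. -/
lemma csGood_arc (Q : ∀ (F : Type) [Field F], F → Prop) (k m M H : ℕ) (hM : 8 ≤ M) (hk : 0 < k)
    (hm : 0 < m) (hH : 2 ≤ H) (hNR : csGood (fun F _ lam => ¬ csNR lam k M))
    (C : Finset (Fin m → Fin k → ZMod M))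
    (hC : ∀ (F : Type) [Field F] (lam : F), lam ≠ 0 → 1 + lam ≠ 0 → Q F lam →
      csSep lam k m M H C)
    (hsize : (4 * (2 * (H + 7)) ^ 3) ^ (k * m) * M ^ (2 * (k * m)) ≤ C.card ^ 3) : csGood Q := by
  have hM0 : NeZero M := ⟨by omega⟩
  have hgood : csGood (fun F _ lam => Q F lam ∧ csNR lam k M ∧
      ∃ p : ℕ, p.Prime ∧ (p : F) = 0 ∧ M * (H + 7) * (H + 2) ≤ p) := by
    refine ⟨((M : ℝ) ^ (k * m))⁻¹, by positivity, ?_⟩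
    rintro F _ _ lam h1 h2 ⟨hQ, hN, p, hp, hp0, hpM⟩
    have hpf : Fact p.Prime := ⟨hp⟩
    have hch : CharP F p := by
      obtain ⟨q, hq⟩ := CharP.exists F
      have hqp : q.Prime := CharP.char_is_prime F q
      have := (CharP.cast_eq_zero_iff F q p).1 hp0
      rw [(Nat.prime_dvd_prime_iff_eq hqp hp).1 this] at hq
      exact hq
    refine cs_lemmaG (p := p) lam k m M H _ hk hm hH (4 * (2 * (H + 7)) ^ 3) (1 / 4) (by norm_num)
      (by norm_num) ?_ (by positivity) _ (cs_cells_arc p M H (by omega) hpM) hN C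
      (hC F lam h1 h2 hQ) (by exact_mod_cast hsize)
    have : (8 : ℝ) ≤ M := by exact_mod_cast hM
    linarith
  refine csGood_mono (csGood_or hgood (csGood_or hNR (csGood_lt (M * (H + 7) * (H + 2))))) ?_
  intro F _ _ lam _ _ hQ
  by_cases hN : csNR lam k M
  · obtain ⟨q, hq⟩ := CharP.exists F
    have hqp : q.Prime := CharP.char_is_prime F q
    by_cases hqM : M * (H + 7) * (H + 2) ≤ q
    · exact Or.inl ⟨hQ, hN, q, hqp, CharP.cast_eq_zero F q, hqM⟩
    · exact Or.inr (Or.inr ⟨q, not_le.1 hqM, hqp, CharP.cast_eq_zero F q⟩)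
  · exact Or.inr (Or.inl hN)

lemma csGood_poly (N : ℕ) : ∀ P : ℤ[X], P ≠ 0 → P.natDegree = N →
    csGood (fun F _ lam => aeval lam P = 0) := by
  induction N using Nat.strong_induction_on with
  | _ N ih =>
  intro P hP hN
  have hfac : ∀ r : ℤ, (∀ (F : Type) [Field F] (lam : F), lam ≠ 0 → 1 + lam ≠ 0 → lam ≠ (r : F)) →
      P.eval r = 0 → csGood (fun F _ lam => aeval lam P = 0) := by
    intro r hr h0
    obtain ⟨g, hg⟩ := dvd_iff_isRoot.2 h0
    have hg0 : g ≠ 0 := by rintro rfl; exact hP (by simpa using hg)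
    have hd : N = 1 + g.natDegree := by
      rw [← hN, hg, natDegree_mul (X_sub_C_ne_zero r) hg0, natDegree_X_sub_C]
    refine csGood_mono (ih g.natDegree (by omega) g hg0 rfl) ?_
    intro F _ _ lam h1 h2 h3
    rw [hg, map_mul] at h3
    refine (mul_eq_zero.1 h3).resolve_left ?_
    simpa [sub_eq_zero] using hr F lam h1 h2
  by_cases h0 : P.eval 0 = 0
  · exact hfac 0 (fun F _ lam h1 _ => by simpa using h1) h0
  by_cases h1 : P.eval (-1) = 0
  · refine hfac (-1) (fun F _ lam _ h2 h => h2 ?_) h1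
    rw [h]; simp
  rcases Nat.eq_zero_or_pos N with rfl | hNpos
  · have hc := eq_C_of_natDegree_eq_zero hN
    refine csGood_mono (csGood_int (P.coeff 0) ?_) ?_
    · intro h; rw [h] at hc; exact hP (by simpa using hc)
    · intro F _ _ lam _ _ h3
      rw [hc] at h3
      simpa using h3
  obtain ⟨l, hlN, hl⟩ := Nat.exists_infinite_primes
    (P.leadingCoeff.natAbs + (P.eval 0).natAbs + (P.eval (-1)).natAbs + 1)
  have hnd : ∀ a : ℤ, a ≠ 0 → a.natAbs < l → ¬ (l : ℤ) ∣ a := by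
    intro a ha hal hd
    have h2 := Nat.le_of_dvd (Int.natAbs_pos.2 ha) (Int.natAbs_dvd_natAbs.2 hd)
    simp at h2
    omega
  obtain ⟨m, hm, hcc⟩ := cs_compcap l N hl
  set H : ℕ := 4 + (2 * |P.leadingCoeff| + 2 * ∑ i : Fin N, |P.coeff i|).toNat with hH
  set K : ℕ := 4 * (2 * (H + 7)) ^ 3 with hK
  set j : ℕ := K ^ m + 8 with hj
  have hMj : j < l ^ j := Nat.lt_pow_self hl.one_lt
  obtain ⟨C, hC, hcap⟩ := hcc P hN (hnd _ (leadingCoeff_ne_zero.2 hP) (by omega))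
    (hnd _ h0 (by omega)) (hnd _ h1 (by omega)) 1 j N hNpos (one_mul N)
  rw [pow_one] at hcap
  refine csGood_arc _ N m (l ^ j) H (by omega) hNpos hm (by omega)
    (csGood_badNR N (l ^ j) fun G hG hGN => ih _ hGN G hG rfl) C ?_ ?_
  · intro F _ lam _ _ h3
    exact cs_sepB lam N m (l ^ j) H hNpos P hN h3 (by omega) (by omega) C hcap
  · refine le_trans ?_ hC
    rw [← hK]
    calc K ^ (N * m) * (l ^ j) ^ (2 * (N * m)) = (K ^ m) ^ N * (l ^ j) ^ (2 * (N * m)) := by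
          rw [← pow_mul K, mul_comm m N]
      _ ≤ (l ^ j) ^ N * (l ^ j) ^ (2 * (N * m)) :=
          Nat.mul_le_mul_right _ (Nat.pow_le_pow_left (by omega) _)
      _ = _ := by rw [← pow_add]; congr 1; ring

lemma csGood_all : csGood (fun _ _ _ => True) := by
  obtain ⟨m, hm, hfree⟩ := cs_freecap 2 Nat.prime_two
  set K : ℕ := 4 * (2 * (4 + 7)) ^ 3 with hK
  set j : ℕ := K ^ (2 * m) + 8 with hj
  have hMj : j < 2 ^ j := Nat.lt_pow_self Nat.one_lt_two
  obtain ⟨C, hC, hsep⟩ := hfree j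
  refine csGood_arc _ (12 * m) m (2 ^ j) 4 (by omega) (by omega) hm (by omega)
    (csGood_badNR _ _ fun G hG _ => csGood_poly _ G hG rfl) C
    (fun F _ lam _ _ _ => hsep lam 4 le_rfl) ?_
  refine le_trans ?_ hC
  rw [← hK]
  calc K ^ (12 * m * m) * (2 ^ j) ^ (2 * (12 * m * m))
      = (K ^ (2 * m)) ^ (6 * m) * (2 ^ j) ^ (2 * (12 * m * m)) := by
        rw [← pow_mul K]; congr 2; ring
    _ ≤ (2 ^ j) ^ (6 * m) * (2 ^ j) ^ (2 * (12 * m * m)) :=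
        Nat.mul_le_mul_right _ (Nat.pow_le_pow_left (by omega) _)
    _ = _ := by rw [← pow_add]; congr 1; ring

end CapClasses


/-- **Lemma (large cap subset of an almost cap set).**
For every `0 < δ ≤ 1` there is a constant `C = C(δ) > 0` such that: for every
`0 < ε ≤ 1`, every finite field `F_q`, every `n`, every admissible tuple `(a, b, c)`
and every `A ⊆ F_q^n`, if `A' ⊆ A` satisfies `|A'| ≥ δ|A|` and every `x ∈ A'` has at
most `|A|^ε` pairs `(y, z) ∈ A²` with `ax + by + cz = 0`, then there is `I ⊆ A'`
which is a cap set for `(a, b, c)` and satisfies `|I| ≥ C * |A'|^{1 - ε/3}`. -/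
theorem large_cap_subset (δ : ℝ) (hδ : 0 < δ) (hδ1 : δ ≤ 1) :
    ∃ C : ℝ, 0 < C ∧
      ∀ (F : Type) (_ : Field F) (_ : Fintype F) (ε : ℝ), 0 < ε → ε ≤ 1 →
        ∀ (n : ℕ) (a b c : F), a ≠ 0 → b ≠ 0 → c ≠ 0 → a + b + c = 0 →
        ∀ A A' : Set (Fin n → F), A' ⊆ A →
          δ * (A.ncard : ℝ) ≤ (A'.ncard : ℝ) →
          (∀ x ∈ A',
            (({p : (Fin n → F) × (Fin n → F) | p.1 ∈ A ∧ p.2 ∈ A ∧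
                a • x + b • p.1 + c • p.2 = 0}).ncard : ℝ) ≤ (A.ncard : ℝ) ^ ε) →
          ∃ I : Set (Fin n → F), I ⊆ A' ∧
            (∀ x ∈ I, ∀ y ∈ I, ∀ z ∈ I,
              a • x + b • y + c • z = 0 → x = y ∧ y = z) ∧
            C * (A'.ncard : ℝ) ^ (1 - ε / 3) ≤ (I.ncard : ℝ) := by
  obtain ⟨c, hc, hG⟩ := csGood_all
  refine ⟨1 / 2 * (c * δ / 2) ^ (1 / 3 : ℝ), by positivity, ?_⟩
  intro F _ _ ε hε hε1 n a b cc ha hb hcc habc A A' hAA hd hdeg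
  refine cs_final c hc F δ hδ hδ1 ε hε hε1 n a b cc ha hb hcc habc ?_ A A' hAA hd hdeg
  refine hG F (b / a) (div_ne_zero hb ha) ?_ trivial
  have h1 : 1 + b / a = (a + b) / a := by field_simp
  rw [h1]
  refine div_ne_zero ?_ ha
  intro h0
  rw [h0, zero_add] at habc
  exact hcc habc
end

section
/- For every prime power q and every 0 < δ ≤ 1 there exists a constant C = C(q,δ) > 0 such that the following holds: for every 0 < ε ≤ 1, every n, and every admissible tuple (a,b,c), if A ⊆ F_q^n is an (ε,δ)-cap set for (a,b,c), then the 3-tensor T_F associated to the function F : A^3 → F_q defined by F(x,y,z) = 1 if ax+by+cz = 0 and F(x,y,z) = 0 otherwise, satisfies s-rank(T_F) ≥ C·|A|^{1−ε/3}. -/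
/-- A multilinear map (`3`-tensor) `T : V³ → 𝔽` has slice rank at most `k` if it is
a sum of `k` multilinear maps, each of the form `v ↦ L (v i) * S (v away from i)`
with `L` linear and `S` multilinear (bilinear) in the remaining arguments. -/
def SliceRankLE {𝔽 V : Type*} [CommSemiring 𝔽] [AddCommMonoid V] [Module 𝔽 V] {d : ℕ}
    (T : MultilinearMap 𝔽 (fun _ : Fin d => V) 𝔽) (k : ℕ) : Prop :=
  ∃ Ts : Fin k → MultilinearMap 𝔽 (fun _ : Fin d => V) 𝔽,
    (∀ j, ∃ (i : Fin d) (L : V →ₗ[𝔽] 𝔽)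
        (S : MultilinearMap 𝔽 (fun _ : {m : Fin d // m ≠ i} => V) 𝔽),
      ∀ v, Ts j v = L (v i) * S (fun m => v m.1)) ∧
    T = ∑ j, Ts j


lemma exists_common_kernel {F α J : Type*} [Field F] [Fintype α] [Fintype J]
    (l : J → ((α → F) →ₗ[F] F)) (h : Fintype.card J < Fintype.card α) :
    ∃ f : α → F, f ≠ 0 ∧ ∀ j, l j f = 0 := by
  have h1 : (LinearMap.pi l).ker ≠ ⊥ := by
    apply LinearMap.ker_ne_bot_of_finrank_lt
    simpa using h
  obtain ⟨f, hf, hf0⟩ := (Submodule.ne_bot_iff _).1 h1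
  refine ⟨f, hf0, fun j => ?_⟩
  have := LinearMap.mem_ker.1 hf
  exact congrFun this j

lemma exists_large_support {F α J : Type*} [Field F] [Fintype α] [DecidableEq α] [DecidableEq F]
    [Fintype J] (B : Finset α) (l : J → ((α → F) →ₗ[F] F)) :
    ∃ f : α → F, (∀ x, x ∉ B → f x = 0) ∧ (∀ j, l j f = 0) ∧
      B.card ≤ (Finset.univ.filter (fun x => f x ≠ 0)).card + Fintype.card J := by
  classical
  let P : ℕ → Prop := fun s => ∃ f : α → F, (∀ x, x ∉ B → f x = 0) ∧ (∀ j, l j f = 0) ∧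
      s = (Finset.univ.filter (fun x => f x ≠ 0)).card
  have hP0 : P 0 := ⟨0, by simp, by simp, by simp⟩
  have hPs := Nat.findGreatest_spec (P := P) (Nat.zero_le (Fintype.card α)) hP0
  obtain ⟨f, hfB, hfl, hfs⟩ := hPs
  refine ⟨f, hfB, hfl, ?_⟩
  by_contra hlt
  push Not at hlt
  set S := Finset.univ.filter (fun x => f x ≠ 0) with hS
  let l' : (J ⊕ ({x // x ∈ Bᶜ} ⊕ {x // x ∈ S})) → ((α → F) →ₗ[F] F) :=
    Sum.elim l (Sum.elim (fun x => LinearMap.proj x.1) (fun x => LinearMap.proj x.1))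
  have hc : Fintype.card (J ⊕ ({x // x ∈ Bᶜ} ⊕ {x // x ∈ S})) < Fintype.card α := by
    have h1 := Finset.card_compl_add_card B
    simp only [Fintype.card_sum, Fintype.card_coe]
    omega
  obtain ⟨g, hg0, hg⟩ := exists_common_kernel l' hc
  have hgl : ∀ j, l j g = 0 := fun j => hg (Sum.inl j)
  have hgB : ∀ x, x ∉ B → g x = 0 := fun x hx =>
    hg (Sum.inr (Sum.inl ⟨x, Finset.mem_compl.2 hx⟩))
  have hgS : ∀ x, x ∈ S → g x = 0 := fun x hx => hg (Sum.inr (Sum.inr ⟨x, hx⟩))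
  obtain ⟨x0, hx0⟩ := Function.ne_iff.1 hg0
  have hPnew : P (Finset.univ.filter (fun x => (f + g) x ≠ 0)).card :=
    ⟨f + g, fun x hx => by simp [hfB x hx, hgB x hx], fun j => by simp [hfl, hgl], rfl⟩
  have hle := Nat.le_findGreatest (P := P) (n := Fintype.card α) (Finset.card_le_univ _) hPnew
  rw [hfs] at hle
  have hss : S ⊂ Finset.univ.filter (fun x => (f + g) x ≠ 0) := by
    rw [Finset.ssubset_iff_of_subset]
    · refine ⟨x0, ?_, fun h => hx0 (hgS x0 h)⟩
      have : f x0 = 0 := by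
        by_contra h
        exact hx0 (hgS x0 (by simp [hS, h]))
      simpa [this] using hx0
    · intro x hx
      have h1 := hgS x hx
      have h2 : f x ≠ 0 := by simpa [hS] using hx
      simpa [h1] using h2
  have := Finset.card_lt_card hss
  omega

lemma exists_lin_of_slice {F V : Type*} [Field F] [AddCommGroup V] [Module F V] (i : Fin 3)
    (hi : i ≠ 1) (S : MultilinearMap F (fun _ : {m : Fin 3 // m ≠ i} => V) F) (f h : V) :
    ∃ l : V →ₗ[F] F, ∀ g, l g = S (fun m => (![f, g, h] : Fin 3 → V) m.1) := by
  refine ⟨S.toLinearMap (fun m => (![f, 0, h] : Fin 3 → V) m.1) ⟨1, hi.symm⟩, fun g => ?_⟩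
  rw [MultilinearMap.toLinearMap_apply]
  congr 1
  funext m
  obtain ⟨m, hm⟩ := m
  by_cases h1 : m = 1
  · subst h1; simp
  · rw [Function.update_of_ne (by simpa using h1)]
    fin_cases m <;> simp_all

lemma diag_slice_rank {F α : Type*} [Field F] [Fintype α] [DecidableEq α] (B : Finset α)
    (T : MultilinearMap F (fun _ : Fin 3 => (α → F)) F)
    (hT : ∀ f g h : α → F, (∀ x, x ∉ B → f x = 0) → (∀ x, x ∉ B → g x = 0) →
      (∀ x, x ∉ B → h x = 0) → T ![f, g, h] = ∑ x ∈ B, f x * g x * h x)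
    (k : ℕ) (hk : SliceRankLE T k) : B.card ≤ k := by
  classical
  obtain ⟨Ts, hTs, hsum⟩ := hk
  choose i L S hS using hTs
  obtain ⟨f, hfB, hfl, hfc⟩ := exists_large_support B (fun j : {j // i j = 0} => L j.1)
  have hl : ∀ j, ∃ l : (α → F) →ₗ[F] F, ∀ g, l g = 0 →
      ∀ h, Ts j ![f, g, h] = 0 := by
    intro j
    have hcase : i j = 0 ∨ i j = 1 ∨ i j = 2 := by
      generalize i j = t
      fin_cases t <;> simp
    rcases hcase with h0 | h1 | h2
    · refine ⟨0, fun g _ h => ?_⟩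
      have : L j ((![f, g, h] : Fin 3 → (α → F)) (i j)) = 0 := by
        rw [h0]; exact hfl ⟨j, h0⟩
      rw [hS, this, zero_mul]
    · refine ⟨L j, fun g hg h => ?_⟩
      have : L j ((![f, g, h] : Fin 3 → (α → F)) (i j)) = 0 := by rw [h1]; simpa using hg
      rw [hS, this, zero_mul]
    · obtain ⟨l, hl⟩ := exists_lin_of_slice (i j) (by rw [h2]; decide) (S j) f 0
      refine ⟨l, fun g hg h => ?_⟩
      rw [hS]
      have : S j (fun m => (![f, g, h] : Fin 3 → (α → F)) m.1) = 0 := by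
        rw [← hg, hl]
        congr 1
        funext m
        obtain ⟨m, hm⟩ := m
        rw [h2] at hm
        fin_cases m <;> simp_all
      rw [this, mul_zero]
  choose l hl using hl
  set D := Finset.univ.filter (fun x => f x ≠ 0) with hD
  have hDB : ∀ x, x ∈ D → x ∈ B := by
    intro x hx
    by_contra h
    simp [hD, hfB x h] at hx
  by_contra hlt
  push Not at hlt
  let l' : ({j // ¬ i j = 0} ⊕ {x // x ∈ Dᶜ}) → ((α → F) →ₗ[F] F) :=
    Sum.elim (fun j => l j.1) (fun x => LinearMap.proj x.1)
  have hc : Fintype.card ({j // ¬ i j = 0} ⊕ {x // x ∈ Dᶜ}) < Fintype.card α := by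
    have h1 := Finset.card_compl_add_card D
    have h2 := Fintype.card_subtype_compl (fun j => i j = 0)
    have h3 := Fintype.card_subtype_le (fun j => i j = 0)
    simp only [Fintype.card_sum, Fintype.card_coe, Fintype.card_fin] at *
    omega
  obtain ⟨g, hg0, hg⟩ := exists_common_kernel l' hc
  have hgD : ∀ x, x ∉ D → g x = 0 := fun x hx => hg (Sum.inr ⟨x, Finset.mem_compl.2 hx⟩)
  obtain ⟨x0, hx0⟩ := Function.ne_iff.1 hg0
  have hx0D : x0 ∈ D := by
    by_contra h
    exact hx0 (hgD x0 h)
  have hT0 : T ![f, g, Pi.single x0 1] = 0 := by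
    rw [hsum, sum_apply]
    refine Finset.sum_eq_zero fun j _ => ?_
    by_cases hj : i j = 0
    · have : L j ((![f, g, Pi.single x0 1] : Fin 3 → (α → F)) (i j)) = 0 := by
        rw [hj]; exact hfl ⟨j, hj⟩
      rw [hS, this, zero_mul]
    · exact hl j g (hg (Sum.inl ⟨j, hj⟩)) _
  rw [hT f g _ hfB (fun x hx => hgD x (fun h => hx (hDB x h)))
    (fun x hx => by
      rw [Pi.single_eq_of_ne]
      rintro rfl
      exact hx (hDB _ hx0D)),
    Finset.sum_eq_single x0] at hT0
  · have : f x0 ≠ 0 := by simpa [hD] using hx0D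
    simp at hT0
    tauto
  · intro x _ hx
    simp [hx]
  · intro h
    exact absurd (hDB _ hx0D) h

lemma card_dot_zero {F : Type*} [Field F] [Fintype F] [DecidableEq F] {n : ℕ} (w : Fin n → F)
    (hw : w ≠ 0) :
    (Finset.univ.filter (fun v : Fin n → F => v ⬝ᵥ w = 0)).card * Fintype.card F
      = Fintype.card (Fin n → F) := by
  obtain ⟨i, hi⟩ := Function.ne_iff.1 hw
  have key : ∀ t ∈ (Finset.univ : Finset F),
      (Finset.univ.filter (fun v : Fin n → F => v ⬝ᵥ w = t)).card
      = (Finset.univ.filter (fun v : Fin n → F => v ⬝ᵥ w = 0)).card := by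
    intro t _
    refine Finset.card_bij' (fun v _ => v - Pi.single i (t / w i))
      (fun v _ => v + Pi.single i (t / w i)) ?_ ?_ ?_ ?_
    · intro v hv
      have hi' : w i ≠ 0 := hi
      simp at hv ⊢
      rw [hv]; field_simp; simp
    · intro v hv
      have hi' : w i ≠ 0 := hi
      simp at hv ⊢
      rw [hv]; field_simp; simp
    · intro v _; simp
    · intro v _; simp
  have h := Finset.card_eq_sum_card_fiberwise (f := fun v : Fin n → F => v ⬝ᵥ w)
    (s := Finset.univ) (t := Finset.univ) (by simp)
  rw [Finset.sum_congr rfl key] at h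
  simp only [Finset.sum_const, Finset.card_univ, smul_eq_mul] at h
  rw [h, mul_comm]

lemma exists_functional {F I : Type*} [Field F] [Fintype F] [DecidableEq F] {n : ℕ}
    (s : Finset I) (w : I → Fin n → F) (hw : ∀ i ∈ s, w i ≠ 0) :
    ∃ v : Fin n → F, (s.filter (fun i => v ⬝ᵥ w i = 0)).card * Fintype.card F ≤ s.card := by
  by_contra! h
  have h1 : ∑ v : Fin n → F, s.card <
      ∑ v : Fin n → F, (s.filter (fun i => v ⬝ᵥ w i = 0)).card * Fintype.card F :=
    Finset.sum_lt_sum_of_nonempty Finset.univ_nonempty (fun v _ => h v)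
  have h2 : ∑ v : Fin n → F, (s.filter (fun i => v ⬝ᵥ w i = 0)).card * Fintype.card F
      = ∑ i ∈ s, Fintype.card (Fin n → F) := by
    rw [← Finset.sum_mul]
    simp_rw [Finset.card_filter]
    rw [Finset.sum_comm, Finset.sum_mul]
    refine Finset.sum_congr rfl fun i hi => ?_
    rw [← card_dot_zero (w i) (hw i hi), Finset.card_filter]
  rw [h2] at h1
  simp [mul_comm] at h1

lemma exists_functionals {F I : Type*} [Field F] [Fintype F] [DecidableEq F] {n : ℕ}
    (s : Finset I) (w : I → Fin n → F) (hw : ∀ i ∈ s, w i ≠ 0) (m : ℕ) :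
    ∃ v : ℕ → Fin n → F,
      (s.filter (fun i => ∀ j < m, v j ⬝ᵥ w i = 0)).card * Fintype.card F ^ m ≤ s.card := by
  induction m with
  | zero => exact ⟨0, by simp⟩
  | succ m ih =>
    obtain ⟨v, hv⟩ := ih
    obtain ⟨u, hu⟩ := exists_functional (s.filter (fun i => ∀ j < m, v j ⬝ᵥ w i = 0)) w
      (fun i hi => hw i (Finset.mem_filter.1 hi).1)
    refine ⟨Function.update v m u, ?_⟩
    have hsub : s.filter (fun i => ∀ j < m + 1, Function.update v m u j ⬝ᵥ w i = 0) ⊆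
        (s.filter (fun i => ∀ j < m, v j ⬝ᵥ w i = 0)).filter (fun i => u ⬝ᵥ w i = 0) := by
      intro i hi
      simp only [Finset.mem_filter] at hi ⊢
      refine ⟨⟨hi.1, fun j hj => ?_⟩, ?_⟩
      · have := hi.2 j (by omega)
        rwa [Function.update_of_ne (by omega)] at this
      · simpa using hi.2 m (by omega)
    have := Finset.card_le_card hsub
    calc _ ≤ _ * Fintype.card F ^ (m + 1) := Nat.mul_le_mul_right _ this
      _ = _ * Fintype.card F * Fintype.card F ^ m := by ring
      _ ≤ _ := Nat.mul_le_mul_right _ hu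
      _ ≤ _ := hv

lemma exists_anisotropic (F : Type*) [Field F] [Finite F] :
    ∃ v : F, ∀ s t : F, s ^ 2 + s * t + v * t ^ 2 = 0 → s = 0 ∧ t = 0 := by
  have hni : ¬ Function.Injective (fun x : F => x ^ 2 + x) := by
    intro h
    have : (0 : F) = -1 := h (by simp)
    simp at this
  have hns : ¬ Function.Surjective (fun x : F => x ^ 2 + x) := fun h =>
    hni (Finite.injective_iff_surjective.2 h)
  simp only [Function.Surjective, not_forall, not_exists] at hns
  obtain ⟨u, hu⟩ := hns
  refine ⟨-u, fun s t h => ?_⟩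
  by_cases ht : t = 0
  · subst ht
    simpa using h
  · exfalso
    apply hu (s / t)
    field_simp
    linear_combination h

/-- The affine elliptic paraboloid is a cap. -/
lemma paraboloid_cap {F : Type*} [Field F] (v : F)
    (hv : ∀ s t : F, s ^ 2 + s * t + v * t ^ 2 = 0 → s = 0 ∧ t = 0)
    (a b c θ : F) (ha : a ≠ 0) (hb : b ≠ 0) (hc : c ≠ 0) (habc : a + b + c = 0)
    (x1 x2 x3 y1 y2 y3 z1 z2 z3 : F)
    (h1 : a * x1 + b * y1 + c * z1 = 0) (h2 : a * x2 + b * y2 + c * z2 = 0)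
    (h3 : a * x3 + b * y3 + c * z3 = 0)
    (hx : x3 - (x1 ^ 2 + x1 * x2 + v * x2 ^ 2) = θ)
    (hy : y3 - (y1 ^ 2 + y1 * y2 + v * y2 ^ 2) = θ)
    (hz : z3 - (z1 ^ 2 + z1 * z2 + v * z2 ^ 2) = θ) :
    y1 = x1 ∧ y2 = x2 ∧ y3 = x3 := by
  obtain rfl : a = -b - c := by linear_combination habc
  have e1 : z1 - x1 = -(b / c) * (y1 - x1) := by field_simp; linear_combination h1
  have e2 : z2 - x2 = -(b / c) * (y2 - x2) := by field_simp; linear_combination h2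
  have hz1 : z1 = x1 - (b / c) * (y1 - x1) := by linear_combination e1
  have hz2 : z2 = x2 - (b / c) * (y2 - x2) := by linear_combination e2
  have hx3 : x3 = θ + (x1 ^ 2 + x1 * x2 + v * x2 ^ 2) := by linear_combination hx
  have hy3 : y3 = θ + (y1 ^ 2 + y1 * y2 + v * y2 ^ 2) := by linear_combination hy
  have hz3 : z3 = θ + (z1 ^ 2 + z1 * z2 + v * z2 ^ 2) := by linear_combination hz
  have key : b * (-b - c) *
      ((y1 - x1) ^ 2 + (y1 - x1) * (y2 - x2) + v * (y2 - x2) ^ 2) = 0 := by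
    rw [hx3, hy3, hz3, hz1, hz2] at h3
    field_simp at h3
    linear_combination (-1 : F) * h3
  have := hv _ _ ((mul_eq_zero.1 key).resolve_left (mul_ne_zero hb ha))
  have k1 : y1 = x1 := by linear_combination this.1
  have k2 : y2 = x2 := by linear_combination this.2
  refine ⟨k1, k2, ?_⟩
  rw [hx3, hy3, k1, k2]

set_option maxHeartbeats 2000000 in
/-- Combinatorial core: after projecting with random functionals and restricting to a product of
paraboloids, a large subset supports only diagonal solutions. -/
lemma good_card_le {F : Type*} [Field F] [Fintype F] [DecidableEq F] {n : ℕ} (a b c : F)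
    (ha : a ≠ 0) (hb : b ≠ 0) (hc : c ≠ 0) (habc : a + b + c = 0) (A A' : Finset (Fin n → F))
    (hA' : A' ⊆ A) (R : ℝ)
    (hR : ∀ x ∈ A', (({p : (Fin n → F) × (Fin n → F) | p.1 ∈ A ∧ p.2 ∈ A ∧
                a • x + b • p.1 + c • p.2 = 0}).ncard : ℝ) < R) (m : ℕ)
    (hm : 2 * R ≤ (Fintype.card F : ℝ) ^ (3 * m)) (k : ℕ)
    (hk : ∀ B : Finset (Fin n → F), B ⊆ A →
      (∀ x ∈ B, ∀ y ∈ B, ∀ z ∈ B, a • x + b • y + c • z = 0 → y = x ∧ z = x) → B.card ≤ k) :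
    (A'.card : ℝ) ≤ 2 * (k * (Fintype.card F : ℝ) ^ m) := by
  classical
  let N : (Fin n → F) → Finset (Fin n → F) := fun x =>
    A.filter (fun y => y ≠ x ∧ ∃ z ∈ A, a • x + b • y + c • z = 0)
  have hN : ∀ x ∈ A', ((N x).card : ℝ) ≤ R := by
    intro x hx
    refine le_trans ?_ (hR x hx).le
    norm_cast
    have hinj : Function.Injective
        (fun y : Fin n → F => (y, -(c⁻¹ • (a • x + b • y)))) := fun y y' h => (Prod.ext_iff.1 h).1
    rw [← Finset.card_image_of_injective (N x) hinj, ← Set.ncard_coe_finset]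
    refine Set.ncard_le_ncard ?_ (Set.toFinite _)
    intro p hp
    simp only [Finset.coe_image, Set.mem_image, Finset.mem_coe, N, Finset.mem_filter] at hp
    obtain ⟨y, ⟨hyA, -, z, hzA, hz⟩, rfl⟩ := hp
    have hzz : -(c⁻¹ • (a • x + b • y)) = z := by
      have : a • x + b • y = -(c • z) := eq_neg_of_add_eq_zero_left hz
      rw [this, smul_neg, neg_neg, smul_smul, inv_mul_cancel₀ hc, one_smul]
    simp only [Set.mem_ofPred_eq, hzz]
    exact ⟨hyA, hzA, hz⟩
  let I : Finset (Σ _ : Fin n → F, Fin n → F) := A'.sigma N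
  have hI : (I.card : ℝ) ≤ A'.card * R := by
    rw [Finset.card_sigma]
    push_cast
    calc _ ≤ ∑ x ∈ A', R := Finset.sum_le_sum hN
      _ = _ := by simp
  obtain ⟨v, hv⟩ := exists_functionals I (fun p => p.2 - p.1) (by
    rintro ⟨x, y⟩ hp
    simp only [I, N, Finset.mem_sigma, Finset.mem_filter] at hp
    exact sub_ne_zero.2 hp.2.2.1) (3 * m)
  set Ib := I.filter (fun p => ∀ j < 3 * m, v j ⬝ᵥ (p.2 - p.1) = 0) with hIb
  set Good := A'.filter (fun x => ∀ y ∈ N x, ¬ ∀ j < 3 * m, v j ⬝ᵥ (y - x) = 0) with hGood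
  have hsplit : A' ⊆ Good ∪ Ib.image Sigma.fst := by
    intro x hx
    by_cases hg : ∀ y ∈ N x, ¬ ∀ j < 3 * m, v j ⬝ᵥ (y - x) = 0
    · exact Finset.mem_union_left _ (Finset.mem_filter.2 ⟨hx, hg⟩)
    · push Not at hg
      obtain ⟨y, hy, hyv⟩ := hg
      refine Finset.mem_union_right _ (Finset.mem_image.2 ⟨⟨x, y⟩, ?_, rfl⟩)
      exact Finset.mem_filter.2 ⟨Finset.mem_sigma.2 ⟨hx, hy⟩, hyv⟩
  have hcard : A'.card ≤ Good.card + Ib.card :=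
    (Finset.card_le_card hsplit).trans ((Finset.card_union_le _ _).trans
      (Nat.add_le_add_left Finset.card_image_le _))
  obtain ⟨u, hu⟩ := exists_anisotropic F
  let Θ : (Fin n → F) → (Fin m → F) := fun x j =>
    v (3 * j + 2) ⬝ᵥ x - ((v (3 * j) ⬝ᵥ x) ^ 2 + (v (3 * j) ⬝ᵥ x) * (v (3 * j + 1) ⬝ᵥ x)
      + u * (v (3 * j + 1) ⬝ᵥ x) ^ 2)
  have hfib : ∀ θ ∈ Good.image Θ, (Good.filter (fun x => Θ x = θ)).card ≤ k := by
    intro θ _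
    apply hk
    · exact (Finset.filter_subset _ _).trans ((Finset.filter_subset _ _).trans hA')
    · intro x hx y hy z hz hxyz
      simp only [hGood, Finset.mem_filter] at hx hy hz
      have hyx : y = x := by
        by_contra hne
        refine hx.1.2 y (Finset.mem_filter.2 ⟨hA' hy.1.1, hne, z, hA' hz.1.1, hxyz⟩) ?_
        have hdot : ∀ j, a * (v j ⬝ᵥ x) + b * (v j ⬝ᵥ y) + c * (v j ⬝ᵥ z) = 0 := by
          intro j
          have := congrArg (fun t => v j ⬝ᵥ t) hxyz
          simpa [dotProduct_add, dotProduct_smul] using this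
        have hall : ∀ j : Fin m, v (3 * j) ⬝ᵥ y = v (3 * j) ⬝ᵥ x ∧
            v (3 * j + 1) ⬝ᵥ y = v (3 * j + 1) ⬝ᵥ x ∧
            v (3 * j + 2) ⬝ᵥ y = v (3 * j + 2) ⬝ᵥ x := fun j =>
          paraboloid_cap u hu a b c (θ j) ha hb hc habc _ _ _ _ _ _ _ _ _
            (hdot _) (hdot _) (hdot _) (congrFun hx.2 j) (congrFun hy.2 j) (congrFun hz.2 j)
        intro j hj
        rw [dotProduct_sub, sub_eq_zero]
        have h3 := hall ⟨j / 3, by omega⟩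
        have hmod : j = 3 * (j / 3) ∨ j = 3 * (j / 3) + 1 ∨ j = 3 * (j / 3) + 2 := by omega
        rcases hmod with h | h | h
        · rw [h]; exact h3.1
        · rw [h]; exact h3.2.1
        · rw [h]; exact h3.2.2
      refine ⟨hyx, ?_⟩
      rw [hyx, ← add_smul] at hxyz
      have hab : a + b = -c := by linear_combination habc
      rw [hab, neg_smul, neg_add_eq_sub, ← smul_sub] at hxyz
      exact sub_eq_zero.1 ((smul_eq_zero.1 hxyz).resolve_left hc)
  have hGk : Good.card ≤ k * Fintype.card F ^ m := by
    refine (Finset.card_le_mul_card_image Good k hfib).trans (Nat.mul_le_mul_left _ ?_)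
    refine (Finset.card_le_univ _).trans ?_
    simp
  have hq : (0 : ℝ) < (Fintype.card F : ℝ) ^ (3 * m) := by
    have : 0 < Fintype.card F := Fintype.card_pos
    positivity
  have hv' : (Ib.card : ℝ) * (Fintype.card F : ℝ) ^ (3 * m) ≤ I.card := by exact_mod_cast hv
  have hIb2 : 2 * (Ib.card : ℝ) ≤ A'.card := by
    have h1 : (A'.card : ℝ) * (2 * R) ≤ A'.card * (Fintype.card F : ℝ) ^ (3 * m) :=
      mul_le_mul_of_nonneg_left hm (by positivity)
    refine le_of_mul_le_mul_right ?_ hq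
    linarith
  have hGk' : (Good.card : ℝ) ≤ k * (Fintype.card F : ℝ) ^ m := by exact_mod_cast hGk
  have hcard' : (A'.card : ℝ) ≤ Good.card + Ib.card := by exact_mod_cast hcard
  linarith

/-- **Lemma (slice rank lower bound for almost cap sets).**
For every finite field `F_q` and every `0 < δ ≤ 1` there is `C = C(q, δ) > 0` such
that: for every `0 < ε ≤ 1`, every `n`, every admissible tuple `(a, b, c)`, and
every `(ε, δ)`-cap set `A ⊆ F_q^n` for `(a, b, c)`, the 3-tensor
`T_F (f₁, f₂, f₃) = ∑_{(x,y,z) ∈ A³} F (x,y,z) f₁ x f₂ y f₃ z` on `V = (A → F_q)`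
associated to the indicator `F (x,y,z) = [ax + by + cz = 0]` has slice rank at
least `C * |A|^{1 - ε/3}`. -/
theorem slice_rank_lower_bound_almost_cap {𝔽 : Type*} [Field 𝔽] [Fintype 𝔽]
    [DecidableEq 𝔽] (δ : ℝ) (hδ : 0 < δ) (hδ1 : δ ≤ 1) :
    ∃ C : ℝ, 0 < C ∧
      ∀ (ε : ℝ), 0 < ε → ε ≤ 1 →
      ∀ (n : ℕ) (a b c : 𝔽), a ≠ 0 → b ≠ 0 → c ≠ 0 → a + b + c = 0 →
      ∀ A : Finset (Fin n → 𝔽),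
        (∃ A' : Finset (Fin n → 𝔽), A' ⊆ A ∧ δ * (A.card : ℝ) < (A'.card : ℝ) ∧
          ∀ x ∈ A',
            (({p : (Fin n → 𝔽) × (Fin n → 𝔽) | p.1 ∈ A ∧ p.2 ∈ A ∧
                a • x + b • p.1 + c • p.2 = 0}).ncard : ℝ) < (A.card : ℝ) ^ ε) →
        ∀ G : (Fin 3 → ↥A) → 𝔽,
          (∀ x : Fin 3 → ↥A,
            G x = if a • (x 0 : Fin n → 𝔽) + b • (x 1 : Fin n → 𝔽)
                + c • (x 2 : Fin n → 𝔽) = 0 then 1 else 0) →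
        ∀ T : MultilinearMap 𝔽 (fun _ : Fin 3 => (↥A → 𝔽)) 𝔽,
          (∀ v, T v = ∑ x : Fin 3 → ↥A, G x * ∏ i, v i (x i)) →
          ∀ k : ℕ, SliceRankLE T k → C * (A.card : ℝ) ^ (1 - ε / 3) ≤ (k : ℝ) := by
  classical
  have hq1 : (1 : ℝ) < (Fintype.card 𝔽 : ℝ) := by exact_mod_cast Fintype.one_lt_card
  set q : ℝ := (Fintype.card 𝔽 : ℝ) with hq
  refine ⟨δ / (4 * q), by positivity, ?_⟩
  rintro ε hε hε1 n a b c ha hb hc habc A ⟨A', hA', hδA, hR⟩ G hG T hT k hk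
  have hApos : 0 < A.card := by
    rcases Nat.eq_zero_or_pos A.card with h | h
    · have := Finset.card_le_card hA'
      rw [h] at this hδA
      have h0 : A'.card = 0 := by omega
      simp [h0] at hδA
    · exact h
  have hN1 : (1 : ℝ) ≤ (A.card : ℝ) := by exact_mod_cast hApos
  have hN0 : (0 : ℝ) < (A.card : ℝ) := by linarith
  set N : ℝ := (A.card : ℝ) with hN
  have hNε : 1 ≤ N ^ ε := Real.one_le_rpow hN1 hε.le
  obtain ⟨m', hm1, hm2⟩ := exists_nat_pow_near (x := 2 * N ^ ε) (y := q ^ 3) (by linarith)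
    (one_lt_pow₀ hq1 (by norm_num))
  have hmain := good_card_le a b c ha hb hc habc A A' hA' (N ^ ε) hR (m' + 1)
    (by rw [pow_mul]; exact hm2.le) k (by
      intro B hBA hB
      have hcardB : (B.subtype (fun x => x ∈ A)).card = B.card := by
        rw [Finset.card_subtype, Finset.filter_true_of_mem (fun x hx => hBA hx)]
      rw [← hcardB]
      refine diag_slice_rank _ T ?_ k hk
      intro f g h hf hg hh
      rw [hT]
      symm
      refine Finset.sum_bij_ne_zero (fun x _ _ => fun _ => x) (fun _ _ _ => Finset.mem_univ _)
        ?_ ?_ ?_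
      · intro x _ _ y _ _ hxy
        exact congrFun hxy 0
      · intro x _ hx
        rw [Fin.prod_univ_three] at hx
        simp only [Matrix.cons_val_zero, Matrix.cons_val_one, Matrix.cons_val] at hx
        have hG0 : G x ≠ 0 := left_ne_zero_of_mul hx
        have hp := right_ne_zero_of_mul hx
        have h2 := right_ne_zero_of_mul hp
        have h0 := left_ne_zero_of_mul (left_ne_zero_of_mul hp)
        have h1 := right_ne_zero_of_mul (left_ne_zero_of_mul hp)
        have m0 : x 0 ∈ B.subtype (fun x => x ∈ A) := by
          by_contra hh0; exact h0 (hf _ hh0)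
        have m1 : x 1 ∈ B.subtype (fun x => x ∈ A) := by
          by_contra hh0; exact h1 (hg _ hh0)
        have m2 : x 2 ∈ B.subtype (fun x => x ∈ A) := by
          by_contra hh0; exact h2 (hh _ hh0)
        have hE : a • (x 0 : Fin n → 𝔽) + b • (x 1 : Fin n → 𝔽)
                + c • (x 2 : Fin n → 𝔽) = 0 := by
          by_contra hne
          rw [hG, if_neg hne] at hG0
          exact hG0 rfl
        have heq := hB _ (Finset.mem_subtype.1 m0) _ (Finset.mem_subtype.1 m1) _
          (Finset.mem_subtype.1 m2) hE
        have e1 : x 1 = x 0 := Subtype.ext heq.1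
        have e2 : x 2 = x 0 := Subtype.ext heq.2
        refine ⟨x 0, m0, ?_, ?_⟩
        · rw [e1] at h1
          rw [e2] at h2
          exact mul_ne_zero (mul_ne_zero h0 h1) h2
        · funext j
          fin_cases j
          · rfl
          · exact e1.symm
          · exact e2.symm
      · intro x _ _
        rw [hG, if_pos, Fin.prod_univ_three]
        · simp
        · rw [← add_smul, ← add_smul, habc, zero_smul])
  rw [← hq] at hmain
  have hqm : q ^ (m' + 1) ≤ 2 * q * N ^ (ε / 3) := by
    have hpos : 0 < N ^ (ε / 3) := Real.rpow_pos_of_pos hN0 _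
    have hcube : (N ^ (ε / 3)) ^ 3 = N ^ ε := by
      rw [← Real.rpow_natCast, ← Real.rpow_mul hN0.le]
      congr 1
      push_cast
      ring
    refine le_of_pow_le_pow_left₀ (n := 3) (by norm_num) (by positivity) ?_
    calc (q ^ (m' + 1)) ^ 3 = (q ^ 3) ^ m' * q ^ 3 := by ring
      _ ≤ (2 * N ^ ε) * q ^ 3 := mul_le_mul_of_nonneg_right hm1 (by positivity)
      _ ≤ 8 * N ^ ε * q ^ 3 := by
        apply mul_le_mul_of_nonneg_right _ (by positivity)
        linarith
      _ = (2 * q * N ^ (ε / 3)) ^ 3 := by rw [← hcube]; ring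
  have hpos : 0 < N ^ (ε / 3) := Real.rpow_pos_of_pos hN0 _
  have hfin : δ * N ≤ 2 * (k * (2 * q * N ^ (ε / 3))) := by
    have : (k : ℝ) * q ^ (m' + 1) ≤ k * (2 * q * N ^ (ε / 3)) :=
      mul_le_mul_of_nonneg_left hqm (by positivity)
    linarith
  rw [Real.rpow_sub hN0, Real.rpow_one, div_mul_div_comm, div_le_iff₀ (by positivity)]
  linarith
end

section
/- Let d ≥ 4, let a_1,…,a_d ∈ F_q∖{0} satisfy a_1+⋯+a_d = 0, and suppose the partial sums b_k = a_1+⋯+a_k are nonzero for all 2 ≤ k ≤ d−2. Let m ≥ 2d, let A ⊆ F_q^n, and let A_1 ⊆ A_2 ⊆ ⋯ ⊆ A_{d−2} ⊆ A be nonempty sets such that: (i) for every t ∈ A_1 there are at least m pairs (x_1,x_2) ∈ A_2^2 with a_1x_1 + a_2x_2 = b_2 t; (ii) for every 2 ≤ k ≤ d−3 and every t ∈ A_k there are at least m pairs (x, t') ∈ A_{k+1}^2 with b_k t + a_{k+1} x = b_{k+1} t'; and (iii) for every t ∈ A_{d−2} there are at least m pairs (x,y) ∈ A^2 with b_{d−2}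 t + a_{d−1} x + a_d y = 0. Then there exist pairwise distinct x_1,…,x_d ∈ A with a_1x_1 + ⋯ + a_dx_d = 0. -/
lemma avoid_pair {V : Type*} [Finite V] (S : Set (V × V)) (X : Finset V)
    (hf : Set.InjOn Prod.fst S) (hs : Set.InjOn Prod.snd S) (hc : 2 * X.card < S.ncard) :
    ∃ p ∈ S, p.1 ∉ X ∧ p.2 ∉ X := by
  by_contra hcon
  push Not at hcon
  have hsub : S ⊆ (S ∩ Prod.fst ⁻¹' (X : Set V)) ∪ (S ∩ Prod.snd ⁻¹' (X : Set V)) := by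
    intro p hp
    by_cases h : p.1 ∈ X
    · exact Or.inl ⟨hp, h⟩
    · exact Or.inr ⟨hp, hcon p hp h⟩
  have e1 : (S ∩ Prod.fst ⁻¹' (X : Set V)).ncard ≤ X.card := by
    rw [← Set.ncard_coe_finset X]
    exact Set.ncard_le_ncard_of_injOn Prod.fst (fun p hp => hp.2)
      (hf.mono Set.inter_subset_left) (Set.toFinite _)
  have e2 : (S ∩ Prod.snd ⁻¹' (X : Set V)).ncard ≤ X.card := by
    rw [← Set.ncard_coe_finset X]
    exact Set.ncard_le_ncard_of_injOn Prod.snd (fun p hp => hp.2)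
      (hs.mono Set.inter_subset_left) (Set.toFinite _)
  have e3 := Set.ncard_le_ncard hsub (Set.toFinite _)
  have e4 := Set.ncard_union_le (S ∩ Prod.fst ⁻¹' (X : Set V)) (S ∩ Prod.snd ⁻¹' (X : Set V))
  omega

lemma extend_one {F V : Type*} [Field F] [AddCommGroup V] [Module F V] (a : ℕ → F) (A : Set V)
    (x : ℕ → V) (k : ℕ) (y : V) (hxA : ∀ i, 1 ≤ i → i ≤ k → x i ∈ A)
    (hinj : Set.InjOn x (Set.Icc 1 k)) (hy : y ∈ A)
    (hny : ∀ i, 1 ≤ i → i ≤ k → x i ≠ y) :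
    ∃ z : ℕ → V, (∀ i, 1 ≤ i → i ≤ k → z i = x i) ∧ z (k + 1) = y ∧
      (∀ i, 1 ≤ i → i ≤ k + 1 → z i ∈ A) ∧ Set.InjOn z (Set.Icc 1 (k + 1)) ∧
      ∑ i ∈ Finset.Icc 1 (k + 1), a i • z i =
        ∑ i ∈ Finset.Icc 1 k, a i • x i + a (k + 1) • y := by
  have hz : ∀ i, 1 ≤ i → i ≤ k → Function.update x (k + 1) y i = x i := fun i _ h =>
    Function.update_of_ne (by omega) _ _
  have hz' : Function.update x (k + 1) y (k + 1) = y := Function.update_self _ _ _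
  generalize Function.update x (k + 1) y = z at hz hz'
  refine ⟨z, hz, hz', ?_, ?_, ?_⟩
  · intro i h1 h2
    rcases Nat.lt_or_ge k i with h | h
    · obtain rfl : i = k + 1 := by omega
      rwa [hz']
    · rw [hz i h1 h]; exact hxA i h1 h
  · intro i hi j hj hij
    obtain ⟨hi1, hi2⟩ := hi
    obtain ⟨hj1, hj2⟩ := hj
    rcases Nat.lt_or_ge k i with h | h <;> rcases Nat.lt_or_ge k j with h' | h'
    · omega
    · obtain rfl : i = k + 1 := by omega
      rw [hz', hz j hj1 h'] at hij
      exact absurd hij.symm (hny j hj1 h')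
    · obtain rfl : j = k + 1 := by omega
      rw [hz', hz i hi1 h] at hij
      exact absurd hij (hny i hi1 h)
    · rw [hz i hi1 h, hz j hj1 h'] at hij
      exact hinj ⟨hi1, h⟩ ⟨hj1, h'⟩ hij
  · rw [Finset.sum_Icc_succ_top (by omega), hz']
    congr 1
    apply Finset.sum_congr rfl
    intro i hi
    rw [Finset.mem_Icc] at hi
    rw [hz i hi.1 hi.2]

/-- **Lemma (iterative construction of a solution with distinct entries).**
Let `d ≥ 4` and `a_1, …, a_d ∈ F_q \ {0}` (written `a 1, …, a d` for `a : ℕ → F`)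
with `a_1 + ⋯ + a_d = 0`, such that the partial sums `b_k = a_1 + ⋯ + a_k` are
nonzero for `2 ≤ k ≤ d - 2`. Let `m ≥ 2d`, `A ⊆ F_q^n` and nonempty sets
`A_1 ⊆ A_2 ⊆ ⋯ ⊆ A_{d-2} ⊆ A` such that:
(i) every `t ∈ A_1` has at least `m` pairs `(x₁, x₂) ∈ A_2²` with
    `a_1 x₁ + a_2 x₂ = b_2 t`;
(ii) for `2 ≤ k ≤ d - 3`, every `t ∈ A_k` has at least `m` pairs
    `(x, t') ∈ A_{k+1}²` with `b_k t + a_{k+1} x = b_{k+1} t'`;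
(iii) every `t ∈ A_{d-2}` has at least `m` pairs `(x, y) ∈ A²` with
    `b_{d-2} t + a_{d-1} x + a_d y = 0`.
Then there exist pairwise distinct `x_1, …, x_d ∈ A` with
`a_1 x_1 + ⋯ + a_d x_d = 0`. -/
theorem distinct_solution_from_chain {F : Type*} [Field F] [Fintype F]
    {n : ℕ} (hn : 0 < n) {d : ℕ} (hd : 4 ≤ d) (a : ℕ → F)
    (ha : ∀ i, 1 ≤ i → i ≤ d → a i ≠ 0)
    (hsum : ∑ i ∈ Finset.Icc 1 d, a i = 0)
    (hb : ∀ k, 2 ≤ k → k ≤ d - 2 → ∑ i ∈ Finset.Icc 1 k, a i ≠ 0)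
    (m : ℕ) (hm : 2 * d ≤ m)
    (A : Set (Fin n → F)) (As : ℕ → Set (Fin n → F))
    (hchain : ∀ k, 1 ≤ k → k ≤ d - 3 → As k ⊆ As (k + 1))
    (hlast : As (d - 2) ⊆ A)
    (hne : ∀ k, 1 ≤ k → k ≤ d - 2 → (As k).Nonempty)
    (h1 : ∀ t ∈ As 1,
      m ≤ ({p : (Fin n → F) × (Fin n → F) | p.1 ∈ As 2 ∧ p.2 ∈ As 2 ∧
        a 1 • p.1 + a 2 • p.2 = (∑ i ∈ Finset.Icc 1 2, a i) • t}).ncard)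
    (h2 : ∀ k, 2 ≤ k → k ≤ d - 3 → ∀ t ∈ As k,
      m ≤ ({p : (Fin n → F) × (Fin n → F) | p.1 ∈ As (k + 1) ∧ p.2 ∈ As (k + 1) ∧
        (∑ i ∈ Finset.Icc 1 k, a i) • t + a (k + 1) • p.1 =
          (∑ i ∈ Finset.Icc 1 (k + 1), a i) • p.2}).ncard)
    (h3 : ∀ t ∈ As (d - 2),
      m ≤ ({p : (Fin n → F) × (Fin n → F) | p.1 ∈ A ∧ p.2 ∈ A ∧
        (∑ i ∈ Finset.Icc 1 (d - 2), a i) • t + a (d - 1) • p.1 +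
          a d • p.2 = 0}).ncard) :
    ∃ x : ℕ → (Fin n → F), (∀ i, 1 ≤ i → i ≤ d → x i ∈ A) ∧
      Set.InjOn x (Set.Icc 1 d) ∧ ∑ i ∈ Finset.Icc 1 d, a i • x i = 0 := by
  classical
  have hA : ∀ j, j ≤ d - 3 → As (d - 2 - j) ⊆ A := by
    intro j
    induction j with
    | zero => intro _; simpa using hlast
    | succ j ih =>
      intro hj
      have h := hchain (d - 2 - (j + 1)) (by omega) (by omega)
      rw [show d - 2 - (j + 1) + 1 = d - 2 - j by omega] at h
      exact h.trans (ih (by omega))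
  have hA' : ∀ k, 1 ≤ k → k ≤ d - 2 → As k ⊆ A := by
    intro k h h'
    have := hA (d - 2 - k) (by omega)
    rwa [show d - 2 - (d - 2 - k) = k by omega] at this
  have key : ∀ k, 2 ≤ k → k ≤ d - 2 → ∃ (x : ℕ → (Fin n → F)) (t : Fin n → F), t ∈ As k ∧
      (∀ i, 1 ≤ i → i ≤ k → x i ∈ A) ∧ Set.InjOn x (Set.Icc 1 k) ∧
      ∑ i ∈ Finset.Icc 1 k, a i • x i = (∑ i ∈ Finset.Icc 1 k, a i) • t := by
    intro k hk
    induction k, hk using Nat.le_induction with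
    | base =>
      intro h2d
      obtain ⟨t, ht⟩ := hne 1 le_rfl (by omega)
      have hc := h1 t ht
      obtain ⟨p, ⟨hp1, hp2, hp3⟩, hn1, hn2⟩ := avoid_pair _ {t} (by
          rintro ⟨u, v⟩ ⟨_, _, h⟩ ⟨u', v'⟩ ⟨_, _, h'⟩ (rfl : u = u')
          have e := h.trans h'.symm
          simp only [add_right_inj] at e
          rw [smul_right_injective _ (ha 2 (by omega) (by omega)) e]) (by
          rintro ⟨u, v⟩ ⟨_, _, h⟩ ⟨u', v'⟩ ⟨_, _, h'⟩ (rfl : v = v')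
          have e := h.trans h'.symm
          simp only [add_left_inj] at e
          rw [smul_right_injective _ (ha 1 (by omega) (by omega)) e])
          (lt_of_lt_of_le (by rw [Finset.card_singleton]; omega) hc)
      rw [Finset.mem_singleton] at hn1
      have hne' : p.1 ≠ p.2 := by
        intro e
        rw [← e, ← add_smul] at hp3
        apply hn1
        apply smul_right_injective _ (hb 2 le_rfl h2d)
        beta_reduce
        rw [← hp3, show Finset.Icc 1 2 = {1, 2} by decide]
        simp
      obtain ⟨z, hz, hz2, hzA, hzI, hzs⟩ := extend_one a A (fun _ => p.1) 1 p.2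
        (fun _ _ _ => hA' 2 (by omega) (by omega) hp1)
        (fun i hi j hj _ => by
          have := hi.1; have := hi.2; have := hj.1; have := hj.2; omega)
        (hA' 2 (by omega) (by omega) hp2) (fun _ _ _ => hne')
      refine ⟨z, t, hchain 1 le_rfl (by omega) ht, hzA, hzI, ?_⟩
      rw [← hp3]
      simpa using hzs
    | succ k hk ih =>
      intro hkd
      obtain ⟨x, t, ht, hxA, hxI, hxs⟩ := ih (by omega)
      have hc := h2 k hk (by omega) t ht
      have hcard : ((Finset.Icc 1 k).image x).card ≤ k :=
        Finset.card_image_le.trans (by simp)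
      obtain ⟨p, ⟨hp1, hp2, hp3⟩, hn1, -⟩ := avoid_pair _ ((Finset.Icc 1 k).image x) (by
          rintro ⟨u, v⟩ ⟨_, _, h⟩ ⟨u', v'⟩ ⟨_, _, h'⟩ (rfl : u = u')
          have e := h.symm.trans h'
          dsimp only at e
          rw [smul_right_injective _ (hb (k + 1) (by omega) hkd) e]) (by
          rintro ⟨u, v⟩ ⟨_, _, h⟩ ⟨u', v'⟩ ⟨_, _, h'⟩ (rfl : v = v')
          have e := h.trans h'.symm
          simp only [add_right_inj] at e
          rw [smul_right_injective _ (ha (k + 1) (by omega) (by omega)) e])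
          (lt_of_lt_of_le (by omega) hc)
      obtain ⟨z, hz, hz2, hzA, hzI, hzs⟩ := extend_one a A x k p.1 hxA hxI
        (hA' (k + 1) (by omega) hkd hp1)
        (fun i hi hi' e => hn1 (Finset.mem_image.2 ⟨i, Finset.mem_Icc.2 ⟨hi, hi'⟩, e⟩))
      exact ⟨z, p.2, hp2, hzA, hzI, by rw [hzs, hxs, hp3]⟩
  obtain ⟨x, t, ht, hxA, hxI, hxs⟩ := key (d - 2) (by omega) le_rfl
  have hc := h3 t ht
  have hbd := hb (d - 2) (by omega) le_rfl
  obtain ⟨e, rfl⟩ : ∃ e, d = e + 1 + 1 := ⟨d - 2, by omega⟩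
  simp only [Nat.add_sub_cancel, show e + 1 + 1 - 2 = e by omega] at *
  have hcard : (insert t ((Finset.Icc 1 e).image x)).card ≤ e + 1 :=
    (Finset.card_insert_le _ _).trans
      (Nat.succ_le_succ (Finset.card_image_le.trans (by simp)))
  obtain ⟨p, ⟨hp1, hp2, hp3⟩, hn1, hn2⟩ := avoid_pair _ (insert t ((Finset.Icc 1 e).image x)) (by
      rintro ⟨u, v⟩ ⟨_, _, h⟩ ⟨u', v'⟩ ⟨_, _, h'⟩ (rfl : u = u')
      have e := h.trans h'.symm
      simp only [add_right_inj] at e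
      rw [smul_right_injective _ (ha _ (by omega) le_rfl) e]) (by
      rintro ⟨u, v⟩ ⟨_, _, h⟩ ⟨u', v'⟩ ⟨_, _, h'⟩ (rfl : v = v')
      have e := h.trans h'.symm
      simp only [add_right_inj, add_left_inj] at e
      rw [smul_right_injective _ (ha _ (by omega) (Nat.le_succ _)) e])
      (lt_of_lt_of_le (by omega) hc)
  rw [Finset.mem_insert, not_or] at hn1 hn2
  have hpp : p.1 ≠ p.2 := by
    intro h
    apply hn1.1
    rw [← h, add_assoc, ← add_smul] at hp3
    rw [Finset.sum_Icc_succ_top (by omega), Finset.sum_Icc_succ_top (by omega), add_assoc] at hsum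
    rw [← neg_eq_of_add_eq_zero_right hsum, neg_smul, add_neg_eq_zero] at hp3
    exact (smul_right_injective _ hbd hp3).symm
  obtain ⟨z, hz, hz2, hzA, hzI, hzs⟩ := extend_one a A x e p.1 hxA hxI hp1
    (fun i hi hi' h => hn1.2 (Finset.mem_image.2 ⟨i, Finset.mem_Icc.2 ⟨hi, hi'⟩, h⟩))
  obtain ⟨w, hw, hw2, hwA, hwI, hws⟩ := extend_one a A z (e + 1) p.2 hzA hzI hp2 (by
    intro i hi hi' h
    rcases Nat.lt_or_ge e i with h' | h'
    · obtain rfl : i = e + 1 := by omega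
      exact hpp (hz2.symm.trans h)
    · rw [hz i hi h'] at h
      exact hn2.2 (Finset.mem_image.2 ⟨i, Finset.mem_Icc.2 ⟨hi, h'⟩, h⟩))
  exact ⟨w, hwA, hwI, by rw [hws, hzs, hxs, hp3]⟩
end

section
/- There exists c_q < q such that for all sufficiently large n, every set A ⊆ F_q^n that is a cap set for some admissible tuple (a,b,c) satisfies |A| ≤ c_q^n. -/
open Finset in
/-- Abstract linear algebra step: if the pointwise product of any two functions orthogonal to all
`f l` lies in the span of the `f l`, then the ground set has at most `2 * card L` points. -/
lemma capset_linear {F : Type*} [Field F] {ι L : Type*} [Fintype ι] [Fintype L]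
    (f : L → ι → F)
    (H : ∀ h w : ι → F, (∀ l, ∑ x, h x * f l x = 0) → (∀ l, ∑ x, w x * f l x = 0) →
      h * w ∈ Submodule.span F (Set.range f)) :
    Fintype.card ι ≤ 2 * Fintype.card L := by
  classical
  let Φ : (ι → F) →ₗ[F] (L → F) :=
    { toFun := fun h l => ∑ x, h x * f l x
      map_add' := by
        intro a b; ext l; simp [add_mul, Finset.sum_add_distrib]
      map_smul' := by
        intro a b; ext l; simp [Finset.mul_sum, mul_assoc] }
  have hV : ∀ h, h ∈ LinearMap.ker Φ ↔ ∀ l, ∑ x, h x * f l x = 0 := by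
    intro h
    rw [LinearMap.mem_ker]
    exact funext_iff
  -- pick an element of maximal support
  obtain ⟨h, hh⟩ : ∃ h : LinearMap.ker Φ, ∀ w : LinearMap.ker Φ,
      #{x | w.1 x ≠ 0} ≤ #{x | h.1 x ≠ 0} := by
    let s : Set ℕ := Set.range fun w : LinearMap.ker Φ => #{x | w.1 x ≠ 0}
    have hs : s.Nonempty := ⟨_, 0, rfl⟩
    have hb : BddAbove s := by
      refine ⟨Fintype.card ι, ?_⟩
      rintro _ ⟨w, rfl⟩
      exact Finset.card_le_univ _
    obtain ⟨h, hh⟩ := Nat.sSup_mem hs hb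
    refine ⟨h, fun w => ?_⟩
    have := le_csSup hb (Set.mem_range_self w)
    exact this.trans hh.ge
  let U := Submodule.span F (Set.range f)
  let Ψ : LinearMap.ker Φ →ₗ[F] U :=
    { toFun := fun w => ⟨h.1 * w.1, H _ _ ((hV _).1 h.2) ((hV _).1 w.2)⟩
      map_add' := by
        intro a b; ext x; simp [mul_add]
      map_smul' := by
        intro a b; ext x; simp; ring }
  have hinj : Function.Injective Ψ := by
    rw [← LinearMap.ker_eq_bot, LinearMap.ker_eq_bot']
    intro w hw
    have hw' : ∀ x, h.1 x * w.1 x = 0 := by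
      intro x
      exact congrFun (congrArg Subtype.val hw) x
    by_contra hne
    have : ∃ x, w.1 x ≠ 0 := by
      by_contra hcon
      push Not at hcon
      exact hne (Subtype.ext (funext hcon))
    obtain ⟨x0, hx0⟩ := this
    have h1 := hh (h + w)
    have h2 : #{x | h.1 x ≠ 0} < #{x | (h + w).1 x ≠ 0} := by
      apply Finset.card_lt_card
      rw [Finset.ssubset_iff_of_subset]
      · refine ⟨x0, ?_, ?_⟩
        · have : h.1 x0 = 0 := (mul_eq_zero.1 (hw' x0)).resolve_right hx0
          simp [this, hx0]
        · simpa using (mul_eq_zero.1 (hw' x0)).resolve_right hx0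
      · intro x hx
        simp only [Finset.mem_filter, Finset.mem_univ, true_and] at hx ⊢
        have : w.1 x = 0 := (mul_eq_zero.1 (hw' x)).resolve_left hx
        simpa [this] using hx
    omega
  have d1 := LinearMap.finrank_le_finrank_of_injective hinj
  have d2 : Module.finrank F U ≤ Fintype.card L := finrank_range_le_card f
  have d3 := LinearMap.finrank_range_add_finrank_ker Φ
  have d4 : Module.finrank F (LinearMap.range Φ) ≤ Module.finrank F (L → F) :=
    Submodule.finrank_le _
  rw [Module.finrank_fintype_fun_eq_card] at d3 d4
  omega

/-- exponent triples of total degree at most `d` -/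
abbrev ExpTriple (d : ℕ) : Type :=
  {p : Fin (d + 1) × Fin (d + 1) × Fin (d + 1) // p.1.1 + p.2.1.1 + p.2.2.1 ≤ d}

lemma capset_expand {F : Type*} [Field F] (d : ℕ) (a b c : F) :
    ∃ C : ExpTriple d → F, ∀ x y z : F,
      1 - (a * x + b * y + c * z) ^ d =
        ∑ p : ExpTriple d, C p * (x ^ p.1.1.1 * y ^ p.1.2.1.1 * z ^ p.1.2.2.1) := by
  let m : ExpTriple d → (F × F × F → F) :=
    fun p v => v.1 ^ p.1.1.1 * v.2.1 ^ p.1.2.1.1 * v.2.2 ^ p.1.2.2.1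
  have hm : ∀ i j k : ℕ, i + j + k ≤ d →
      (fun v : F × F × F => v.1 ^ i * v.2.1 ^ j * v.2.2 ^ k) ∈
        Submodule.span F (Set.range m) := by
    intro i j k hijk
    refine Submodule.subset_span ⟨⟨(⟨i, by omega⟩, ⟨j, by omega⟩, ⟨k, by omega⟩), hijk⟩, rfl⟩
  have key : (fun v : F × F × F => 1 - (a * v.1 + b * v.2.1 + c * v.2.2) ^ d) ∈
      Submodule.span F (Set.range m) := by
    have h1 := hm 0 0 0 (by omega)
    have h2 : (fun v : F × F × F => (a * v.1 + b * v.2.1 + c * v.2.2) ^ d) ∈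
        Submodule.span F (Set.range m) := by
      have : (fun v : F × F × F => (a * v.1 + b * v.2.1 + c * v.2.2) ^ d) =
          ∑ k ∈ Finset.range (d + 1), ∑ i ∈ Finset.range (k + 1),
            (a ^ i * b ^ (k - i) * (k.choose i : F) * c ^ (d - k) * (d.choose k : F)) •
              (fun v : F × F × F => v.1 ^ i * v.2.1 ^ (k - i) * v.2.2 ^ (d - k)) := by
        ext v
        simp only [Finset.sum_apply, Pi.smul_apply, smul_eq_mul]
        rw [add_pow]
        refine Finset.sum_congr rfl fun k _ => ?_
        rw [add_pow, Finset.sum_mul, Finset.sum_mul]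
        refine Finset.sum_congr rfl fun i _ => ?_
        simp only [mul_pow]
        ring
      rw [this]
      refine Submodule.sum_mem _ fun k hk => Submodule.sum_mem _ fun i hi => ?_
      refine Submodule.smul_mem _ _ (hm _ _ _ ?_)
      simp only [Finset.mem_range] at hk hi
      omega
    have := Submodule.sub_mem _ h1 h2
    convert this using 1
    ext v
    simp
  obtain ⟨C, hC⟩ := (Submodule.mem_span_range_iff_exists_fun F).1 key
  refine ⟨C, fun x y z => ?_⟩
  have := congrFun hC (x, y, z)
  simp only [Finset.sum_apply, Pi.smul_apply, smul_eq_mul, m] at this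
  exact this.symm

/-- low degree exponents -/
abbrev LowExp (n d : ℕ) : Type :=
  {e : Fin n → Fin (d + 1) // 3 * ∑ i, (e i).1 ≤ n * d}

lemma capset_card_le {F : Type*} [Field F] [Fintype F] (n d : ℕ) (hd : Fintype.card F = d + 1)
    (A : Set (Fin n → F)) (a b c : F) (h0 : a + b + c = 0)
    (hA : ∀ x ∈ A, ∀ y ∈ A, ∀ z ∈ A, a • x + b • y + c • z = 0 → x = y ∧ y = z) :
    A.ncard ≤ 2 * Fintype.card (LowExp n d) := by
  classical
  have hd0 : d ≠ 0 := by
    have := Fintype.one_lt_card (α := F)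
    omega
  rw [← Nat.card_coe_set_eq, Nat.card_eq_fintype_card]
  obtain ⟨C, hC⟩ := capset_expand d a b c
  let mon : (Fin n → Fin (d + 1)) → A → F := fun e x => ∏ i, x.1 i ^ (e i).1
  apply capset_linear (F := F) (fun (l : LowExp n d) => mon l.1)
  intro h w hh hw
  let e1 : (Fin n → ExpTriple d) → (Fin n → Fin (d + 1)) := fun φ i => (φ i).1.1
  let e2 : (Fin n → ExpTriple d) → (Fin n → Fin (d + 1)) := fun φ i => (φ i).1.2.1
  let e3 : (Fin n → ExpTriple d) → (Fin n → Fin (d + 1)) := fun φ i => (φ i).1.2.2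
  have hT : ∀ x y z : A, (if x = z ∧ y = z then (1 : F) else 0) =
      ∑ φ : Fin n → ExpTriple d, (∏ i, C (φ i)) * (mon (e1 φ) x * mon (e2 φ) y * mon (e3 φ) z) := by
    intro x y z
    have t1 : (if x = z ∧ y = z then (1 : F) else 0) =
        ∏ i, (1 - (a * x.1 i + b * y.1 i + c * z.1 i) ^ d) := by
      split_ifs with hxyz
      · obtain ⟨rfl, rfl⟩ := hxyz
        symm
        apply Finset.prod_eq_one
        intro i _
        rw [← add_mul, ← add_mul, h0, zero_mul, zero_pow hd0, sub_zero]
      · have : ∃ i, a * x.1 i + b * y.1 i + c * z.1 i ≠ 0 := by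
          by_contra hcon
          push Not at hcon
          have := hA x.1 x.2 y.1 y.2 z.1 z.2 (by ext i; simpa using hcon i)
          exact hxyz ⟨Subtype.ext (this.1.trans this.2), Subtype.ext this.2⟩
        obtain ⟨i, hi⟩ := this
        symm
        apply Finset.prod_eq_zero (Finset.mem_univ i)
        have := FiniteField.pow_card_sub_one_eq_one _ hi
        rw [hd, Nat.add_sub_cancel] at this
        rw [this, sub_self]
    rw [t1]
    simp only [hC]
    rw [Finset.prod_univ_sum, Fintype.piFinset_univ]
    refine Finset.sum_congr rfl fun φ _ => ?_
    simp only [mon, e1, e2, e3, Finset.prod_mul_distrib]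
  have hexp : h * w = ∑ φ : Fin n → ExpTriple d,
      ((∏ i, C (φ i)) * (∑ x, h x * mon (e1 φ) x) * (∑ y, w y * mon (e2 φ) y)) • mon (e3 φ) := by
    ext z
    have t2 : (h * w) z = ∑ x, ∑ y, h x * w y * (if x = z ∧ y = z then (1 : F) else 0) := by
      rw [Finset.sum_eq_single z, Finset.sum_eq_single z]
      · simp
      · intro y _ hy; simp [hy]
      · simp
      · intro x _ hx; simp [hx]
      · simp
    rw [t2]
    simp only [hT, Finset.mul_sum, Finset.sum_apply, Pi.smul_apply, smul_eq_mul, Finset.sum_mul]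
    rw [Finset.sum_congr rfl fun x _ => Finset.sum_comm, Finset.sum_comm]
    refine Finset.sum_congr rfl fun φ _ => ?_
    rw [Finset.sum_comm]
    refine Finset.sum_congr rfl fun y _ => Finset.sum_congr rfl fun x _ => ?_
    ring
  rw [hexp]
  refine Submodule.sum_mem _ fun φ _ => ?_
  by_cases c1 : 3 * ∑ i, (e1 φ i).1 ≤ n * d
  · have := hh ⟨e1 φ, c1⟩
    simp only at this
    simp [this]
  by_cases c2 : 3 * ∑ i, (e2 φ i).1 ≤ n * d
  · have := hw ⟨e2 φ, c2⟩
    simp only at this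
    simp [this]
  have c3 : 3 * ∑ i, (e3 φ i).1 ≤ n * d := by
    have : ∑ i, (e1 φ i).1 + ∑ i, (e2 φ i).1 + ∑ i, (e3 φ i).1 ≤ n * d := by
      rw [← Finset.sum_add_distrib, ← Finset.sum_add_distrib]
      calc _ ≤ ∑ i : Fin n, d := Finset.sum_le_sum fun i _ => (φ i).2
        _ = n * d := by simp
    omega
  exact Submodule.smul_mem _ _ (Submodule.subset_span ⟨⟨e3 φ, c3⟩, rfl⟩)

lemma capset_exists_s (d : ℕ) (hd : d ≠ 0) :
    ∃ s : ℝ, 0 < s ∧ s < 1 ∧ ∑ i : Fin (d + 1), s ^ (3 * i.1) < (d + 1) * s ^ d := by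
  let g : ℝ → ℝ := fun s => ∑ i ∈ Finset.range (d + 1), s ^ (3 * i) - (d + 1) * s ^ d
  have hg : HasDerivAt g (∑ i ∈ Finset.range (d + 1), ((3 * i : ℕ) : ℝ) * 1 ^ (3 * i - 1)
      - (d + 1) * ((d : ℝ) * 1 ^ (d - 1))) 1 :=
    (HasDerivAt.fun_sum fun i _ => hasDerivAt_pow _ _).sub ((hasDerivAt_pow _ _).const_mul _)
  have hsum : (∑ i ∈ Finset.range (d + 1), (i : ℝ)) * 2 = (d + 1) * d := by
    have := Finset.sum_range_id_mul_two (d + 1)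
    rw [Nat.add_sub_cancel] at this
    have h' := congrArg (Nat.cast (R := ℝ)) this
    push_cast at h'
    exact h'
  have hval : (∑ i ∈ Finset.range (d + 1), ((3 * i : ℕ) : ℝ) * 1 ^ (3 * i - 1)
      - (d + 1) * ((d : ℝ) * 1 ^ (d - 1))) = (d + 1) * d / 2 := by
    simp only [one_pow, mul_one, Nat.cast_mul, Nat.cast_ofNat, ← Finset.mul_sum]
    linarith
  rw [hval] at hg
  have hpos : (0 : ℝ) < (d + 1) * d / 2 := by positivity
  have hg1 : g 1 = 0 := by simp [g]
  have hev : ∀ᶠ s in nhdsWithin (1 : ℝ) {1}ᶜ, 0 < slope g 1 s :=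
    (hasDerivAt_iff_tendsto_slope.1 hg).eventually (lt_mem_nhds hpos)
  have hev2 : ∀ᶠ s in nhdsWithin (1 : ℝ) (Set.Iio 1), 0 < slope g 1 s :=
    hev.filter_mono (nhdsWithin_mono _ fun x hx => ne_of_lt hx)
  have hev3 : ∀ᶠ s in nhdsWithin (1 : ℝ) (Set.Iio 1), 0 < s :=
    nhdsWithin_le_nhds (lt_mem_nhds one_pos)
  obtain ⟨s, ⟨hs1, hs2⟩, hs3⟩ := ((hev2.and hev3).and self_mem_nhdsWithin).exists
  have hs3' : s < 1 := hs3
  refine ⟨s, hs2, hs3', ?_⟩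
  rw [slope_def_field, hg1, sub_zero] at hs1
  have : g s < 0 := by
    by_contra hcon
    push Not at hcon
    exact absurd hs1 (not_lt.2 (div_nonpos_of_nonneg_of_nonpos hcon (by linarith)))
  rw [Fin.sum_univ_eq_sum_range (fun i => s ^ (3 * i))]
  simp only [g] at this
  linarith

lemma capset_low_bound (n d : ℕ) (s : ℝ) (h0 : 0 < s) (h1 : s < 1) :
    (Fintype.card (LowExp n d) : ℝ) ≤ ((∑ i : Fin (d + 1), s ^ (3 * i.1)) / s ^ d) ^ n := by
  rw [div_pow, le_div_iff₀ (by positivity), ← Fin.prod_const n (∑ i : Fin (d + 1), s ^ (3 * i.1)), Finset.prod_univ_sum,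
    Fintype.piFinset_univ, Fintype.card_subtype, ← nsmul_eq_mul, ← Finset.sum_const]
  refine le_trans (Finset.sum_le_sum fun e he => ?_)
    (Finset.sum_le_sum_of_subset_of_nonneg (Finset.filter_subset
      (fun e : Fin n → Fin (d + 1) => 3 * ∑ i, (e i).1 ≤ n * d) Finset.univ)
      fun e _ _ => Finset.prod_nonneg fun i _ => by positivity)
  rw [Finset.prod_pow_eq_pow_sum, ← Finset.mul_sum, ← pow_mul]
  apply pow_le_pow_of_le_one h0.le h1.le
  have := (Finset.mem_filter.1 he).2
  rwa [mul_comm d n]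

/-- **Theorem (Ellenberg–Gijswijt).** There exists `c_q < q` such that for all
sufficiently large `n`, every `A ⊆ F_q^n` that is a cap set for some admissible
tuple `(a, b, c)` (i.e. `a, b, c ≠ 0`, `a + b + c = 0`, and every `(x, y, z) ∈ A³`
with `ax + by + cz = 0` has `x = y = z`) satisfies `|A| ≤ c_q^n`. -/
theorem cap_set_bound {F : Type*} [Field F] [Fintype F] :
    ∃ cq : ℝ, cq < (Fintype.card F : ℝ) ∧ ∃ N : ℕ, ∀ n : ℕ, N ≤ n →
      ∀ A : Set (Fin n → F),
        (∃ a b c : F, a ≠ 0 ∧ b ≠ 0 ∧ c ≠ 0 ∧ a + b + c = 0 ∧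
          ∀ x ∈ A, ∀ y ∈ A, ∀ z ∈ A,
            a • x + b • y + c • z = 0 → x = y ∧ y = z) →
        (A.ncard : ℝ) ≤ cq ^ n := by
  obtain ⟨d, hd⟩ : ∃ d, Fintype.card F = d + 1 :=
    ⟨Fintype.card F - 1, by have := Fintype.card_pos (α := F); omega⟩
  have hd0 : d ≠ 0 := by
    have := Fintype.one_lt_card (α := F)
    omega
  obtain ⟨s, hs0, hs1, hs⟩ := capset_exists_s d hd0
  set c0 : ℝ := (∑ i : Fin (d + 1), s ^ (3 * i.1)) / s ^ d with hc0
  have hc0pos : 0 ≤ c0 := by positivity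
  have hc0lt : c0 < d + 1 := by
    rw [hc0, div_lt_iff₀ (by positivity)]
    exact hs
  obtain ⟨c1, h01, h1q⟩ := exists_between hc0lt
  have hc1pos : 0 < c1 := by linarith
  have hlim := tendsto_pow_atTop_nhds_zero_of_lt_one (div_nonneg hc0pos hc1pos.le)
    ((div_lt_one hc1pos).2 h01)
  obtain ⟨N, hN⟩ := Filter.eventually_atTop.1
    (hlim.eventually (gt_mem_nhds (show (0 : ℝ) < 1 / 2 by norm_num)))
  refine ⟨c1, by rw [hd]; push_cast; exact h1q, N, ?_⟩
  rintro n hn A ⟨a, b, c, -, -, -, habc, hA⟩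
  have k1 : (A.ncard : ℝ) ≤ 2 * (Fintype.card (LowExp n d) : ℝ) := by
    exact_mod_cast capset_card_le n d hd A a b c habc hA
  have k2 := capset_low_bound n d s hs0 hs1
  have k3 := hN n hn
  rw [div_pow, div_lt_iff₀ (by positivity)] at k3
  rw [← hc0] at k2
  linarith
end

section
/- There exists c_q < q such that for all sufficiently large n the following holds: for every set A ⊆ F_q^n with |A| > c_q^n and every admissible tuple (a,b,c), there exist pairwise distinct x, y, z ∈ A with ax + by + cz = 0. -/
lemma exists_large_support_s12 {F X : Type*} [Field F] [Fintype X] [DecidableEq X]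
    [DecidableEq F] (W : Submodule F (X → F)) :
    ∃ h ∈ W, Module.finrank F W ≤ (Finset.univ.filter (fun x => h x ≠ 0)).card := by
  classical
  let s : Set ℕ := {k | ∃ h ∈ W, (Finset.univ.filter (fun x => h x ≠ 0)).card = k}
  have hne : s.Nonempty := ⟨_, 0, W.zero_mem, rfl⟩
  have hb : BddAbove s := ⟨Fintype.card X, by rintro _ ⟨h, -, rfl⟩; exact Finset.card_le_univ _⟩
  obtain ⟨h, hW, hh⟩ := Nat.sSup_mem hne hb
  refine ⟨h, hW, ?_⟩
  by_contra hlt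
  push Not at hlt
  set S := Finset.univ.filter (fun x => h x ≠ 0) with hS
  let φ : W →ₗ[F] (S → F) := 
    { toFun := fun g x => g.1 x.1
      map_add' := fun _ _ => rfl
      map_smul' := fun _ _ => rfl }
  have hlt' : Module.finrank F (S → F) < Module.finrank F W := by simpa using hlt
  have hk : LinearMap.ker φ ≠ ⊥ := LinearMap.ker_ne_bot_of_finrank_lt hlt'
  obtain ⟨g, hg, hg0⟩ := Submodule.exists_mem_ne_zero_of_ne_bot hk
  have hgS : ∀ x ∈ S, g.1 x = 0 := fun x hx => congrFun (LinearMap.mem_ker.1 hg) ⟨x, hx⟩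
  have hgx : ∃ x, g.1 x ≠ 0 := by
    by_contra hc
    push Not at hc
    exact hg0 (Subtype.ext (funext hc))
  obtain ⟨x0, hx0⟩ := hgx
  have hx0S : x0 ∉ S := fun hx => hx0 (hgS x0 hx)
  have hsub : insert x0 S ⊆ Finset.univ.filter (fun x => (h + g.1) x ≠ 0) := by
    intro x hx
    rw [Finset.mem_insert] at hx
    rcases hx with rfl | hx
    · have : h x = 0 := by by_contra hc; exact hx0S (by simp [hS, hc])
      simp [this, hx0]
    · have h1 := hgS x hx
      have : h x ≠ 0 := by simpa [hS] using hx
      simp [h1, this]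
  have h1 := Finset.card_le_card hsub
  rw [Finset.card_insert_of_notMem hx0S] at h1
  have h2 : (Finset.univ.filter (fun x => (h + g.1) x ≠ 0)).card ≤ sSup s :=
    le_csSup hb ⟨_, W.add_mem hW g.2, rfl⟩
  omega

lemma slice_bound {F X ι : Type*} [Field F] [Fintype X] [DecidableEq X]
    (I : Finset ι) (u : ι → X → F) (v1 v2 v3 : ι → X → X → F)
    (H : ∀ x y z, (if x = y ∧ y = z then (1:F) else 0) =
      ∑ e ∈ I, u e x * v1 e y z + ∑ e ∈ I, u e y * v2 e x z + ∑ e ∈ I, u e z * v3 e x y) :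
    Fintype.card X ≤ 3 * I.card := by
  classical
  let φ : (X → F) →ₗ[F] (I → F) := Matrix.mulVecLin (Matrix.of fun e z => u e.1 z)
  obtain ⟨h, hW, hc⟩ := exists_large_support_s12 (LinearMap.ker φ)
  have hrn := LinearMap.finrank_range_add_finrank_ker φ
  have hr : Module.finrank F (LinearMap.range φ) ≤ I.card := by
    simpa using Submodule.finrank_le (LinearMap.range φ)
  simp only [Module.finrank_fintype_fun_eq_card] at hrn
  have h0 : ∀ e ∈ I, ∑ z, h z * u e z = 0 := by
    intro e he
    have := congrFun (LinearMap.mem_ker.1 hW) ⟨e, he⟩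
    simpa [φ, Matrix.mulVec, dotProduct, mul_comm] using this
  let U : Matrix X I F := Matrix.of fun x e => u e.1 x
  let V1 : Matrix I X F := Matrix.of fun e y => ∑ z, h z * v1 e.1 y z
  let V2 : Matrix X I F := Matrix.of fun x e => ∑ z, h z * v2 e.1 x z
  have hD : Matrix.diagonal h = U * V1 + V2 * U.transpose := by
    ext x y
    have e1 : Matrix.diagonal h x y = ∑ z, h z * (if x = y ∧ y = z then (1:F) else 0) := by
      by_cases hxy : x = y
      · subst hxy; simp
      · simp [hxy]
    rw [e1]
    simp only [H, mul_add, Finset.sum_add_distrib]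
    have e3 : ∑ z, h z * ∑ e ∈ I, u e z * v3 e x y = 0 := by
      simp only [Finset.mul_sum]
      rw [Finset.sum_comm]
      apply Finset.sum_eq_zero
      intro e he
      simp only [← mul_assoc]
      rw [← Finset.sum_mul, h0 e he, zero_mul]
    rw [e3, add_zero]
    simp only [Matrix.add_apply, Matrix.mul_apply, U, V1, V2, Matrix.of_apply,
      Matrix.transpose_apply, Finset.mul_sum, Finset.sum_mul]
    congr 1
    · rw [Finset.sum_comm, ← Finset.sum_coe_sort I]
      exact Finset.sum_congr rfl fun e _ => Finset.sum_congr rfl fun z _ => by ring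
    · rw [Finset.sum_comm, ← Finset.sum_coe_sort I]
      exact Finset.sum_congr rfl fun e _ => Finset.sum_congr rfl fun z _ => by ring
  have hrk : (Matrix.diagonal h).rank ≤ I.card + I.card := by
    rw [hD, ← Matrix.fromCols_mul_fromRows]
    refine (Matrix.rank_mul_le_left _ _).trans ?_
    simpa using Matrix.rank_le_card_width (Matrix.fromCols U V2)
  rw [Matrix.rank_diagonal, Fintype.card_subtype] at hrk
  omega

lemma exists_good_y (q : ℕ) (hq : 2 ≤ q) : ∃ y : ℝ, 0 < y ∧ y < 1 ∧
    ∑ j ∈ Finset.range q, y ^ (3 * j) < q * y ^ (q - 1) := by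
  let G : ℝ → ℝ := fun y => ∑ j ∈ Finset.range q, y ^ (3 * j) - q * y ^ (q - 1)
  have hG : HasDerivAt G (∑ j ∈ Finset.range q, ((3 * j : ℕ) : ℝ) * 1 ^ (3 * j - 1)
      - q * (((q - 1 : ℕ) : ℝ) * 1 ^ (q - 1 - 1))) 1 := by
    refine HasDerivAt.sub ?_ ((hasDerivAt_pow _ _).const_mul _)
    exact HasDerivAt.fun_sum fun j _ => hasDerivAt_pow _ _
  have hs : (∑ j ∈ Finset.range q, (j:ℝ)) * 2 = q * ((q - 1 : ℕ) : ℝ) := by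
    rw [← Nat.cast_sum, ← Nat.cast_mul, ← Finset.sum_range_id_mul_two q]
    push_cast; rfl
  have hpos : 0 < (∑ j ∈ Finset.range q, ((3 * j : ℕ) : ℝ) * 1 ^ (3 * j - 1)
      - q * (((q - 1 : ℕ) : ℝ) * 1 ^ (q - 1 - 1))) := by
    simp only [one_pow, mul_one, Nat.cast_mul, ← Finset.mul_sum]
    have h1 : (0:ℝ) < q * ((q - 1 : ℕ) : ℝ) := by
      have : 0 < q * (q - 1) := Nat.mul_pos (by omega) (by omega)
      exact_mod_cast this
    push_cast
    linarith
  have hev := (hasDerivAt_iff_tendsto_slope_left_right.1 hG).1.eventually (lt_mem_nhds hpos)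
  have hev2 : ∀ᶠ y in nhdsWithin (1:ℝ) (Set.Iio 1), 0 < y :=
    nhdsWithin_le_nhds (lt_mem_nhds one_pos)
  obtain ⟨y, ⟨h1, h2⟩, h3⟩ := ((hev.and hev2).and self_mem_nhdsWithin).exists
  refine ⟨y, h2, h3, ?_⟩
  have hG1 : G 1 = 0 := by simp [G]
  rw [slope_def_field, hG1, sub_zero] at h1
  have h3' : y < 1 := h3
  rcases div_pos_iff.1 h1 with h | h
  · linarith [h.2]
  · have h4 := h.1
    simp only [G] at h4
    linarith

/-- low degree exponents -/
def lowExp (q n : ℕ) : Finset (Fin n → ℕ) :=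
  (Fintype.piFinset fun _ : Fin n => Finset.range q).filter fun e => 3 * ∑ i, e i ≤ (q - 1) * n

lemma lowExp_bound (q n : ℕ) (y : ℝ) (h0 : 0 < y) (h1 : y < 1) :
    ((lowExp q n).card : ℝ) ≤ ((∑ j ∈ Finset.range q, y ^ (3 * j)) / y ^ (q - 1)) ^ n := by
  rw [div_pow, le_div_iff₀ (by positivity), ← nsmul_eq_mul, ← Finset.sum_const, ← pow_mul]
  have : (∑ j ∈ Finset.range q, y ^ (3 * j)) ^ n =
      ∑ e ∈ Fintype.piFinset (fun _ : Fin n => Finset.range q), ∏ i, y ^ (3 * e i) := by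
    rw [← Finset.prod_univ_sum (fun _ : Fin n => Finset.range q) (fun _ j => y ^ (3 * j))]
    simp
  rw [this]
  calc _ ≤ ∑ e ∈ lowExp q n, ∏ i, y ^ (3 * e i) := by
        refine Finset.sum_le_sum fun e he => ?_
        rw [Finset.prod_pow_eq_pow_sum, ← Finset.mul_sum]
        exact pow_le_pow_of_le_one h0.le h1.le (Finset.mem_filter.1 he).2
    _ ≤ _ := Finset.sum_le_sum_of_subset_of_nonneg (Finset.filter_subset _ _)
        fun _ _ _ => by positivity

lemma coord_expand {F : Type*} [Field F] [Fintype F] (a b c : F) :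
    ∃ P : MvPolynomial (Fin 3) F,
      (∀ d ∈ P.support, d 0 + d 1 + d 2 ≤ Fintype.card F - 1) ∧
      ∀ x y z : F, 1 - (a * x + b * y + c * z) ^ (Fintype.card F - 1) =
        ∑ d ∈ P.support, P.coeff d * (x ^ d 0 * y ^ d 1 * z ^ d 2) := by
  let L : MvPolynomial (Fin 3) F := MvPolynomial.C a * MvPolynomial.X 0 +
    MvPolynomial.C b * MvPolynomial.X 1 + MvPolynomial.C c * MvPolynomial.X 2
  have hX : ∀ (r : F) (i : Fin 3),
      (MvPolynomial.C r * MvPolynomial.X i : MvPolynomial (Fin 3) F).totalDegree ≤ 1 := by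
    intro r i
    refine (MvPolynomial.totalDegree_mul _ _).trans ?_
    simp
  have hL : L.totalDegree ≤ 1 := by
    refine (MvPolynomial.totalDegree_add _ _).trans (max_le ?_ (hX _ _))
    exact (MvPolynomial.totalDegree_add _ _).trans (max_le (hX _ _) (hX _ _))
  refine ⟨1 - L ^ (Fintype.card F - 1), ?_, ?_⟩
  · intro d hd
    have h1 := MvPolynomial.le_totalDegree hd
    have h2 : (1 - L ^ (Fintype.card F - 1)).totalDegree ≤ Fintype.card F - 1 := by
      refine (MvPolynomial.totalDegree_sub _ _).trans (max_le (by simp) ?_)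
      refine (MvPolynomial.totalDegree_pow _ _).trans ?_
      nlinarith
    rw [Finsupp.sum_fintype _ _ (by simp), Fin.sum_univ_three] at h1
    omega
  · intro x y z
    have := MvPolynomial.eval_eq' ![x, y, z] (1 - L ^ (Fintype.card F - 1))
    simp only [Fin.prod_univ_three] at this
    simpa [L] using this

lemma tensor_expand {F : Type*} [Field F] [Fintype F] (n : ℕ) (a b c : F) :
    ∃ v1 v2 v3 : (Fin n → ℕ) → (Fin n → F) → (Fin n → F) → F, ∀ x y z : Fin n → F,
      ∏ i, (1 - (a * x i + b * y i + c * z i) ^ (Fintype.card F - 1)) =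
      ∑ e ∈ lowExp (Fintype.card F) n, (∏ i, x i ^ e i) * v1 e y z +
      ∑ e ∈ lowExp (Fintype.card F) n, (∏ i, y i ^ e i) * v2 e x z +
      ∑ e ∈ lowExp (Fintype.card F) n, (∏ i, z i ^ e i) * v3 e x y := by
  classical
  obtain ⟨P, hP, hexp⟩ := coord_expand a b c
  have hq : 0 < Fintype.card F := Fintype.card_pos
  set q := Fintype.card F
  let T := Fintype.piFinset fun _ : Fin n => P.support
  let ex : Fin 3 → (Fin n → (Fin 3 →₀ ℕ)) → (Fin n → ℕ) := fun s p i => p i s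
  let T1 := T.filter fun p => ex 0 p ∈ lowExp q n
  let T' := T.filter fun p => ex 0 p ∉ lowExp q n
  let T2 := T'.filter fun p => ex 1 p ∈ lowExp q n
  let T3 := T'.filter fun p => ex 1 p ∉ lowExp q n
  let K : (Fin n → (Fin 3 →₀ ℕ)) → F := fun p => ∏ i, P.coeff (p i)
  let m : (Fin n → ℕ) → (Fin n → F) → F := fun e x => ∏ i, x i ^ e i
  have h1 : ∀ p ∈ T1, ex 0 p ∈ lowExp q n := fun p hp => (Finset.mem_filter.1 hp).2
  have h2 : ∀ p ∈ T2, ex 1 p ∈ lowExp q n := fun p hp => (Finset.mem_filter.1 hp).2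
  have h3 : ∀ p ∈ T3, ex 2 p ∈ lowExp q n := by
    intro p hp
    simp only [T3, T', T, Finset.mem_filter, Fintype.mem_piFinset] at hp
    obtain ⟨⟨hp, hp0⟩, hp1⟩ := hp
    have hd := fun i => hP _ (hp i)
    have hmem : ∀ s, ex s p ∈ lowExp q n ↔ 3 * ∑ i, ex s p i ≤ (q - 1) * n := by
      intro s
      simp only [lowExp, Finset.mem_filter, Fintype.mem_piFinset, Finset.mem_range,
        and_iff_right_iff_imp]
      intro _ i
      have := hd i
      simp only [ex]
      fin_cases s <;> simp <;> omega
    rw [hmem] at hp0 hp1 ⊢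
    have hsum : ∑ i, ex 0 p i + ∑ i, ex 1 p i + ∑ i, ex 2 p i ≤ (q - 1) * n := by
      rw [← Finset.sum_add_distrib, ← Finset.sum_add_distrib]
      calc _ ≤ ∑ _i : Fin n, (q - 1) := Finset.sum_le_sum fun i _ => hd i
        _ = _ := by simp [mul_comm]
    omega
  refine ⟨fun e y z => ∑ p ∈ T1 with ex 0 p = e, K p * (m (ex 1 p) y * m (ex 2 p) z),
    fun e x z => ∑ p ∈ T2 with ex 1 p = e, K p * (m (ex 0 p) x * m (ex 2 p) z),
    fun e x y => ∑ p ∈ T3 with ex 2 p = e, K p * (m (ex 0 p) x * m (ex 1 p) y), ?_⟩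
  intro x y z
  have key : ∏ i, (1 - (a * x i + b * y i + c * z i) ^ (q - 1)) =
      ∑ p ∈ T, K p * (m (ex 0 p) x * m (ex 1 p) y * m (ex 2 p) z) := by
    simp only [hexp]
    rw [Finset.prod_univ_sum]
    refine Finset.sum_congr rfl fun p _ => ?_
    simp only [K, m, ex, Finset.prod_mul_distrib]
  rw [key, ← Finset.sum_filter_add_sum_filter_not T (fun p => ex 0 p ∈ lowExp q n),
    ← Finset.sum_filter_add_sum_filter_not T' (fun p => ex 1 p ∈ lowExp q n), ← add_assoc]
  congr 1
  · congr 1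
    · rw [← Finset.sum_fiberwise_of_maps_to h1]
      refine Finset.sum_congr rfl fun e _ => ?_
      rw [Finset.mul_sum]
      refine Finset.sum_congr rfl fun p hp => ?_
      rw [← (Finset.mem_filter.1 hp).2]
      simp only [m]; ring
    · rw [← Finset.sum_fiberwise_of_maps_to h2]
      refine Finset.sum_congr rfl fun e _ => ?_
      rw [Finset.mul_sum]
      refine Finset.sum_congr rfl fun p hp => ?_
      rw [← (Finset.mem_filter.1 hp).2]
      simp only [m]; ring
  · rw [← Finset.sum_fiberwise_of_maps_to h3]
    refine Finset.sum_congr rfl fun e _ => ?_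
    rw [Finset.mul_sum]
    refine Finset.sum_congr rfl fun p hp => ?_
    rw [← (Finset.mem_filter.1 hp).2]
    simp only [m]; ring

lemma tensor_eq {F : Type*} [Field F] [Fintype F] [DecidableEq F] (n : ℕ) (a b c : F)
    (x y z : Fin n → F) :
    ∏ i, (1 - (a * x i + b * y i + c * z i) ^ (Fintype.card F - 1)) =
      if a • x + b • y + c • z = 0 then 1 else 0 := by
  have hq : Fintype.card F - 1 ≠ 0 := by
    have := Fintype.one_lt_card (α := F); omega
  split_ifs with h
  · refine Finset.prod_eq_one fun i _ => ?_
    have := congrFun h i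
    simp only [Pi.add_apply, Pi.smul_apply, smul_eq_mul, Pi.zero_apply] at this
    rw [this, zero_pow hq, sub_zero]
  · obtain ⟨i, hi⟩ := Function.ne_iff.1 h
    refine Finset.prod_eq_zero (Finset.mem_univ i) ?_
    rw [FiniteField.pow_card_sub_one_eq_one _ (by simpa using hi), sub_self]

/-- **Theorem (large sets contain nondegenerate solutions).**
There exists `c_q < q` such that for all sufficiently large `n`: for every
`A ⊆ F_q^n` with `|A| > c_q^n` and every admissible tuple `(a, b, c)` (i.e.
`a, b, c ≠ 0` and `a + b + c = 0`), there exist pairwise distinct `x, y, z ∈ A`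
with `ax + by + cz = 0`. -/
theorem large_set_has_distinct_solution {F : Type*} [Field F] [Fintype F] :
    ∃ cq : ℝ, cq < (Fintype.card F : ℝ) ∧ ∃ N : ℕ, ∀ n : ℕ, N ≤ n →
      ∀ A : Set (Fin n → F), cq ^ n < (A.ncard : ℝ) →
      ∀ a b c : F, a ≠ 0 → b ≠ 0 → c ≠ 0 → a + b + c = 0 →
        ∃ x ∈ A, ∃ y ∈ A, ∃ z ∈ A,
          x ≠ y ∧ y ≠ z ∧ x ≠ z ∧ a • x + b • y + c • z = 0 := by
  classical
  obtain ⟨t, ht0, ht1, ht⟩ := exists_good_y (Fintype.card F) Fintype.one_lt_card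
  set g : ℝ := (∑ j ∈ Finset.range (Fintype.card F), t ^ (3 * j)) / t ^ (Fintype.card F - 1)
    with hg
  have hgq : g < Fintype.card F := by rwa [hg, div_lt_iff₀ (by positivity)]
  have hg0 : 0 < g := by
    have : 0 < ∑ j ∈ Finset.range (Fintype.card F), t ^ (3 * j) :=
      Finset.sum_pos (fun _ _ => by positivity) (by simp)
    positivity
  obtain ⟨cq, h1, h2⟩ := exists_between hgq
  refine ⟨cq, h2, ?_⟩
  have hr : 1 < cq / g := by rwa [one_lt_div hg0]
  obtain ⟨N, hN⟩ := pow_unbounded_of_one_lt 3 hr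
  refine ⟨N, fun n hn A hA a b c ha hb hc habc => ?_⟩
  by_contra hno
  push Not at hno
  have hdiag : ∀ x y z : A, (a • x.1 + b • y.1 + c • z.1 = 0) ↔ (x = y ∧ y = z) := by
    intro x y z
    constructor
    · intro h
      have hcase : x.1 = y.1 ∨ y.1 = z.1 ∨ x.1 = z.1 := by
        by_contra hcon
        push Not at hcon
        exact hno x.1 x.2 y.1 y.2 z.1 z.2 hcon.1 hcon.2.1 hcon.2.2 h
      have hcoord : ∀ i, a * x.1 i + b * y.1 i + c * z.1 i = 0 := fun i => by
        simpa using congrFun h i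
      rcases hcase with e | e | e
      · refine ⟨Subtype.ext e, Subtype.ext (funext fun i => ?_)⟩
        have := hcoord i
        rw [e] at this
        apply mul_left_cancel₀ hc
        linear_combination (y.1 i) * habc - this
      · refine ⟨Subtype.ext (funext fun i => ?_), Subtype.ext e⟩
        have := hcoord i
        rw [← e] at this
        apply mul_left_cancel₀ ha
        linear_combination this - (y.1 i) * habc
      · have hxy : x = y := Subtype.ext (funext fun i => by
          have := hcoord i
          rw [← e] at this
          apply mul_left_cancel₀ hb
          linear_combination (x.1 i) * habc - this)
        exact ⟨hxy, hxy ▸ Subtype.ext e⟩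
    · rintro ⟨rfl, rfl⟩
      rw [← add_smul, ← add_smul, habc, zero_smul]
  obtain ⟨v1, v2, v3, hv⟩ := tensor_expand n a b c
  have hcard := slice_bound (X := A) (lowExp (Fintype.card F) n)
    (fun e x => ∏ i, x.1 i ^ e i) (fun e y z => v1 e y.1 z.1) (fun e y z => v2 e y.1 z.1)
    (fun e y z => v3 e y.1 z.1) (fun x y z => by
      rw [← hv, tensor_eq]
      simp only [hdiag])
  have hb := lowExp_bound (Fintype.card F) n t ht0 ht1
  rw [← hg] at hb
  rw [← Nat.card_coe_set_eq, Nat.card_eq_fintype_card] at hA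
  have hcard' : (Fintype.card A : ℝ) ≤ 3 * (lowExp (Fintype.card F) n).card := by
    exact_mod_cast hcard
  have h3 : 3 < (cq / g) ^ n := hN.trans_le (pow_le_pow_right₀ hr.le hn)
  rw [div_pow, lt_div_iff₀ (by positivity)] at h3
  linarith
end
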